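/- Let A_Γ be a 2-dimensional Artin group. Let e1 and e2 be edges of Γ with labels ≥ 3 and let g1, g2 ∈ A_Γ. If the cosets g1·⟨Δ_{e1}⟩ and g2·⟨Δ_{e2}⟩ are at finite Hausdorff distance with respect to the word metric, then g1·A_{e1} = g2·A_{e2}, where A_{e_i} is the subgroup generated by the two endpoints of e_i (parallel diamond lines lie in the same block). Moreover, for any vertex a of Γ and any g ∈ A_Γ, the coset g·⟨a⟩ is not at finite Hausdorff distance from g1·⟨Δ_{e1}⟩ (parallel singular lines are of the same type). -/

import Mathlib

/-- The alternating product `x y x y ⋯` with `n` factors. -/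
def altProd {G : Type*} [Monoid G] : ℕ → G → G → G
  | 0, _, _ => 1
  | n + 1, x, y => x * altProd n y x

/-- A simple graph with each edge labeled by an integer `≥ 2`. -/
structure LabeledGraph (V : Type*) where
  graph : SimpleGraph V
  label : V → V → ℕ
  label_symm : ∀ a b, label a b = label b a
  two_le_label : ∀ ⦃a b⦄, graph.Adj a b → 2 ≤ label a b

namespace LabeledGraph

variable {V : Type*} (Γ : LabeledGraph V)

/-- The Artin relations `prod(a,b;m) = prod(b,a;m)` associated to a labeled graph,
as elements of the free group on the vertices. -/
def artinRels : Set (FreeGroup V) :=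
  { r | ∃ a b, Γ.graph.Adj a b ∧
      r = altProd (Γ.label a b) (FreeGroup.of a) (FreeGroup.of b) *
          (altProd (Γ.label a b) (FreeGroup.of b) (FreeGroup.of a))⁻¹ }

end LabeledGraph

/-- The Artin group with defining labeled graph `Γ`. -/
abbrev ArtinGroup {V : Type*} (Γ : LabeledGraph V) :=
  PresentedGroup Γ.artinRels

/-- The standard generator of the Artin group corresponding to a vertex. -/
def artinGen {V : Type*} (Γ : LabeledGraph V) (v : V) : ArtinGroup Γ :=
  PresentedGroup.of v

/-- Word length of a group element with respect to a set `S` of generators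
(words may use generators and their inverses). -/
noncomputable def wordLength {G : Type*} [Group G] (S : Set G) (g : G) : ℕ :=
  sInf { n | ∃ l : List G, l.length = n ∧ (∀ x ∈ l, x ∈ S ∨ x⁻¹ ∈ S) ∧ l.prod = g }

/-- Word metric with respect to a generating set `S`. -/
noncomputable def wordDist {G : Type*} [Group G] (S : Set G) (g h : G) : ℝ :=
  (wordLength S (g⁻¹ * h) : ℝ)

/-- The word metric on an Artin group with respect to the standard generators. -/
noncomputable def artinDist {V : Type*} (Γ : LabeledGraph V) :
    ArtinGroup Γ → ArtinGroup Γ → ℝ :=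
  wordDist (Set.range (artinGen Γ))

/-- `(L,A)`-quasi-isometric embedding between spaces with distance functions. -/
def IsQIEmbedding {X Y : Type*} (L A : ℝ) (dX : X → X → ℝ) (dY : Y → Y → ℝ)
    (q : X → Y) : Prop :=
  ∀ x x', dX x x' / L - A ≤ dY (q x) (q x') ∧ dY (q x) (q x') ≤ L * dX x x' + A

/-- `(L,A)`-quasi-isometry: an `(L,A)`-quasi-isometric embedding with `A`-dense image. -/
def IsQuasiIsometry {X Y : Type*} (L A : ℝ) (dX : X → X → ℝ) (dY : Y → Y → ℝ)
    (q : X → Y) : Prop :=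
  IsQIEmbedding L A dX dY q ∧ ∀ y : Y, ∃ x : X, dY (q x) y ≤ A

/-- CLTTF: connected with at least three vertices, large type, triangle free. -/
def LabeledGraph.CLTTF {V : Type*} (Γ : LabeledGraph V) : Prop :=
  Γ.graph.Connected ∧ 3 ≤ Nat.card V ∧
    (∀ ⦃a b⦄, Γ.graph.Adj a b → 3 ≤ Γ.label a b) ∧ Γ.graph.CliqueFree 3

/-- A decomposition of `Γ` as a union of two full subgraphs (given by vertex sets
`S₁`, `S₂`, each different from `T`) intersecting along `T`. -/
def LabeledGraph.IsSepDecomp {V : Type*} (Γ : LabeledGraph V) (S₁ S₂ T : Set V) : Prop :=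
  S₁ ∪ S₂ = Set.univ ∧ S₁ ∩ S₂ = T ∧ S₁ ≠ T ∧ S₂ ≠ T ∧
    ∀ ⦃a b⦄, Γ.graph.Adj a b → (a ∈ S₁ ∧ b ∈ S₁) ∨ (a ∈ S₂ ∧ b ∈ S₂)

/-- `Γ` has a separating vertex or a separating edge. -/
def LabeledGraph.HasSeparatingVertexOrEdge {V : Type*} (Γ : LabeledGraph V) : Prop :=
  (∃ v : V, ∃ S₁ S₂ : Set V, Γ.IsSepDecomp S₁ S₂ {v}) ∨
    ∃ a b : V, Γ.graph.Adj a b ∧ ∃ S₁ S₂ : Set V, Γ.IsSepDecomp S₁ S₂ {a, b}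

/-- An isomorphism of labeled graphs: a graph isomorphism preserving edge labels. -/
structure LabeledGraphIso {V V' : Type*} (Γ : LabeledGraph V) (Γ' : LabeledGraph V') where
  toEquiv : V ≃ V'
  adj_iff : ∀ a b, Γ'.graph.Adj (toEquiv a) (toEquiv b) ↔ Γ.graph.Adj a b
  label_eq : ∀ ⦃a b⦄, Γ.graph.Adj a b → Γ'.label (toEquiv a) (toEquiv b) = Γ.label a b

/-- `f` is an isometry for the distance function `d`. -/
def IsIsometryOf {X : Type*} (d : X → X → ℝ) (f : X → X) : Prop :=
  ∀ x y, d (f x) (f y) = d x y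

/-- The left coset `g•H` as a set. -/
def leftCosetSet {G : Type*} [Group G] (g : G) (H : Subgroup G) : Set G :=
  (fun x => g * x) '' (H : Set G)

/-- The standard subgroup generated by the two endpoints of an edge. -/
def edgeSubgroup {V : Type*} (Γ : LabeledGraph V) (a b : V) : Subgroup (ArtinGroup Γ) :=
  Subgroup.closure {artinGen Γ a, artinGen Γ b}

/-- The standard subgroup generated by a set of vertices. -/
def standardSubgroup {V : Type*} (Γ : LabeledGraph V) (S : Set V) :
    Subgroup (ArtinGroup Γ) :=
  Subgroup.closure (artinGen Γ '' S)

/-- The element `Δ_e = prod(a,b;m)` associated to an edge `e = {a,b}` of label `m`. -/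
def artinDelta {V : Type*} (Γ : LabeledGraph V) (a b : V) : ArtinGroup Γ :=
  altProd (Γ.label a b) (artinGen Γ a) (artinGen Γ b)

/-- A leaf of a graph: a vertex with a unique neighbour. -/
def LabeledGraph.IsLeaf {V : Type*} (Γ : LabeledGraph V) (a : V) : Prop :=
  ∃! b, Γ.graph.Adj a b

/-- A stable vertex: not a leaf, or a leaf whose unique incident edge has odd label
and whose other endpoint is not a leaf. -/
def LabeledGraph.StableVertex {V : Type*} (Γ : LabeledGraph V) (a : V) : Prop :=
  ¬ Γ.IsLeaf a ∨
    (Γ.IsLeaf a ∧ ∃ b, Γ.graph.Adj a b ∧ Odd (Γ.label a b) ∧ ¬ Γ.IsLeaf b)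

/-- Stable cosets: left cosets of cyclic subgroups `⟨Δ_e⟩` for an edge `e`, or `⟨a⟩`
for a stable vertex `a`. -/
def StableCoset {V : Type*} (Γ : LabeledGraph V) (C : Set (ArtinGroup Γ)) : Prop :=
  (∃ (g : ArtinGroup Γ) (a b : V), Γ.graph.Adj a b ∧
      C = leftCosetSet g (Subgroup.zpowers (artinDelta Γ a b))) ∨
    ∃ (g : ArtinGroup Γ) (a : V), Γ.StableVertex a ∧
      C = leftCosetSet g (Subgroup.zpowers (artinGen Γ a))

/-- The Hausdorff distance between `A` and `B` (w.r.t. the distance function `d`)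
is less than `D`. -/
def HausdorffClose {X : Type*} (d : X → X → ℝ) (D : ℝ) (A B : Set X) : Prop :=
  (∀ a ∈ A, ∃ b ∈ B, d a b < D) ∧ ∀ b ∈ B, ∃ a ∈ A, d a b < D

/-- Two subsets are parallel if they are at finite Hausdorff distance. -/
def CoarseParallel {X : Type*} (d : X → X → ℝ) (A B : Set X) : Prop :=
  ∃ D : ℝ, HausdorffClose d D A B

/-- A `2`-dimensional Artin group: every triangle with labels `p, q, r` satisfies
`1/p + 1/q + 1/r ≤ 1`. -/
def LabeledGraph.TwoDimensional {V : Type*} (Γ : LabeledGraph V) : Prop :=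
  ∀ a b c : V, Γ.graph.Adj a b → Γ.graph.Adj b c → Γ.graph.Adj a c →
    (1 / (Γ.label a b : ℚ)) + 1 / (Γ.label b c : ℚ) + 1 / (Γ.label a c : ℚ) ≤ 1


set_option linter.unusedSectionVars false

namespace Hypermap

open Equiv
open Equiv.Perm hiding Disjoint

section Cycles

variable {S : Type*}

/-- `O` is stable under `p`. -/
def Inv (O : Finset S) (p : Perm S) : Prop := ∀ s ∈ O, p s ∈ O

theorem Inv.mul {O : Finset S} {p q : Perm S} (h : Inv O p) (h' : Inv O q) : Inv O (p * q) :=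
  fun s hs => h _ (h' s hs)

theorem Inv.mul_swap [DecidableEq S] {O : Finset S} {q : Perm S} (hq : Inv O q) {x y : S}
    (hx : x ∈ O) (hy : y ∈ O) : Inv O (q * swap x y) := by
  intro s hs
  rw [Perm.mul_apply]
  apply hq
  by_cases hsx : s = x
  · subst hsx; rwa [swap_apply_left]
  by_cases hsy : s = y
  · subst hsy; rwa [swap_apply_right]
  rwa [swap_apply_of_ne_of_ne hsx hsy]

theorem mul_swap_mul_swap [DecidableEq S] (q : Perm S) (x y : S) : q * swap x y * swap x y = q := by
  rw [mul_assoc, swap_mul_self, mul_one]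

variable [Fintype S]

theorem mem_of_sameCycle {p : Perm S} {A : Set S} (hA : ∀ s ∈ A, p s ∈ A) {s t : S}
    (h : p.SameCycle s t) (hs : s ∈ A) : t ∈ A := by
  obtain ⟨n, -, rfl⟩ := h.exists_pow_eq'
  clear h
  induction n with
  | zero => simpa using hs
  | succ n ih => rw [pow_succ', Perm.mul_apply]; exact hA _ ih

theorem sameCycle_inv_apply (p : Perm S) (s : S) : p.SameCycle s (p⁻¹ s) :=
  by
  simpa using (sameCycle_apply_right (f := p) (x := p⁻¹ s) (y := p⁻¹ s)).2 (.refl _ _) |>.symm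

theorem Inv.mem {O : Finset S} {p : Perm S} (h : Inv O p) {s t : S} (hst : p.SameCycle s t)
    (hs : s ∈ O) : t ∈ O :=
  mem_of_sameCycle (A := (O : Set S)) h hst hs

theorem Inv.apply_mem_iff {O : Finset S} {p : Perm S} (h : Inv O p) {s : S} :
    p s ∈ O ↔ s ∈ O :=
  ⟨h.mem (sameCycle_apply_left.2 (SameCycle.refl _ _)), h s⟩

theorem Inv.inv {O : Finset S} {p : Perm S} (h : Inv O p) : Inv O p⁻¹ := fun s hs =>
  h.apply_mem_iff.1 (by simpa using hs)

theorem sameCycle_of_eqOn {p q : Perm S} {A : Set S} (hA : ∀ s ∈ A, p s ∈ A)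
    (hpq : ∀ s ∈ A, p s = q s) {s t : S} (hs : s ∈ A) (h : p.SameCycle s t) :
    q.SameCycle s t := by
  have : t ∈ {u | u ∈ A ∧ q.SameCycle s u} := by
    refine mem_of_sameCycle (p := p) (A := {u | u ∈ A ∧ q.SameCycle s u})
      (fun u hu => ⟨hA u hu.1, ?_⟩) h ⟨hs, SameCycle.refl _ _⟩
    rw [hpq u hu.1]
    exact sameCycle_apply_right.2 hu.2
  exact this.2

theorem sameCycle_congr {p q : Perm S} {O : Finset S} (hO : Inv O p)
    (hpq : ∀ s ∈ O, p s = q s) {s t : S} (hs : s ∈ O) : p.SameCycle s t ↔ q.SameCycle s t :=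
  ⟨sameCycle_of_eqOn (A := (O : Set S)) hO hpq hs,
    sameCycle_of_eqOn (A := (O : Set S)) (fun u hu => hpq u hu ▸ hO u hu)
      (fun u hu => (hpq u hu).symm) hs⟩

open Classical in
/-- The cycle of `p` through `s`, as a finset. -/
noncomputable def cycleFinset (p : Perm S) (s : S) : Finset S :=
  Finset.univ.filter (p.SameCycle s)

theorem mem_cycleFinset {p : Perm S} {s t : S} : t ∈ cycleFinset p s ↔ p.SameCycle s t := by
  simp [cycleFinset]

theorem cycleFinset_eq_iff {p : Perm S} {s t : S} :
    cycleFinset p s = cycleFinset p t ↔ p.SameCycle s t := by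
  refine ⟨fun h => ?_, fun h => ?_⟩
  · rw [← mem_cycleFinset, h, mem_cycleFinset]
  · ext u
    simp only [mem_cycleFinset]
    exact ⟨h.symm.trans, h.trans⟩

open Classical in
/-- The number of cycles of `p` meeting `O`. -/
noncomputable def cyc (O : Finset S) (p : Perm S) : ℕ := (O.image (cycleFinset p)).card

theorem cyc_def [DecidableEq S] (O : Finset S) (p : Perm S) :
    cyc O p = (O.image (cycleFinset p)).card := by
  unfold cyc; congr!

theorem cyc_congr {p q : Perm S} {O : Finset S} (hO : Inv O p) (hpq : ∀ s ∈ O, p s = q s) :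
    cyc O p = cyc O q := by
  classical
  unfold cyc
  congr 1
  refine Finset.image_congr fun s hs => ?_
  ext t
  simp only [mem_cycleFinset]
  exact sameCycle_congr hO hpq hs

theorem cyc_inv (O : Finset S) (p : Perm S) : cyc O p⁻¹ = cyc O p := by
  classical
  unfold cyc
  congr 1
  refine Finset.image_congr fun s _ => ?_
  ext t
  simp only [mem_cycleFinset, sameCycle_inv]

theorem cyc_union [DecidableEq S] {O₁ O₂ : Finset S} {p : Perm S} (h₁ : Inv O₁ p)
    (hd : Disjoint O₁ O₂) : cyc (O₁ ∪ O₂) p = cyc O₁ p + cyc O₂ p := by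
  rw [cyc_def, cyc_def, cyc_def, ← Finset.card_union_of_disjoint, ← Finset.image_union]
  rw [Finset.disjoint_left]
  intro c hc hc'
  obtain ⟨s, hs, rfl⟩ := Finset.mem_image.1 hc
  obtain ⟨t, ht, h⟩ := Finset.mem_image.1 hc'
  exact Finset.disjoint_left.1 hd (h₁.mem (cycleFinset_eq_iff.1 h.symm) hs) ht

variable [DecidableEq S]

theorem sameCycle_mul_swap {q : Perm S} {x y : S} (h : ¬ q.SameCycle x y) :
    (q * swap x y).SameCycle x y := by
  by_contra hn
  have key : y ∈ {u | (q * swap x y).SameCycle x u ∧ q.SameCycle y u} := by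
    refine mem_of_sameCycle (A := {u | (q * swap x y).SameCycle x u ∧ q.SameCycle y u})
      (p := q) (s := q y) (fun u hu => ⟨?_, sameCycle_apply_right.2 hu.2⟩)
      (sameCycle_apply_left.2 (SameCycle.refl _ _)) ⟨?_, sameCycle_apply_right.2 (.refl _ _)⟩
    · have hux : u ≠ x := by rintro rfl; exact h hu.2.symm
      have huy : u ≠ y := by rintro rfl; exact hn hu.1
      have := sameCycle_apply_right.2 hu.1
      rwa [Perm.mul_apply, swap_apply_of_ne_of_ne hux huy] at this
    · have := sameCycle_apply_right.2 (SameCycle.refl (q * swap x y) x)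
      rwa [Perm.mul_apply, swap_apply_left] at this
  exact hn key.1

theorem sameCycle_mul_swap_left_iff {q : Perm S} {x y : S} (h : ¬ q.SameCycle x y) {u : S} :
    (q * swap x y).SameCycle x u ↔ q.SameCycle x u ∨ q.SameCycle y u := by
  have hxy := sameCycle_mul_swap h
  constructor
  · intro hu
    refine mem_of_sameCycle (A := {u | q.SameCycle x u ∨ q.SameCycle y u}) (fun v hv => ?_) hu
      (Or.inl (.refl _ _))
    rw [Perm.mul_apply]
    by_cases hvx : v = x
    · subst hvx; rw [swap_apply_left]; exact Or.inr (sameCycle_apply_right.2 (.refl _ _))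
    by_cases hvy : v = y
    · subst hvy; rw [swap_apply_right]; exact Or.inl (sameCycle_apply_right.2 (.refl _ _))
    rw [swap_apply_of_ne_of_ne hvx hvy]
    exact hv.imp sameCycle_apply_right.2 sameCycle_apply_right.2
  · have hcl : ∀ v ∈ {v | (q * swap x y).SameCycle x v},
        q v ∈ {v | (q * swap x y).SameCycle x v} := by
      intro v hv
      by_cases hvx : v = x
      · subst hvx
        have := sameCycle_apply_right.2 hxy
        rwa [Perm.mul_apply, swap_apply_right] at this
      by_cases hvy : v = y
      · subst hvy
        have := sameCycle_apply_right.2 (SameCycle.refl (q * swap x v) x)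
        rwa [Perm.mul_apply, swap_apply_left] at this
      have := sameCycle_apply_right.2 hv
      rwa [Perm.mul_apply, swap_apply_of_ne_of_ne hvx hvy] at this
    rintro (hu | hu)
    · exact mem_of_sameCycle hcl hu (SameCycle.refl _ _)
    · exact mem_of_sameCycle hcl hu hxy

theorem sameCycle_mul_swap_of_not {q : Perm S} {x y u v : S} (hx : ¬ q.SameCycle u x)
    (hy : ¬ q.SameCycle u y) : (q * swap x y).SameCycle u v ↔ q.SameCycle u v := by
  refine (sameCycle_congr (p := q) (O := cycleFinset q u) (fun v hv => ?_) (fun v hv => ?_)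
    (mem_cycleFinset.2 (.refl _ _))).symm
  · exact mem_cycleFinset.2 (sameCycle_apply_right.2 (mem_cycleFinset.1 hv))
  · rw [mem_cycleFinset] at hv
    rw [Perm.mul_apply, swap_apply_of_ne_of_ne] <;> rintro rfl <;> contradiction

theorem not_sameCycle_mul_swap {q : Perm S} {x y : S} (hne : x ≠ y) (h : q.SameCycle x y) :
    ¬ (q * swap x y).SameCycle x y := by
  classical
  obtain ⟨n₀, -, hn₀⟩ := h.exists_pow_eq'
  have hex : ∃ n, (q ^ n) x = y := ⟨n₀, hn₀⟩
  set n := Nat.find hex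
  have hn : (q ^ n) x = y := Nat.find_spec hex
  have hmin : ∀ i < n, (q ^ i) x ≠ y := fun i hi => Nat.find_min hex hi
  have hn0 : n ≠ 0 := by
    intro h0; rw [h0] at hn; exact hne (by simpa using hn)
  have hx : ∀ i, 1 ≤ i → i ≤ n → (q ^ i) x ≠ x := by
    intro i h1 hi hix
    have : (q ^ (n - i)) x = y := by
      rw [← hn]
      nth_rw 1 [← hix]
      rw [← Perm.mul_apply, ← pow_add, Nat.sub_add_cancel hi]
    exact hmin _ (by omega) this
  intro hs
  have : x ∈ {u | ∃ i, 1 ≤ i ∧ i ≤ n ∧ (q ^ i) x = u} := by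
    refine mem_of_sameCycle (p := q * swap x y) ?_ hs.symm ⟨n, by omega, le_rfl, hn⟩
    rintro _ ⟨i, h1, hi, rfl⟩
    rcases hi.lt_or_eq with hi | hi
    · refine ⟨i + 1, by omega, by omega, ?_⟩
      rw [Perm.mul_apply, swap_apply_of_ne_of_ne (hx i h1 hi.le) (hmin i hi), pow_succ',
        Perm.mul_apply]
    · refine ⟨1, le_rfl, by omega, ?_⟩
      rw [hi, hn, Perm.mul_apply, swap_apply_right, pow_one]
  obtain ⟨i, h1, hi, hix⟩ := this
  exact hx i h1 hi hix

theorem cyc_mul_swap_of_not {O : Finset S} {q : Perm S} {x y : S} (hx : x ∈ O)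
    (hy : y ∈ O) (h : ¬ q.SameCycle x y) : cyc O (q * swap x y) + 1 = cyc O q := by
  have him : O.image (cycleFinset (q * swap x y)) =
      insert (cycleFinset (q * swap x y) x)
        (((O.image (cycleFinset q)).erase (cycleFinset q x)).erase (cycleFinset q y)) := by
    have hout : ∀ u, ¬ q.SameCycle u x → ¬ q.SameCycle u y →
        cycleFinset (q * swap x y) u = cycleFinset q u := by
      intro u h1 h2
      ext v
      simp only [mem_cycleFinset]
      exact sameCycle_mul_swap_of_not h1 h2
    ext c
    simp only [Finset.mem_image, Finset.mem_insert, Finset.mem_erase]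
    constructor
    · rintro ⟨u, hu, rfl⟩
      by_cases h1 : q.SameCycle u x
      · left
        exact (cycleFinset_eq_iff.2 ((sameCycle_mul_swap_left_iff h).2 (Or.inl h1.symm))).symm
      by_cases h2 : q.SameCycle u y
      · left
        exact (cycleFinset_eq_iff.2 ((sameCycle_mul_swap_left_iff h).2 (Or.inr h2.symm))).symm
      right
      rw [hout u h1 h2]
      simp only [ne_eq, cycleFinset_eq_iff]
      exact ⟨h2, h1, u, hu, cycleFinset_eq_iff.1 rfl⟩
    · rintro (rfl | ⟨h2, h1, u, hu, rfl⟩)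
      · exact ⟨x, hx, rfl⟩
      · simp only [ne_eq, cycleFinset_eq_iff] at h1 h2
        exact ⟨u, hu, hout u h1 h2⟩
  have hym : cycleFinset q y ∈ (O.image (cycleFinset q)).erase (cycleFinset q x) := by
    rw [Finset.mem_erase]
    exact ⟨fun e => h (cycleFinset_eq_iff.1 e).symm, Finset.mem_image_of_mem _ hy⟩
  have hxm : cycleFinset q x ∈ O.image (cycleFinset q) := Finset.mem_image_of_mem _ hx
  have hnot : cycleFinset (q * swap x y) x ∉
      ((O.image (cycleFinset q)).erase (cycleFinset q x)).erase (cycleFinset q y) := by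
    simp only [Finset.mem_erase, Finset.mem_image, not_and]
    rintro - h1 ⟨u, -, hu⟩
    have hux : q.SameCycle u x := by
      rw [← mem_cycleFinset, hu, mem_cycleFinset]
    have huy : q.SameCycle u y := by
      rw [← mem_cycleFinset, hu, mem_cycleFinset]
      exact sameCycle_mul_swap h
    exact h (hux.symm.trans huy)
  have h1 := Finset.card_erase_add_one hym
  have h2 := Finset.card_erase_add_one hxm
  rw [cyc_def, cyc_def, him, Finset.card_insert_of_notMem hnot, h1, h2]

theorem cyc_mul_swap_of_sameCycle {O : Finset S} {q : Perm S} {x y : S} (hx : x ∈ O)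
    (hy : y ∈ O) (hne : x ≠ y) (h : q.SameCycle x y) :
    cyc O (q * swap x y) = cyc O q + 1 := by
  have := cyc_mul_swap_of_not hx hy (not_sameCycle_mul_swap hne h)
  rw [mul_swap_mul_swap] at this
  exact this.symm

end Cycles

end Hypermap

namespace Hypermap

open Equiv
open Equiv.Perm hiding Disjoint

section Genus

variable {S : Type*}

/-- `O` is nonempty and has no proper nonempty subset stable under `p` and `q`. -/
def Conn (O : Finset S) (p q : Perm S) : Prop :=
  O.Nonempty ∧ ∀ A ⊆ O, A.Nonempty → Inv A p → Inv A q → A = O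

variable [Fintype S]

/-- The Euler characteristic of the hypermap on `O` with permutations `p`, `q`, `p * q`. -/
noncomputable def eul (O : Finset S) (p q : Perm S) : ℤ :=
  cyc O p + cyc O q + cyc O (p * q) - O.card

variable [DecidableEq S]

theorem Inv.sdiff {O A : Finset S} {p : Perm S} (hO : Inv O p) (hA : Inv A p) :
    Inv (O \ A) p := by
  intro s hs
  rw [Finset.mem_sdiff] at hs ⊢
  exact ⟨hO s hs.1, fun h => hs.2 (hA.apply_mem_iff.1 h)⟩

theorem Inv.of_mul_swap {A : Finset S} {q : Perm S} {x y : S} (h : x ∈ A ↔ y ∈ A)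
    (hA : Inv A (q * swap x y)) : Inv A q := by
  intro s hs
  have hm : swap x y s ∈ A := by
    by_cases hsx : s = x
    · subst hsx; rw [swap_apply_left]; exact h.1 hs
    by_cases hsy : s = y
    · subst hsy; rw [swap_apply_right]; exact h.2 hs
    rwa [swap_apply_of_ne_of_ne hsx hsy]
  have := hA _ hm
  rwa [← Perm.mul_apply, mul_swap_mul_swap] at this

theorem conn_split {O : Finset S} {p q : Perm S} (hp : Inv O p) (hq : Inv O q)
    (hc : Conn O p q) {x y : S} (hx : x ∈ O) (hy : y ∈ O) :
    Conn O p (q * swap x y) ∨ ∃ O₁ O₂, x ∈ O₁ ∧ y ∈ O₂ ∧ Disjoint O₁ O₂ ∧ O₁ ∪ O₂ = O ∧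
      Inv O₁ p ∧ Inv O₁ (q * swap x y) ∧ Conn O₁ p (q * swap x y) ∧
      Inv O₂ p ∧ Inv O₂ (q * swap x y) ∧ Conn O₂ p (q * swap x y) := by
  by_contra! hcon
  obtain ⟨h1, h2⟩ := hcon
  have hq' := hq.mul_swap hx hy
  have hsep : ∀ A ⊆ O, A.Nonempty → A ≠ O → Inv A p → Inv A (q * swap x y) →
      ¬ (x ∈ A ↔ y ∈ A) := fun A hA hne hAO hAp hAq h =>
    hAO (hc.2 A hA hne hAp (hAq.of_mul_swap h))
  have hconn : ∀ A ⊆ O, ∀ z ∈ A, ∀ w, w ∉ A → (z = x ∧ w = y ∨ z = y ∧ w = x) → Inv A p →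
      Inv A (q * swap x y) → Conn A p (q * swap x y) := by
    intro A hA z hz w hw hzw hAp hAq
    refine ⟨⟨z, hz⟩, fun B hB hBn hBp hBq => ?_⟩
    by_contra hBA
    have hBO : B ≠ O := fun h => hBA (Finset.Subset.antisymm hB (h ▸ hA))
    have hne : (A \ B).Nonempty := by
      rw [Finset.sdiff_nonempty]
      exact fun h => hBA (Finset.Subset.antisymm hB h)
    have hwO : w ∈ O := by rcases hzw with ⟨-, rfl⟩ | ⟨-, rfl⟩ <;> assumption
    have hABO : A \ B ≠ O := fun h => hw (Finset.sdiff_subset (h ▸ hwO))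
    have e1 := hsep B (hB.trans hA) hBn hBO hBp hBq
    have e2 := hsep (A \ B) (Finset.sdiff_subset.trans hA) hne hABO (hAp.sdiff hBp)
      (hAq.sdiff hBq)
    have hwB : w ∉ B := fun h => hw (hB h)
    simp only [Finset.mem_sdiff] at e2
    rcases hzw with ⟨rfl, rfl⟩ | ⟨rfl, rfl⟩ <;> tauto
  have hex : ∃ A ⊆ O, A.Nonempty ∧ Inv A p ∧ Inv A (q * swap x y) ∧ A ≠ O := by
    by_contra! hn
    exact h1 ⟨⟨x, hx⟩, hn⟩
  obtain ⟨A, hA, hAn, hAp, hAq, hAO⟩ := hex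
  have key : ∀ A ⊆ O, x ∈ A → y ∉ A → Inv A p → Inv A (q * swap x y) → False := by
    intro A hA hxA hyA hAp hAq
    have hyA' : y ∈ O \ A := Finset.mem_sdiff.2 ⟨hy, hyA⟩
    have hxA' : x ∉ O \ A := fun h => (Finset.mem_sdiff.1 h).2 hxA
    exact h2 A (O \ A) hxA hyA' Finset.disjoint_sdiff (Finset.union_sdiff_of_subset hA) hAp hAq
      (hconn A hA x hxA y hyA (Or.inl ⟨rfl, rfl⟩) hAp hAq) (hp.sdiff hAp) (hq'.sdiff hAq)
      (hconn _ Finset.sdiff_subset y hyA' x hxA' (Or.inr ⟨rfl, rfl⟩) (hp.sdiff hAp)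
        (hq'.sdiff hAq))
  have := hsep A hA hAn hAO hAp hAq
  by_cases hxA : x ∈ A
  · exact key A hA hxA (by tauto) hAp hAq
  · refine key (O \ A) Finset.sdiff_subset (Finset.mem_sdiff.2 ⟨hx, hxA⟩) ?_ (hp.sdiff hAp)
      (hq'.sdiff hAq)
    rw [Finset.mem_sdiff]
    tauto

theorem eul_split {O : Finset S} {p q : Perm S} (hp : Inv O p) (hq : Inv O q)
    (hc : Conn O p q) {x y : S} (hx : x ∈ O) (hy : y ∈ O) (hne : x ≠ y)
    (hs : q.SameCycle x y) :
    (Conn O p (q * swap x y) ∧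
      (¬ (p * q).SameCycle x y ∧ eul O p (q * swap x y) = eul O p q ∨
        eul O p (q * swap x y) = eul O p q + 2)) ∨
    ((p * q).SameCycle x y ∧ ∃ O₁ O₂, x ∈ O₁ ∧ y ∈ O₂ ∧ Disjoint O₁ O₂ ∧ O₁ ∪ O₂ = O ∧
      Inv O₁ p ∧ Inv O₁ (q * swap x y) ∧ Conn O₁ p (q * swap x y) ∧
      Inv O₂ p ∧ Inv O₂ (q * swap x y) ∧ Conn O₂ p (q * swap x y) ∧
      eul O₁ p (q * swap x y) + eul O₂ p (q * swap x y) = eul O p q + 2) := by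
  have c1 := cyc_mul_swap_of_sameCycle hx hy hne hs
  rcases conn_split hp hq hc hx hy with h | ⟨O₁, O₂, h1, h2, hd, rfl, a1, a2, a3, b1, b2, b3⟩
  · refine Or.inl ⟨h, ?_⟩
    by_cases hr : (p * q).SameCycle x y
    · right
      have c2 := cyc_mul_swap_of_sameCycle hx hy hne hr
      unfold eul
      rw [← mul_assoc, c1, c2]
      push_cast; ring
    · refine Or.inl ⟨hr, ?_⟩
      have c2 := cyc_mul_swap_of_not hx hy hr
      unfold eul
      rw [← mul_assoc, c1, ← c2]
      push_cast; ring
  · right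
    have hr : (p * q).SameCycle x y := by
      by_contra hr
      have := sameCycle_mul_swap hr
      rw [mul_assoc] at this
      exact Finset.disjoint_left.1 hd ((a1.mul a2).mem this h1) h2
    have c2 := cyc_mul_swap_of_sameCycle hx hy hne hr
    refine ⟨hr, O₁, O₂, h1, h2, hd, rfl, a1, a2, a3, b1, b2, b3, ?_⟩
    have d1 := cyc_union a1 hd
    have d2 := cyc_union a2 hd
    have d3 := cyc_union (a1.mul a2) hd
    have d4 := Finset.card_union_of_disjoint hd
    rw [← mul_assoc] at d3
    unfold eul
    rw [← mul_assoc]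
    omega

theorem cyc_of_forall_apply_eq {O : Finset S} {q : Perm S} (h : ∀ s ∈ O, q s = s) :
    cyc O q = O.card := by
  rw [cyc_def, Finset.card_image_of_injOn]
  intro s hs t _ hst
  have : t ∈ ({s} : Set S) := by
    refine mem_of_sameCycle (p := q) ?_ (cycleFinset_eq_iff.1 hst) rfl
    rintro _ rfl
    exact h _ hs
  exact this.symm

theorem cyc_eq_one {O : Finset S} {p : Perm S} (hO : O.Nonempty)
    (h : ∀ s ∈ O, ∀ t ∈ O, p.SameCycle s t) : cyc O p = 1 := by
  obtain ⟨s, hs⟩ := hO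
  rw [cyc_def, Finset.card_eq_one]
  refine ⟨cycleFinset p s, ?_⟩
  ext c
  simp only [Finset.mem_image, Finset.mem_singleton]
  constructor
  · rintro ⟨t, ht, rfl⟩
    exact cycleFinset_eq_iff.2 (h t ht s hs)
  · rintro rfl
    exact ⟨s, hs, rfl⟩

theorem eul_le_two {p q : Perm S} {O : Finset S} (hp : Inv O p) (hq : Inv O q)
    (hc : Conn O p q) : eul O p q ≤ 2 := by
  induction hn : (Finset.univ.filter fun s => q s ≠ s).card using Nat.strong_induction_on
    generalizing q O with
  | _ n ih =>
  by_cases h : ∃ s ∈ O, q s ≠ s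
  · obtain ⟨x, hx, hqx⟩ := h
    set y := q⁻¹ x with hy
    have hqy : q y = x := by simp [hy]
    have hyO : y ∈ O := hq.inv x hx
    have hne : x ≠ y := by
      intro e; rw [← e] at hqy; exact hqx hqy
    have hs : q.SameCycle x y := by
      rw [hy]; exact sameCycle_inv_apply _ _
    have hlt : (Finset.univ.filter fun s => (q * swap x y) s ≠ s).card < n := by
      rw [← hn]
      refine Finset.card_lt_card ⟨?_, fun hsub => ?_⟩
      · intro s hs
        rw [Finset.mem_filter_univ] at hs ⊢
        rw [Perm.mul_apply] at hs
        by_cases hsx : s = x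
        · exact hsx ▸ hqx
        by_cases hsy : s = y
        · rw [hsy, hqy]; exact hne
        rwa [swap_apply_of_ne_of_ne hsx hsy] at hs
      · have := hsub (x := x) (by simpa using hqx)
        rw [Finset.mem_filter_univ, Perm.mul_apply, swap_apply_left] at this
        exact this hqy
    have hq' := hq.mul_swap hx hyO
    rcases eul_split hp hq hc hx hyO hne hs with ⟨h1, h2⟩ |
        ⟨-, O₁, O₂, h1, h2, -, -, a1, a2, a3, b1, b2, b3, he⟩
    · have := ih _ hlt hp hq' h1 rfl
      omega
    · have e1 := ih _ hlt a1 a2 a3 rfl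
      have e2 := ih _ hlt b1 b2 b3 rfl
      omega
  · push Not at h
    have h1 := cyc_of_forall_apply_eq h
    have h2 : cyc O (p * q) = cyc O p := cyc_congr (hp.mul hq) fun s hs => by
      rw [Perm.mul_apply, h s hs]
    have h3 : cyc O p = 1 := by
      refine cyc_eq_one hc.1 fun s hs t ht => ?_
      have : O.filter (fun u => p.SameCycle s u) = O := by
        classical
        refine hc.2 _ (Finset.filter_subset _ _) ⟨s, by simp [hs, SameCycle.refl]⟩ ?_ ?_
        · intro u hu
          rw [Finset.mem_filter] at hu ⊢
          exact ⟨hp u hu.1, sameCycle_apply_right.2 hu.2⟩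
        · intro u hu
          rwa [h u (Finset.mem_filter.1 hu).1]
      rw [← this] at ht
      exact (Finset.mem_filter.1 ht).2
    unfold eul
    omega

/-- The hypermap on `O` with face permutations `f`, `g` is connected of genus zero. -/
structure Planar (O : Finset S) (f g : Perm S) : Prop where
  inv_left : Inv O f
  inv_right : Inv O g
  conn : Conn O f g
  count : cyc O f + cyc O g + cyc O (f⁻¹ * g) = O.card + 2

theorem Planar.symm {O : Finset S} {f g : Perm S} (h : Planar O f g) : Planar O g f where
  inv_left := h.inv_right
  inv_right := h.inv_left
  conn := ⟨h.conn.1, fun A hA hn h1 h2 => h.conn.2 A hA hn h2 h1⟩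
  count := by
    rw [← cyc_inv O (g⁻¹ * f), mul_inv_rev, inv_inv, ← h.count]
    ring

theorem Conn.of_forall {O : Finset S} {p q p' q' : Perm S} (h : Conn O p q)
    (hi : ∀ A ⊆ O, Inv A p' → Inv A q' → Inv A p ∧ Inv A q) : Conn O p' q' :=
  ⟨h.1, fun A hA hn h1 h2 => h.2 A hA hn (hi A hA h1 h2).1 (hi A hA h1 h2).2⟩

theorem Planar.congr {O : Finset S} {f g f' g' : Perm S} (h : Planar O f g)
    (hf : ∀ s ∈ O, f s = f' s) (hg : ∀ s ∈ O, g s = g' s) : Planar O f' g' where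
  inv_left := fun s hs => hf s hs ▸ h.inv_left s hs
  inv_right := fun s hs => hg s hs ▸ h.inv_right s hs
  conn := h.conn.of_forall fun A hA h1 h2 =>
    ⟨fun s hs => hf s (hA hs) ▸ h1 s hs, fun s hs => hg s (hA hs) ▸ h2 s hs⟩
  count := by
    rw [← cyc_congr h.inv_left hf, ← cyc_congr h.inv_right hg, ← h.count]
    congr 1
    refine (cyc_congr (h.inv_left.inv.mul h.inv_right) fun s hs => ?_).symm
    rw [Perm.mul_apply, Perm.mul_apply, ← hg s hs, Perm.inv_eq_iff_eq, hf]
    · simp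
    · have := h.inv_left.inv _ (h.inv_right s hs)
      have e : f'⁻¹ (g s) = f⁻¹ (g s) := by
        rw [Perm.inv_eq_iff_eq, ← hf _ this]; simp
      rwa [e]

theorem planar_of_eul {O : Finset S} {f q : Perm S} (h1 : Inv O f) (h2 : Inv O q)
    (hc : Conn O f q) (he : eul O f q = 2) : Planar O f (f * q) where
  inv_left := h1
  inv_right := h1.mul h2
  conn := hc.of_forall fun A _ a1 a2 => ⟨a1, by simpa using a1.inv.mul a2⟩
  count := by
    unfold eul at he
    rw [inv_mul_cancel_left]
    omega

theorem Planar.conn' {O : Finset S} {f g : Perm S} (h : Planar O f g) : Conn O f (f⁻¹ * g) :=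
  h.conn.of_forall fun A _ a1 a2 => ⟨a1, by simpa using a1.mul a2⟩

theorem Planar.eul_eq {O : Finset S} {f g : Perm S} (h : Planar O f g) :
    eul O f (f⁻¹ * g) = 2 := by
  have := h.count
  unfold eul
  rw [mul_inv_cancel_left]
  omega

/-- Cutting a planar hypermap along two sides with the same corner. -/
theorem Planar.split_corner {O : Finset S} {f g : Perm S} (h : Planar O f g) {x y : S}
    (hx : x ∈ O) (hy : y ∈ O) (hne : x ≠ y) (hs : (f⁻¹ * g).SameCycle x y) :
    (¬ g.SameCycle x y ∧ Planar O f (g * swap x y)) ∨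
    (g.SameCycle x y ∧ ∃ O₁ O₂, x ∈ O₁ ∧ y ∈ O₂ ∧ Disjoint O₁ O₂ ∧ O₁ ∪ O₂ = O ∧
      Planar O₁ f (g * swap x y) ∧ Planar O₂ f (g * swap x y)) := by
  have hq := h.inv_left.inv.mul h.inv_right
  have hq' := hq.mul_swap hx hy
  have e : f * (f⁻¹ * g * swap x y) = g * swap x y := by group
  rcases eul_split h.inv_left hq h.conn' hx hy hne hs with ⟨h1, h2⟩ |
      ⟨h0, O₁, O₂, h1, h2, hd, hu, a1, a2, a3, b1, b2, b3, he⟩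
  · have hle := eul_le_two h.inv_left hq' h1
    rw [h.eul_eq] at h2
    rw [mul_inv_cancel_left] at h2
    rcases h2 with ⟨h2, h3⟩ | h3
    · exact Or.inl ⟨h2, e ▸ planar_of_eul h.inv_left hq' h1 h3⟩
    · omega
  · rw [mul_inv_cancel_left] at h0
    have l1 := eul_le_two a1 a2 a3
    have l2 := eul_le_two b1 b2 b3
    rw [h.eul_eq] at he
    exact Or.inr ⟨h0, O₁, O₂, h1, h2, hd, hu, e ▸ planar_of_eul a1 a2 a3 (by omega),
      e ▸ planar_of_eul b1 b2 b3 (by omega)⟩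

theorem planar_of_eul_inv {O : Finset S} {f g : Perm S} (h1 : Inv O f⁻¹) (h2 : Inv O g)
    (hc : Conn O f⁻¹ g) (he : eul O f⁻¹ g = 2) : Planar O f g where
  inv_left := by simpa using h1.inv
  inv_right := h2
  conn := hc.of_forall fun A _ a1 a2 => ⟨a1.inv, a2⟩
  count := by
    unfold eul at he
    rw [cyc_inv] at he
    omega

/-- Cutting a planar hypermap along two sides of the same face. -/
theorem Planar.split_face {O : Finset S} {f g : Perm S} (h : Planar O f g) {x y : S}
    (hx : x ∈ O) (hy : y ∈ O) (hne : x ≠ y) (hs : g.SameCycle x y) :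
    Planar O f (g * swap x y) ∨
    (∃ O₁ O₂, x ∈ O₁ ∧ y ∈ O₂ ∧ Disjoint O₁ O₂ ∧ O₁ ∪ O₂ = O ∧
      Planar O₁ f (g * swap x y) ∧ Planar O₂ f (g * swap x y)) := by
  have hg' := h.inv_right.mul_swap hx hy
  have hc : Conn O f⁻¹ g := h.conn.of_forall fun A _ a1 a2 => ⟨by simpa using a1.inv, a2⟩
  have hE : eul O f⁻¹ g = 2 := by
    have := h.count
    unfold eul
    rw [cyc_inv]
    omega
  rcases eul_split h.inv_left.inv h.inv_right hc hx hy hne hs with ⟨h1, h2⟩ |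
      ⟨h0, O₁, O₂, h1, h2, hd, hu, a1, a2, a3, b1, b2, b3, he⟩
  · have hle := eul_le_two h.inv_left.inv hg' h1
    exact Or.inl (planar_of_eul_inv h.inv_left.inv hg' h1 (by omega))
  · have l1 := eul_le_two a1 a2 a3
    have l2 := eul_le_two b1 b2 b3
    exact Or.inr ⟨O₁, O₂, h1, h2, hd, hu, planar_of_eul_inv a1 a2 a3 (by omega),
      planar_of_eul_inv b1 b2 b3 (by omega)⟩

/-- The permutation obtained from `g` by removing `t` from its cycle. -/
def cut (g : Perm S) (t : S) : Perm S := g * swap t (g⁻¹ t)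

theorem Planar.cut_right {O : Finset S} {f g : Perm S} (h : Planar O f g) (t : S) {u : S}
    (hu : u ∈ O) : ∃ C ⊆ O, u ∈ C ∧ Planar C f (cut g t) := by
  by_cases ht : t ∈ O
  · by_cases hne : t = g⁻¹ t
    · refine ⟨O, subset_rfl, hu, ?_⟩
      rwa [cut, ← hne, swap_self, ← Perm.one_def, mul_one]
    · rcases h.split_face ht (h.inv_right.inv t ht) hne
        (sameCycle_inv_apply _ _) with h1 |
        ⟨O₁, O₂, -, -, -, rfl, h1, h2⟩
      · exact ⟨O, subset_rfl, hu, h1⟩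
      · rcases Finset.mem_union.1 hu with hu | hu
        · exact ⟨O₁, Finset.subset_union_left, hu, h1⟩
        · exact ⟨O₂, Finset.subset_union_right, hu, h2⟩
  · refine ⟨O, subset_rfl, hu, h.congr (fun _ _ => rfl) fun s hs => ?_⟩
    rw [cut, Perm.mul_apply, swap_apply_of_ne_of_ne]
    · rintro rfl; exact ht hs
    · rintro rfl; exact ht (by simpa using h.inv_right _ hs)

theorem cut_apply_self (g : Perm S) (t : S) : cut g t t = t := by simp [cut]

theorem Planar.cut {O : Finset S} {f g : Perm S} (h : Planar O f g) {t u : S} (hu : u ∈ O)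
    (hut : u ≠ t) : ∃ C ⊆ O, u ∈ C ∧ t ∉ C ∧ Planar C (cut f t) (cut g t) := by
  obtain ⟨C, hC, huC, hp⟩ := h.cut_right t hu
  obtain ⟨C', hC', huC', hp'⟩ := hp.symm.cut_right t huC
  refine ⟨C', hC'.trans hC, huC', fun ht => ?_, hp'.symm⟩
  have := hp'.conn.2 {t} (by simpa) ⟨t, by simp⟩ (fun s hs => ?_) (fun s hs => ?_)
  · rw [← this] at huC'
    exact hut (by simpa using huC')
  all_goals
    rw [Finset.mem_singleton] at hs ⊢
    rw [hs, cut_apply_self]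

end Genus

end Hypermap

namespace Hypermap

open Equiv
open Equiv.Perm hiding Disjoint

section Triv

variable {S : Type*} [Fintype S] {L : Type*} [Group L]

/-- The product of the weights `b` along the cycle of `g` through `s` is trivial. -/
def Triv (g : Perm S) (b : S → L) (s : S) : Prop :=
  ∃ Q : S → L, ∀ x, g.SameCycle s x → Q (g x) = Q x * b x

theorem Triv.sameCycle {g : Perm S} {b : S → L} {s t : S} (h : Triv g b s)
    (hst : g.SameCycle s t) : Triv g b t := by
  obtain ⟨Q, hQ⟩ := h
  exact ⟨Q, fun x hx => hQ x (hst.trans hx)⟩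

theorem Triv.defect {g : Perm S} {b : S → L} {x : S} (h : Triv g b x) {Q : S → L}
    (hQ : ∀ u, g.SameCycle x u → u ≠ x → Q (g u) = Q u * b u) : Q (g x) = Q x * b x := by
  obtain ⟨R, hR⟩ := h
  have key : x ∈ {u | g.SameCycle x u ∧ Q u * (R u)⁻¹ = Q (g x) * (R (g x))⁻¹} := by
    refine mem_of_sameCycle (s := g x)
      (A := {u | g.SameCycle x u ∧ Q u * (R u)⁻¹ = Q (g x) * (R (g x))⁻¹})
      (fun u hu => ⟨sameCycle_apply_right.2 hu.1, ?_⟩)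
      (sameCycle_apply_left.2 (.refl _ _)) ⟨sameCycle_apply_right.2 (.refl _ _), rfl⟩
    by_cases hux : u = x
    · rw [hux]
    · rw [← hu.2, hQ u hu.1 hux, hR u hu.1]
      group
  have := key.2
  rw [hR x (.refl _ _), mul_inv_rev, mul_inv_eq_iff_eq_mul] at this
  rw [this]
  group

theorem triv_congr {g g' : Perm S} {b b' : S → L} {s : S}
    (hg : ∀ u, g.SameCycle s u → g u = g' u) (hb : ∀ u, g.SameCycle s u → b u = b' u) :
    Triv g b s ↔ Triv g' b' s := by
  have hcl : ∀ u ∈ {u | g.SameCycle s u}, g u ∈ {u | g.SameCycle s u} :=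
    fun u hu => sameCycle_apply_right.2 hu
  have hsc : ∀ u, g.SameCycle s u ↔ g'.SameCycle s u := fun u =>
    ⟨sameCycle_of_eqOn hcl hg (SameCycle.refl g s),
      sameCycle_of_eqOn (fun v hv => hg v hv ▸ hcl v hv) (fun v hv => (hg v hv).symm)
        (SameCycle.refl g s)⟩
  constructor
  · rintro ⟨Q, hQ⟩
    refine ⟨Q, fun x hx => ?_⟩
    rw [← hsc] at hx
    rw [← hg x hx, ← hb x hx, hQ x hx]
  · rintro ⟨Q, hQ⟩
    refine ⟨Q, fun x hx => ?_⟩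
    rw [hg x hx, hb x hx, hQ x ((hsc x).1 hx)]

variable [DecidableEq S]

theorem Triv.split {g : Perm S} {b : S → L} {x y : S} (hne : x ≠ y) (hxy : g.SameCycle x y)
    (h : Triv g b x) (hx : Triv (g * swap x y) b x) : Triv (g * swap x y) b y := by
  obtain ⟨Q, hQ⟩ := h
  have hn := not_sameCycle_mul_swap hne hxy
  have hiff := fun u => sameCycle_mul_swap_left_iff hn (u := u)
  simp only [mul_swap_mul_swap] at hiff
  have hgx : (g * swap x y) x = g y := by rw [Perm.mul_apply, swap_apply_left]
  have hgy : (g * swap x y) y = g x := by rw [Perm.mul_apply, swap_apply_right]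
  have h1 := hx.defect (Q := Q) fun u hu hux => by
    rw [Perm.mul_apply, swap_apply_of_ne_of_ne hux (by rintro rfl; exact hn hu)]
    exact hQ u ((hiff u).2 (Or.inl hu))
  rw [hgx, hQ y hxy] at h1
  refine ⟨Q, fun u hu => ?_⟩
  by_cases huy : u = y
  · rw [huy, hgy, hQ x (.refl _ _), h1]
  rw [Perm.mul_apply, swap_apply_of_ne_of_ne (by rintro rfl; exact hn hu.symm) huy]
  exact hQ u ((hiff u).2 (Or.inr hu))

theorem Triv.join {g : Perm S} {b : S → L} {x y : S} (hn : ¬ g.SameCycle x y)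
    (hx : Triv g b x) (hy : Triv g b y) : Triv (g * swap x y) b x := by
  classical
  obtain ⟨Q, hQ⟩ := hx
  obtain ⟨R, hR⟩ := hy
  set c := Q x * b x * (R y * b y)⁻¹
  refine ⟨fun u => if g.SameCycle x u then Q u else c * R u, fun u hu => ?_⟩
  have hiff := (sameCycle_mul_swap_left_iff hn (u := u)).1 hu
  by_cases hux : u = x
  · subst hux
    rw [Perm.mul_apply, swap_apply_left]
    simp only [sameCycle_apply_right, hn, if_false, SameCycle.refl, if_true]
    rw [hR y (.refl _ _)]
    simp only [c]; group
  by_cases huy : u = y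
  · subst huy
    rw [Perm.mul_apply, swap_apply_right]
    simp only [sameCycle_apply_right, hn, if_false, SameCycle.refl, if_true]
    rw [hQ x (.refl _ _)]
    simp only [c]; group
  rw [Perm.mul_apply, swap_apply_of_ne_of_ne hux huy]
  simp only [sameCycle_apply_right]
  split_ifs with h1
  · exact hQ u h1
  · rw [hR u (hiff.resolve_left h1), ← mul_assoc]

theorem triv_mul_swap_of_not {g : Perm S} {b : S → L} {x y u : S} (hx : ¬ g.SameCycle u x)
    (hy : ¬ g.SameCycle u y) : Triv (g * swap x y) b u ↔ Triv g b u := by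
  refine (triv_congr (fun v hv => ?_) fun _ _ => rfl).symm
  rw [Perm.mul_apply, swap_apply_of_ne_of_ne] <;> rintro rfl <;> contradiction

theorem cut_apply_of_ne {g : Perm S} {t u : S} (h : u ≠ t) (h' : g u ≠ t) :
    cut g t u = g u := by
  rw [cut, Perm.mul_apply, swap_apply_of_ne_of_ne h]
  rintro rfl
  simp at h'

theorem cut_apply_inv (g : Perm S) (t : S) : cut g t (g⁻¹ t) = g t := by
  rw [cut, Perm.mul_apply, swap_apply_right]

theorem cut_apply_of_apply_eq {g : Perm S} {t u : S} (h : g u = t) : cut g t u = g t := by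
  rw [← cut_apply_inv g t, Perm.inv_eq_iff_eq.2 h.symm]

theorem sameCycle_cut_iff {g : Perm S} {t u v : S} (hu : u ≠ t) (hv : v ≠ t) :
    (cut g t).SameCycle u v ↔ g.SameCycle u v := by
  constructor
  · intro h
    refine mem_of_sameCycle (A := {v | g.SameCycle u v}) (fun w hw => ?_) h (SameCycle.refl _ _)
    by_cases hwt : w = t
    · rwa [hwt, cut_apply_self, ← hwt]
    by_cases hgw : g w = t
    · rw [cut_apply_of_apply_eq hgw, ← hgw]
      exact sameCycle_apply_right.2 (sameCycle_apply_right.2 hw)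
    · rw [cut_apply_of_ne hwt hgw]
      exact sameCycle_apply_right.2 hw
  · intro h
    have := mem_of_sameCycle
      (A := {w | if w = t then (cut g t).SameCycle u (g⁻¹ t) else (cut g t).SameCycle u w})
      (fun w hw => ?_) h (by simp [hu, SameCycle.refl])
    · simpa [hv] using this
    simp only [Set.mem_ofPred_eq] at hw ⊢
    by_cases hwt : w = t
    · subst hwt
      rw [if_pos rfl] at hw
      split_ifs with h1
      · exact hw
      · have := sameCycle_apply_right.2 hw
        rwa [cut_apply_inv] at this
    · rw [if_neg hwt] at hw
      split_ifs with h1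
      · rwa [Perm.inv_eq_iff_eq.2 h1.symm]
      · have := sameCycle_apply_right.2 hw
        rwa [cut_apply_of_ne hwt h1] at this

theorem triv_cut_iff {g : Perm S} {t u : S} {b b' : S → L} (hu : u ≠ t)
    (h1 : ∀ v, v ≠ t → g v ≠ t → b' v = b v) (h2 : ∀ v, v ≠ t → g v = t → b' v = b v * b t) :
    Triv (cut g t) b' u ↔ Triv g b u := by
  classical
  have hne : ∀ v, (cut g t).SameCycle u v → v ≠ t := by
    rintro v hv rfl
    refine hu (mem_of_sameCycle (A := {v}) ?_ hv.symm rfl)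
    rintro w rfl
    exact cut_apply_self _ _
  constructor
  · rintro ⟨Q, hQ⟩
    refine ⟨fun v => if v = t then Q (g⁻¹ t) * b (g⁻¹ t) else Q v, fun v hv => ?_⟩
    by_cases hgt : g t = t
    · have hvt : v ≠ t := by
        rintro rfl
        refine hu (mem_of_sameCycle (A := {v}) ?_ hv.symm rfl)
        rintro w rfl
        exact hgt
      have hgv : g v ≠ t := fun h => hvt (g.injective (h.trans hgt.symm))
      simp only [hvt, hgv, if_false]
      rw [← cut_apply_of_ne hvt hgv, hQ v ((sameCycle_cut_iff hu hvt).2 hv), h1 v hvt hgv]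
    have hpt : g⁻¹ t ≠ t := fun h => hgt (by rw [Perm.inv_eq_iff_eq] at h; exact h.symm)
    by_cases hvt : v = t
    · subst hvt
      simp only [hgt, if_true, if_false]
      rw [← cut_apply_inv, hQ, h2 _ hpt (by simp), mul_assoc]
      exact (sameCycle_cut_iff hu hpt).2 (hv.trans (sameCycle_inv_apply _ _))
    by_cases hgv : g v = t
    · simp only [hgv, hvt, if_true, if_false]
      rw [← hgv]; simp
    · simp only [hgv, hvt, if_false]
      rw [← cut_apply_of_ne hvt hgv, hQ v ((sameCycle_cut_iff hu hvt).2 hv), h1 v hvt hgv]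
  · rintro ⟨Q, hQ⟩
    refine ⟨Q, fun v hv => ?_⟩
    have hvt := hne v hv
    have hv' := (sameCycle_cut_iff hu hvt).1 hv
    by_cases hgv : g v = t
    · rw [cut_apply_of_apply_eq hgv, h2 v hvt hgv, ← mul_assoc, ← hQ v hv', hgv, hQ]
      rw [← hgv]
      exact sameCycle_apply_right.2 hv'
    · rw [cut_apply_of_ne hvt hgv, h1 v hvt hgv, hQ v hv']

end Triv

end Hypermap

namespace Hypermap

open Equiv
open Equiv.Perm hiding Disjoint

/-- Data describing how the vertices of the two face permutations of a hypermap are labelled: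
a vertex of colour `i` has a kind in `K i`, and its sides are evaluated in the group `L i k`. -/
structure LocalSystem.{u, v, w} (F : Type v) (X : Type w) [Group F] [MulAction F X] where
  K : Bool → Type u
  L : ∀ i, K i → Type u
  group : ∀ i k, Group (L i k)
  lam : ∀ i k, F →* L i k
  Adm : (∀ i, K i) → F → Prop
  adm_one : ∀ k, Adm k 1
  adm_mul : ∀ k b c, Adm k b → Adm k c → Adm k (b * c)
  mrg : ∀ i, K i → Prop
  cls : ∀ i, K i → X → Bool
  cls_smul : ∀ i k b x, Adm k b → cls i (k i) (b⁻¹ • x) = cls i (k i) x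

attribute [instance] LocalSystem.group

variable {F X : Type*} [Group F] [MulAction F X]

/-- A decoration of the sides `S` of a hypermap with labels in `F` and positions in `X`. -/
structure Deco (Y : LocalSystem F X) (S : Type*) where
  f : Bool → Perm S
  κ : S → ∀ i, Y.K i
  β : S → F
  P : S → X
  κ_f : ∀ i s, κ (f i s) i = κ s i
  adm : ∀ s, Y.Adm (κ s) (β s)
  P_f : ∀ i s, P (f i s) = (β s)⁻¹ • P s

namespace Deco

variable {Y : LocalSystem F X} {S : Type*} [Fintype S]

/-- The vertex of colour `i` at `s` has nontrivial holonomy. -/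
def NT (D : Deco Y S) (i : Bool) (s : S) : Prop :=
  ¬ Triv (D.f i) (fun x => Y.lam i (D.κ s i) (D.β x)) s

/-- The class of the vertex of colour `i` at `s`. -/
def cl (D : Deco Y S) (i : Bool) (s : S) : Bool := Y.cls i (D.κ s i) (D.P s)

theorem κ_sameCycle (D : Deco Y S) {i : Bool} {s t : S} (h : (D.f i).SameCycle s t) :
    D.κ t i = D.κ s i :=
  mem_of_sameCycle (A := {t | D.κ t i = D.κ s i}) (fun u hu => (D.κ_f i u).trans hu) h rfl

theorem cl_sameCycle (D : Deco Y S) {i : Bool} {s t : S} (h : (D.f i).SameCycle s t) :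
    D.cl i t = D.cl i s := by
  refine mem_of_sameCycle (A := {t | D.cl i t = D.cl i s}) (fun u hu => ?_) h rfl
  refine Eq.trans ?_ hu
  unfold cl
  rw [D.κ_f, D.P_f]
  exact Y.cls_smul _ _ _ _ (D.adm u)

theorem NT.sameCycle {D : Deco Y S} {i : Bool} {s t : S} (h : D.NT i s)
    (hst : (D.f i).SameCycle s t) : D.NT i t := by
  intro ht
  apply h
  rw [← D.κ_sameCycle hst]
  exact ht.sameCycle hst.symm

/-- Vertices with nontrivial holonomy exist, are unique in their class, and have mergeable
kinds. -/
structure Good (D : Deco Y S) (O : Finset S) : Prop where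
  unique : ∀ i j, ∀ s ∈ O, ∀ t ∈ O, D.NT i s → D.NT j t → D.cl i s = D.cl j t →
    i = j ∧ (D.f i).SameCycle s t
  exists_nt : ∃ i, ∃ s ∈ O, D.NT i s
  mrg : ∀ i, ∀ s ∈ O, D.NT i s → Y.mrg i (D.κ s i)

variable [DecidableEq S]

/-- Removing the side `t`. -/
def kill (D : Deco Y S) (t : S) (β' : S → F) (hadm : ∀ s, Y.Adm (D.κ s) (β' s))
    (h1 : ∀ i s, s ≠ t → D.f i s ≠ t → β' s = D.β s)
    (h2 : ∀ i s, s ≠ t → D.f i s = t → β' s = D.β s * D.β t) (h3 : β' t = 1) : Deco Y S where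
  f i := cut (D.f i) t
  κ := D.κ
  β := β'
  P := D.P
  κ_f i s := by
    by_cases hs : s = t
    · rw [hs, cut_apply_self]
    by_cases hg : D.f i s = t
    · rw [cut_apply_of_apply_eq hg, D.κ_f, ← hg, D.κ_f]
    · rw [cut_apply_of_ne hs hg, D.κ_f]
  adm := hadm
  P_f i s := by
    by_cases hs : s = t
    · rw [hs, cut_apply_self, h3, inv_one, one_smul]
    by_cases hg : D.f i s = t
    · have := D.P_f i s
      rw [cut_apply_of_apply_eq hg, D.P_f, h2 i s hs hg, mul_inv_rev, mul_smul, ← this, hg]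
    · rw [cut_apply_of_ne hs hg, D.P_f, h1 i s hs hg]

theorem exists_good_of_kill (D : Deco Y S) {O : Finset S}
    (hP : Planar O (D.f false) (D.f true)) (hG : D.Good O) {t : S} (ht : t ∈ O) (β' : S → F)
    (hadm : ∀ s, Y.Adm (D.κ s) (β' s)) (h1 : ∀ i s, s ≠ t → D.f i s ≠ t → β' s = D.β s)
    (h2 : ∀ i s, s ≠ t → D.f i s = t → β' s = D.β s * D.β t) (h3 : β' t = 1)
    (h4 : ∀ i, D.f i t = t → D.β t = 1) :
    ∃ (D' : Deco Y S) (O' : Finset S), O'.card < O.card ∧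
      Planar O' (D'.f false) (D'.f true) ∧ D'.Good O' := by
  have hinv : ∀ i, Inv O (D.f i) := fun i => by
    cases i
    exacts [hP.inv_left, hP.inv_right]
  have hnt : ∀ i u, u ≠ t → ((D.kill t β' hadm h1 h2 h3).NT i u ↔ D.NT i u) := by
    intro i u hu
    unfold NT
    refine not_congr (triv_cut_iff hu (fun v hv hv' => ?_) (fun v hv hv' => ?_))
    · exact congrArg (Y.lam i (D.κ u i)) (h1 i v hv hv')
    · exact (congrArg (Y.lam i (D.κ u i)) (h2 i v hv hv')).trans (map_mul _ _ _)
  obtain ⟨i, u, hu, hut, hNT⟩ : ∃ i, ∃ u ∈ O, u ≠ t ∧ D.NT i u := by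
    obtain ⟨i, u, hu, hNT⟩ := hG.exists_nt
    by_cases hut : u = t
    · subst hut
      by_cases hfu : D.f i u = u
      · refine absurd ⟨fun _ => 1, fun x hx => ?_⟩ hNT
        have : x = u := by
          refine mem_of_sameCycle (A := {u}) ?_ hx rfl
          rintro w rfl
          exact hfu
        simp [this, h4 i hfu]
      · exact ⟨i, D.f i u, hinv i u hu, hfu, hNT.sameCycle (sameCycle_apply_right.2 (.refl _ _))⟩
    · exact ⟨i, u, hu, hut, hNT⟩
  obtain ⟨C, hC, huC, htC, hp⟩ := hP.cut hu hut
  have hne : ∀ s ∈ C, s ≠ t := by rintro s hs rfl; exact htC hs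
  refine ⟨D.kill t β' hadm h1 h2 h3, C,
    Finset.card_lt_card ⟨hC, fun h => htC (h ht)⟩, hp, ?_, ⟨i, u, huC, (hnt i u hut).2 hNT⟩, ?_⟩
  · intro i j s hs r hr h h' hcl
    rw [hnt _ _ (hne _ hs)] at h
    rw [hnt _ _ (hne _ hr)] at h'
    obtain ⟨e1, e2⟩ := hG.unique i j s (hC hs) r (hC hr) h h' hcl
    exact ⟨e1, (sameCycle_cut_iff (hne _ hs) (hne _ hr)).2 e2⟩
  · intro i s hs h
    rw [hnt _ _ (hne _ hs)] at h
    exact hG.mrg i s (hC hs) h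

/-- Exchanging two sides `x`, `y` in the permutation of colour `!i`. -/
def exch (D : Deco Y S) (i : Bool) (x y : S) (hκ : D.κ x (!i) = D.κ y (!i))
    (hP : (D.β x)⁻¹ • D.P x = (D.β y)⁻¹ • D.P y) : Deco Y S where
  f j := if j = i then D.f i else D.f (!i) * swap x y
  κ := D.κ
  β := D.β
  P := D.P
  κ_f j s := by
    by_cases hj : j = i
    · subst hj; simp [D.κ_f]
    obtain rfl : j = !i := by cases i <;> cases j <;> simp_all
    rw [if_neg hj, Perm.mul_apply, D.κ_f]
    by_cases hx : s = x
    · subst hx; rw [swap_apply_left, hκ]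
    by_cases hy : s = y
    · subst hy; rw [swap_apply_right, hκ]
    rw [swap_apply_of_ne_of_ne hx hy]
  adm := D.adm
  P_f j s := by
    by_cases hj : j = i
    · subst hj; simp [D.P_f]
    rw [if_neg hj, Perm.mul_apply, D.P_f]
    by_cases hx : s = x
    · subst hx; rw [swap_apply_left, hP]
    by_cases hy : s = y
    · subst hy; rw [swap_apply_right, hP]
    rw [swap_apply_of_ne_of_ne hx hy]

section Exch

variable {D : Deco Y S} {i : Bool} {x y : S} {hκ : D.κ x (!i) = D.κ y (!i)}
  {hP : (D.β x)⁻¹ • D.P x = (D.β y)⁻¹ • D.P y}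

theorem exch_f_self : (D.exch i x y hκ hP).f i = D.f i := by simp [exch]

theorem exch_f_not : (D.exch i x y hκ hP).f (!i) = D.f (!i) * swap x y := by simp [exch]

theorem exch_nt_self {s : S} : (D.exch i x y hκ hP).NT i s ↔ D.NT i s := by
  unfold NT
  rw [exch_f_self]
  rfl

theorem exch_nt_not {s : S} : (D.exch i x y hκ hP).NT (!i) s ↔
    ¬ Triv (D.f (!i) * swap x y) (fun x => Y.lam (!i) (D.κ s (!i)) (D.β x)) s := by
  unfold NT
  rw [exch_f_not]
  rfl

theorem exch_nt_of_not {s : S} (h1 : ¬ (D.f (!i)).SameCycle s x)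
    (h2 : ¬ (D.f (!i)).SameCycle s y) : (D.exch i x y hκ hP).NT (!i) s ↔ D.NT (!i) s := by
  rw [exch_nt_not, triv_mul_swap_of_not h1 h2]
  rfl

theorem cl_exch (j : Bool) (s : S) : (D.exch i x y hκ hP).cl j s = D.cl j s := rfl

theorem cl_eq_of_exch (hκ : D.κ x (!i) = D.κ y (!i))
    (hP : (D.β x)⁻¹ • D.P x = (D.β y)⁻¹ • D.P y) : D.cl (!i) x = D.cl (!i) y := by
  unfold cl
  rw [← Y.cls_smul _ _ _ _ (D.adm x), hP, hκ, Y.cls_smul _ _ _ _ (D.adm y)]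

theorem eq_or_eq_not (i j : Bool) : j = i ∨ j = !i := by cases i <;> cases j <;> simp

theorem Good.exch_join {O : Finset S} (hG : D.Good O) (hx : x ∈ O) (hy : y ∈ O)
    (hn : ¬ (D.f (!i)).SameCycle x y) : (D.exch i x y hκ hP).Good O := by
  have hJ := sameCycle_mul_swap hn
  have coarse : ∀ j s t, (D.f j).SameCycle s t →
      ((D.exch i x y hκ hP).f j).SameCycle s t := by
    intro j s t h
    rcases eq_or_eq_not i j with rfl | rfl
    · rwa [exch_f_self]
    rw [exch_f_not]
    by_cases h1 : (D.f (!i)).SameCycle x s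
    · exact ((sameCycle_mul_swap_left_iff hn).2 (Or.inl h1)).symm.trans
        ((sameCycle_mul_swap_left_iff hn).2 (Or.inl (h1.trans h)))
    by_cases h2 : (D.f (!i)).SameCycle y s
    · exact ((sameCycle_mul_swap_left_iff hn).2 (Or.inr h2)).symm.trans
        ((sameCycle_mul_swap_left_iff hn).2 (Or.inr (h2.trans h)))
    exact (sameCycle_mul_swap_of_not (fun e => h1 e.symm) (fun e => h2 e.symm)).2 h
  have lift : ∀ j, ∀ s ∈ O, (D.exch i x y hκ hP).NT j s → ∃ s' ∈ O, D.NT j s' ∧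
      D.κ s' j = D.κ s j ∧ D.cl j s' = D.cl j s ∧
      ((D.exch i x y hκ hP).f j).SameCycle s s' := by
    intro j s hs h
    rcases eq_or_eq_not i j with rfl | rfl
    · exact ⟨s, hs, exch_nt_self.1 h, rfl, rfl, .refl _ _⟩
    by_cases h0 : (D.f (!i) * swap x y).SameCycle s x
    · have h1 : (D.exch i x y hκ hP).NT (!i) x := h.sameCycle (by rwa [exch_f_not])
      rw [exch_nt_not] at h1
      have h2 : D.NT (!i) x ∨ D.NT (!i) y := by
        by_contra! hcon
        obtain ⟨c1, c2⟩ := hcon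
        unfold NT at c1 c2
        push Not at c1 c2
        rw [← hκ] at c2
        exact h1 (c1.join hn c2)
      rcases h2 with h2 | h2
      · have h3 : ((D.exch i x y hκ hP).f (!i)).SameCycle s x := by rwa [exch_f_not]
        exact ⟨x, hx, h2, κ_sameCycle (D.exch i x y hκ hP) h3,
          cl_sameCycle (D.exch i x y hκ hP) h3, h3⟩
      · have h3 : ((D.exch i x y hκ hP).f (!i)).SameCycle s y := by
          rw [exch_f_not]; exact h0.trans hJ
        exact ⟨y, hy, h2, κ_sameCycle (D.exch i x y hκ hP) h3,
          cl_sameCycle (D.exch i x y hκ hP) h3, h3⟩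
    · refine ⟨s, hs, (exch_nt_of_not ?_ ?_).1 h, rfl, rfl, .refl _ _⟩
      · exact fun e => h0 ((sameCycle_mul_swap_left_iff hn).2 (Or.inl e.symm)).symm
      · exact fun e => h0 ((sameCycle_mul_swap_left_iff hn).2 (Or.inr e.symm)).symm
  have notboth : ¬ (D.NT (!i) x ∧ D.NT (!i) y) := fun h =>
    hn (hG.unique _ _ x hx y hy h.1 h.2 (cl_eq_of_exch hκ hP)).2
  refine ⟨fun j k s hs t ht h1 h2 hcl => ?_, ?_, fun j s hs h => ?_⟩
  · obtain ⟨s', hs', n1, -, c1, e1⟩ := lift j s hs h1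
    obtain ⟨t', ht', n2, -, c2, e2⟩ := lift k t ht h2
    obtain ⟨rfl, e3⟩ := hG.unique j k s' hs' t' ht' n1 n2 (c1.trans (hcl.trans c2.symm))
    exact ⟨rfl, e1.trans ((coarse _ _ _ e3).trans e2.symm)⟩
  · obtain ⟨j, u, hu, hNT⟩ := hG.exists_nt
    rcases eq_or_eq_not i j with rfl | rfl
    · exact ⟨_, u, hu, exch_nt_self.2 hNT⟩
    have key : D.NT (!i) x ∨ D.NT (!i) y → (D.exch i x y hκ hP).NT (!i) x := by
      intro h
      rw [exch_nt_not]
      intro hT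
      have hns := not_sameCycle_mul_swap (q := D.f (!i) * swap x y) (x := x) (y := y)
        (by rintro rfl; exact hn (.refl _ _)) hJ
      rw [mul_swap_mul_swap] at hns
      rcases h with h | h
      · have c : Triv (D.f (!i)) (fun u => Y.lam (!i) (D.κ y (!i)) (D.β u)) y := by
          by_contra c
          exact notboth ⟨h, c⟩
        rw [← hκ] at c
        have := Triv.split (g := D.f (!i) * swap x y) (x := y) (y := x)
          (by rintro rfl; exact hn (.refl _ _)) hJ.symm (hT.sameCycle hJ)
          (by rwa [swap_comm y x, mul_swap_mul_swap])
        rw [swap_comm y x, mul_swap_mul_swap] at this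
        exact h this
      · have c : Triv (D.f (!i)) (fun u => Y.lam (!i) (D.κ x (!i)) (D.β u)) x := by
          by_contra c
          exact notboth ⟨c, h⟩
        have := Triv.split (g := D.f (!i) * swap x y) (x := x) (y := y)
          (by rintro rfl; exact hn (.refl _ _)) hJ hT (by rwa [mul_swap_mul_swap])
        rw [mul_swap_mul_swap, hκ] at this
        exact h this
    by_cases h1 : (D.f (!i)).SameCycle u x
    · exact ⟨_, x, hx, key (Or.inl (hNT.sameCycle h1))⟩
    by_cases h2 : (D.f (!i)).SameCycle u y
    · exact ⟨_, x, hx, key (Or.inr (hNT.sameCycle h2))⟩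
    exact ⟨_, u, hu, (exch_nt_of_not h1 h2).2 hNT⟩
  · obtain ⟨s', hs', n1, e, -⟩ := lift j s hs h
    exact e ▸ hG.mrg j s' hs' n1

theorem exch_comm : D.exch i x y hκ hP = D.exch i y x hκ.symm hP.symm := by
  simp [exch, swap_comm]

theorem NT.exch {j : Bool} {u : S} (h : D.NT j u) (hxy : (D.f (!i)).SameCycle x y)
    (hn : ¬ D.NT (!i) x) : (D.exch i x y hκ hP).NT j u := by
  rcases eq_or_eq_not i j with rfl | rfl
  · exact exch_nt_self.2 h
  refine (exch_nt_of_not (fun e => hn (h.sameCycle e)) fun e => hn ?_).2 h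
  exact h.sameCycle (e.trans hxy.symm)

theorem Good.exch_split_aux {O O₁ : Finset S} (hG : D.Good O) (hsub : O₁ ⊆ O) (hne : x ≠ y)
    (hy : y ∉ O₁) (hxy : (D.f (!i)).SameCycle x y)
    (hinv : Inv O₁ (D.f (!i) * swap x y)) (hm : Y.mrg (!i) (D.κ x (!i)))
    (hex : ∃ j, ∃ u ∈ O₁, (D.exch i x y hκ hP).NT j u)
    (hcase : D.NT (!i) x ∨ ¬ (D.exch i x y hκ hP).NT (!i) x ∨
      ∀ j, ∀ s ∈ O₁, D.NT j s → D.cl j s ≠ D.cl (!i) x) :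
    (D.exch i x y hκ hP).Good O₁ := by
  have hn := not_sameCycle_mul_swap hne hxy
  have hiff := fun u => sameCycle_mul_swap_left_iff hn (u := u)
  simp only [mul_swap_mul_swap] at hiff
  have big : ∀ u ∈ O₁, (D.f (!i)).SameCycle x u → (D.f (!i) * swap x y).SameCycle x u := by
    intro u hu h
    refine ((hiff u).1 h).resolve_right fun h' => hy ?_
    exact hinv.mem h'.symm hu
  have fine : ∀ j, ∀ s ∈ O₁, ∀ t ∈ O₁, (D.f j).SameCycle s t →
      ((D.exch i x y hκ hP).f j).SameCycle s t := by
    intro j s hs t ht h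
    rcases eq_or_eq_not i j with rfl | rfl
    · rwa [exch_f_self]
    rw [exch_f_not]
    by_cases h1 : (D.f (!i)).SameCycle x s
    · exact (big s hs h1).symm.trans (big t ht (h1.trans h))
    · exact (sameCycle_mul_swap_of_not (fun e => h1 e.symm)
        fun e => h1 (hxy.trans e.symm)).2 h
  have lift : ∀ j, ∀ s ∈ O₁, (D.exch i x y hκ hP).NT j s → D.NT j s ∨
      (j = !i ∧ ((D.exch i x y hκ hP).f (!i)).SameCycle x s ∧
        (D.exch i x y hκ hP).NT (!i) x ∧
        ∀ k, ∀ t ∈ O₁, D.NT k t → D.cl k t ≠ D.cl (!i) x) := by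
    intro j s hs h
    rcases eq_or_eq_not i j with rfl | rfl
    · exact Or.inl (exch_nt_self.1 h)
    by_cases h1 : (D.f (!i)).SameCycle x s
    · have h2 := big s hs h1
      rw [← exch_f_not (hκ := hκ) (hP := hP)] at h2
      rcases hcase with h3 | h3 | h3
      · exact Or.inl (h3.sameCycle h1)
      · exact absurd (h.sameCycle h2.symm) h3
      · exact Or.inr ⟨rfl, h2, h.sameCycle h2.symm, h3⟩
    · exact Or.inl ((exch_nt_of_not (fun e => h1 e.symm)
        fun e => h1 (hxy.trans e.symm)).1 h)
  refine ⟨fun j k s hs t ht h1 h2 hcl => ?_, hex, fun j s hs h => ?_⟩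
  · rw [cl_exch, cl_exch] at hcl
    rcases lift j s hs h1 with h1 | ⟨rfl, h1, h1', h1''⟩ <;>
      rcases lift k t ht h2 with h2 | ⟨rfl, h2, h2', h2''⟩
    · obtain ⟨rfl, e⟩ := hG.unique j k s (hsub hs) t (hsub ht) h1 h2 hcl
      exact ⟨rfl, fine j s hs t ht e⟩
    · have := cl_sameCycle (D.exch i x y hκ hP) h2
      exact absurd (hcl.trans this) (h2'' j s hs h1)
    · have := cl_sameCycle (D.exch i x y hκ hP) h1
      exact absurd (hcl.symm.trans this) (h1'' k t ht h2)
    · exact ⟨rfl, h1.symm.trans h2⟩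
  · rcases lift j s hs h with h | ⟨rfl, h1, -⟩
    · exact hG.mrg j s (hsub hs) h
    · rw [κ_sameCycle (D.exch i x y hκ hP) h1]
      exact hm

theorem Good.exch_split {O O₁ O₂ : Finset S} (hG : D.Good O) (hne : x ≠ y) (hx : x ∈ O₁)
    (hy : y ∈ O₂) (hd : Disjoint O₁ O₂) (hO : O₁ ∪ O₂ = O)
    (hxy : (D.f (!i)).SameCycle x y) (h₁ : Inv O₁ (D.f (!i) * swap x y))
    (h₂ : Inv O₂ (D.f (!i) * swap x y)) (hi : Inv O₁ (D.f i))
    (hm : Y.mrg (!i) (D.κ x (!i))) :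
    (D.exch i x y hκ hP).Good O₁ ∨ (D.exch i x y hκ hP).Good O₂ := by
  have hs₁ : O₁ ⊆ O := hO ▸ Finset.subset_union_left
  have hs₂ : O₂ ⊆ O := hO ▸ Finset.subset_union_right
  have hy₁ : y ∉ O₁ := fun h => Finset.disjoint_left.1 hd h hy
  have hx₂ : x ∉ O₂ := fun h => Finset.disjoint_left.1 hd hx h
  have hcomm : D.exch i x y hκ hP = D.exch i y x hκ.symm hP.symm := exch_comm
  have case₁ := fun hex hc => hG.exch_split_aux (hκ := hκ) (hP := hP) hs₁ hne hy₁ hxy h₁ hm hex hc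
  have case₂ := fun hex hc => hG.exch_split_aux (hκ := hκ.symm) (hP := hP.symm) hs₂ hne.symm hx₂
    hxy.symm (by rwa [swap_comm]) (hκ ▸ hm) hex hc
  rw [← hcomm] at case₂
  by_cases hold : D.NT (!i) x
  · by_cases n1 : (D.exch i x y hκ hP).NT (!i) x
    · exact Or.inl (case₁ ⟨_, x, hx, n1⟩ (Or.inl hold))
    by_cases n2 : (D.exch i x y hκ hP).NT (!i) y
    · exact Or.inr (case₂ ⟨_, y, hy, n2⟩ (Or.inl (hold.sameCycle hxy)))
    rw [exch_nt_not, not_not] at n1 n2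
    rw [← hκ] at n2
    have := n1.join (not_sameCycle_mul_swap hne hxy) n2
    rw [mul_swap_mul_swap] at this
    exact absurd this hold
  by_cases n1 : (D.exch i x y hκ hP).NT (!i) x
  · have n2 : (D.exch i x y hκ hP).NT (!i) y := by
      by_contra n2
      rw [exch_nt_not] at n1
      rw [exch_nt_not, not_not, ← hκ, swap_comm] at n2
      unfold NT at hold
      rw [not_not] at hold
      refine n1 ?_
      rw [swap_comm]
      exact (hold.sameCycle hxy).split hne.symm hxy.symm n2
    by_cases hcl : ∃ j, ∃ s ∈ O₁, D.NT j s ∧ D.cl j s = D.cl (!i) x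
    · obtain ⟨j, s, hs, hNT, hcl⟩ := hcl
      refine Or.inr (case₂ ⟨_, y, hy, n2⟩ (Or.inr (Or.inr fun k t ht h hc => ?_)))
      rw [cl_sameCycle D hxy, ← hcl] at hc
      obtain ⟨rfl, e⟩ := hG.unique j k s (hs₁ hs) t (hs₂ ht) hNT h hc.symm
      refine Finset.disjoint_left.1 hd ?_ ht
      rcases eq_or_eq_not i j with rfl | rfl
      · exact hi.mem e hs
      · refine h₁.mem ((sameCycle_mul_swap_of_not ?_ ?_).2 e) hs
        · exact fun e => hold (hNT.sameCycle e)
        · exact fun e => hold (hNT.sameCycle (e.trans hxy.symm))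
    · push Not at hcl
      exact Or.inl (case₁ ⟨_, x, hx, n1⟩ (Or.inr (Or.inr hcl)))
  · have n2 : ¬ (D.exch i x y hκ hP).NT (!i) y := by
      intro n2
      rw [exch_nt_not, not_not] at n1
      rw [exch_nt_not, ← hκ] at n2
      unfold NT at hold
      rw [not_not] at hold
      exact n2 (hold.split hne hxy n1)
    obtain ⟨j, u, hu, hNT⟩ := hG.exists_nt
    rw [← hO, Finset.mem_union] at hu
    rcases hu with hu | hu
    · exact Or.inl (case₁ ⟨j, u, hu, hNT.exch hxy hold⟩ (Or.inr (Or.inl n1)))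
    · exact Or.inr (case₂ ⟨j, u, hu, hNT.exch hxy hold⟩ (Or.inr (Or.inl n2)))

end Exch

theorem planar_iff (D : Deco Y S) (O : Finset S) (i : Bool) :
    Planar O (D.f i) (D.f (!i)) ↔ Planar O (D.f false) (D.f true) := by
  cases i
  · rfl
  · exact ⟨Planar.symm, Planar.symm⟩

theorem exists_good_of_bigon (D : Deco Y S) {O : Finset S}
    (hP : Planar O (D.f false) (D.f true)) (hG : D.Good O) {s t : S} (hs : s ∈ O) (hst : s ≠ t)
    (h : ∀ i, D.f i s = t) :
    ∃ (D' : Deco Y S) (O' : Finset S), O'.card < O.card ∧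
      Planar O' (D'.f false) (D'.f true) ∧ D'.Good O' := by
  have ht : t ∈ O := h false ▸ hP.inv_left s hs
  have hκ : D.κ t = D.κ s := by
    funext i
    rw [← h i, D.κ_f]
  have huniq : ∀ i u, D.f i u = t → u = s := fun i u hu =>
    (D.f i).injective (hu.trans (h i).symm)
  refine D.exists_good_of_kill hP hG ht
    (Function.update (Function.update D.β s (D.β s * D.β t)) t 1) ?_ ?_ ?_ (by simp) ?_
  · intro u
    by_cases hut : u = t
    · subst hut; simpa using Y.adm_one _
    by_cases hus : u = s
    · subst hus
      simpa [hut] using Y.adm_mul _ _ _ (D.adm u) (hκ ▸ D.adm t)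
    · simpa [hut, hus] using D.adm u
  · intro i u hut hu
    have hus : u ≠ s := by rintro rfl; exact hu (h i)
    simp [hut, hus]
  · intro i u hut hu
    obtain rfl := huniq i u hu
    simp [hut]
  · intro i hi
    exact absurd (huniq i t hi).symm hst

/-- A decoration is irreducible when it has no trivial side and no two consecutive sides can be
merged. -/
structure Irreducible (D : Deco Y S) (O : Finset S) : Prop where
  ne_one : ∀ s ∈ O, D.β s ≠ 1
  κ_ne : ∀ i, ∀ s ∈ O, D.f i s ≠ s → Y.mrg (!i) (D.κ s (!i)) →
    D.κ (D.f i s) (!i) ≠ D.κ s (!i)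

theorem exists_irreducible (D : Deco Y S) {O : Finset S}
    (hP : Planar O (D.f false) (D.f true)) (hG : D.Good O) :
    ∃ (D' : Deco Y S) (O' : Finset S), Planar O' (D'.f false) (D'.f true) ∧ D'.Good O' ∧
      D'.Irreducible O' := by
  induction hn : O.card using Nat.strong_induction_on generalizing D O with
  | _ n ih =>
  have step : (∃ (D' : Deco Y S) (O' : Finset S), O'.card < O.card ∧
      Planar O' (D'.f false) (D'.f true) ∧ D'.Good O') → _ := fun ⟨D', O', h1, h2, h3⟩ =>
    ih _ (hn ▸ h1) D' h2 h3 rfl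
  have hinv : ∀ i, Inv O (D.f i) := fun i => by
    cases i
    exacts [hP.inv_left, hP.inv_right]
  by_cases h1 : ∃ s ∈ O, D.β s = 1
  · obtain ⟨t, ht, h1⟩ := h1
    exact step (D.exists_good_of_kill hP hG ht D.β D.adm (fun _ _ _ _ => rfl)
      (fun _ _ _ _ => by rw [h1, mul_one]) h1 fun _ _ => h1)
  push Not at h1
  by_cases h2 : ∃ i, ∃ s ∈ O, D.f i s ≠ s ∧ Y.mrg (!i) (D.κ s (!i)) ∧
      D.κ (D.f i s) (!i) = D.κ s (!i)
  swap
  · push Not at h2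
    exact ⟨D, O, hP, hG, h1, h2⟩
  obtain ⟨i, s, hs, hne, hm, hκ⟩ := h2
  set t := D.f i s with ht
  obtain ⟨w, hw⟩ := (D.f (!i)).surjective t
  have hwO : w ∈ O := (hinv (!i)).apply_mem_iff.1 (hw ▸ hinv i s hs)
  by_cases hsw : s = w
  · refine step (D.exists_good_of_bigon hP hG hs hne.symm fun j => ?_)
    rcases eq_or_eq_not i j with rfl | rfl
    exacts [rfl, hsw ▸ hw]
  have hκ' : D.κ s (!i) = D.κ w (!i) := by rw [← hκ, ← hw, D.κ_f]
  have hP' : (D.β s)⁻¹ • D.P s = (D.β w)⁻¹ • D.P w := by rw [← D.P_f i, ← D.P_f (!i), hw]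
  have hcorner : ((D.f i)⁻¹ * D.f (!i)).SameCycle s w := by
    have : ((D.f i)⁻¹ * D.f (!i)) w = s := by
      rw [Perm.mul_apply, hw, Perm.inv_eq_iff_eq]
    rw [← this]
    exact sameCycle_apply_left.2 (.refl _ _)
  have hPi := (D.planar_iff O i).2 hP
  rcases hPi.split_corner hs hwO hsw hcorner with ⟨hn', hpl⟩ |
      ⟨hsc, O₁, O₂, hs₁, hw₂, hd, hO, hp₁, hp₂⟩
  · have hG' := hG.exch_join (hκ := hκ') (hP := hP') hs hwO hn'
    refine step ((D.exch i s w hκ' hP').exists_good_of_bigon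
      (((D.exch i s w hκ' hP').planar_iff O i).1 ?_) hG' hs hne.symm fun j => ?_)
    · rwa [exch_f_self, exch_f_not]
    · rcases eq_or_eq_not i j with rfl | rfl
      · rw [exch_f_self]
      · rw [exch_f_not, Perm.mul_apply, swap_apply_left, hw]
  · have key : ∀ C, C ⊆ O → (∃ z ∈ O, z ∉ C) → Planar C (D.f i) (D.f (!i) * swap s w) →
        (D.exch i s w hκ' hP').Good C → ∃ (D' : Deco Y S) (O' : Finset S), O'.card < O.card ∧
      Planar O' (D'.f false) (D'.f true) ∧ D'.Good O' := by
      rintro C hC ⟨z, hz, hzC⟩ hpl hgood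
      refine ⟨D.exch i s w hκ' hP', C, Finset.card_lt_card ⟨hC, fun h => hzC (h hz)⟩,
        ((D.exch i s w hκ' hP').planar_iff C i).1 ?_, hgood⟩
      rwa [exch_f_self, exch_f_not]
    rcases hG.exch_split (hκ := hκ') (hP := hP') hsw hs₁ hw₂ hd hO hsc hp₁.inv_right
      hp₂.inv_right hp₁.inv_left hm with hgood | hgood
    · exact step (key O₁ (hO ▸ Finset.subset_union_left)
        ⟨w, hwO, fun h => Finset.disjoint_left.1 hd h hw₂⟩ hp₁ hgood)
    · exact step (key O₂ (hO ▸ Finset.subset_union_right)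
        ⟨s, hs, fun h => Finset.disjoint_left.1 hd hs₁ h⟩ hp₂ hgood)

end Deco

end Hypermap

namespace Dihedral

open Matrix

/-- The upper unipotent matrix with parameter `x`. -/
def up (x : ℝ) : SpecialLinearGroup (Fin 2) ℝ := ⟨!![1, x; 0, 1], by simp⟩

/-- The lower unipotent matrix with parameter `-x`. -/
def low (x : ℝ) : SpecialLinearGroup (Fin 2) ℝ := ⟨!![1, 0; -x, 1], by simp⟩

/-- The rotation by a right angle. -/
def rot : SpecialLinearGroup (Fin 2) ℝ := ⟨!![0, 1; -1, 0], by simp⟩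

theorem coe_up (x : ℝ) : (up x : Matrix (Fin 2) (Fin 2) ℝ) = !![1, x; 0, 1] := rfl

theorem coe_low (x : ℝ) : (low x : Matrix (Fin 2) (Fin 2) ℝ) = !![1, 0; -x, 1] := rfl

theorem coe_rot : (rot : Matrix (Fin 2) (Fin 2) ℝ) = !![0, 1; -1, 0] := rfl

theorem up_add (x y : ℝ) : up (x + y) = up x * up y := by
  ext i j
  fin_cases i <;> fin_cases j <;> simp [coe_up, add_comm]

theorem low_add (x y : ℝ) : low (x + y) = low x * low y := by
  ext i j
  fin_cases i <;> fin_cases j <;> simp [coe_low, add_comm]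

theorem up_zpow (x : ℝ) (n : ℤ) : up x ^ n = up (n * x) := by
  let f : Multiplicative ℝ →* SpecialLinearGroup (Fin 2) ℝ :=
    MonoidHom.mk' (fun x => up x.toAdd) fun _ _ => up_add _ _
  have := map_zpow f (Multiplicative.ofAdd x) n
  rw [← ofAdd_zsmul] at this
  simpa [f] using this.symm

theorem low_zpow (x : ℝ) (n : ℤ) : low x ^ n = low (n * x) := by
  let f : Multiplicative ℝ →* SpecialLinearGroup (Fin 2) ℝ :=
    MonoidHom.mk' (fun x => low x.toAdd) fun _ _ => low_add _ _
  have := map_zpow f (Multiplicative.ofAdd x) n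
  rw [← ofAdd_zsmul] at this
  simpa [f] using this.symm

theorem rot_mul_up (x : ℝ) : rot * up x = low x * rot := by
  ext i j
  fin_cases i <;> fin_cases j <;> simp [coe_up, coe_low, coe_rot]

theorem rot_mul_low (x : ℝ) : rot * low x = up x * rot := by
  ext i j
  fin_cases i <;> fin_cases j <;> simp [coe_up, coe_low, coe_rot]

theorem rot_mul_altProd (x : ℝ) (k : ℕ) :
    rot * altProd k (up x) (low x) = altProd k (low x) (up x) * rot ∧
    rot * altProd k (low x) (up x) = altProd k (up x) (low x) * rot := by
  induction k with
  | zero => simp [altProd]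
  | succ k ih =>
    constructor
    · rw [altProd, altProd, ← mul_assoc, rot_mul_up, mul_assoc, ih.2, mul_assoc]
    · rw [altProd, altProd, ← mul_assoc, rot_mul_low, mul_assoc, ih.1, mul_assoc]

theorem altProd_mul_rot_pow (x : ℝ) (k : ℕ) :
    altProd k (up x) (low x) * rot ^ k = (up x * rot) ^ k := by
  induction k with
  | zero => simp [altProd]
  | succ k ih =>
    rw [altProd, pow_succ', pow_succ', ← ih]
    simp only [mul_assoc]
    rw [← mul_assoc rot, (rot_mul_altProd x k).1, mul_assoc]

/-- The numbers `sin (k * π / m) / sin (π / m)`. -/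
noncomputable def cheb (m k : ℕ) : ℝ := Real.sin (k * (Real.pi / m)) / Real.sin (Real.pi / m)

/-- The number `2 * cos (π / m)`. -/
noncomputable def lam (m : ℕ) : ℝ := 2 * Real.cos (Real.pi / m)

section

variable {m : ℕ}

theorem sin_pos (hm : 2 ≤ m) : 0 < Real.sin (Real.pi / m) := by
  have h2 : (2 : ℝ) ≤ m := by exact_mod_cast hm
  apply Real.sin_pos_of_pos_of_lt_pi
  · positivity
  · rw [div_lt_iff₀ (by positivity)]
    nlinarith [Real.pi_pos]

theorem cheb_zero (m : ℕ) : cheb m 0 = 0 := by simp [cheb]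

theorem cheb_one (hm : 2 ≤ m) : cheb m 1 = 1 := by
  simp [cheb, (sin_pos hm).ne']

theorem cheb_add_two (m k : ℕ) : cheb m (k + 2) = lam m * cheb m (k + 1) - cheb m k := by
  unfold cheb lam
  rw [← mul_div_assoc (2 * _), ← sub_div]
  congr 1
  set θ := Real.pi / m
  have e1 : ((k + 2 : ℕ) : ℝ) * θ = (k + 1 : ℕ) * θ + θ := by push_cast; ring
  have e2 : (k : ℝ) * θ = (k + 1 : ℕ) * θ - θ := by push_cast; ring
  rw [e1, e2, Real.sin_add, Real.sin_sub]
  ring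

theorem cheb_pos (hm : 2 ≤ m) {k : ℕ} (hk : 0 < k) (hkm : k < m) : 0 < cheb m k := by
  have h0 : (0 : ℝ) < m := by exact_mod_cast (by omega : 0 < m)
  have h1 : (0 : ℝ) < k := by exact_mod_cast hk
  have h2 : (k : ℝ) < m := by exact_mod_cast hkm
  refine div_pos (Real.sin_pos_of_pos_of_lt_pi ?_ ?_) (sin_pos hm)
  · positivity
  · rw [mul_div_assoc', div_lt_iff₀ h0, mul_comm]
    exact mul_lt_mul_of_pos_left h2 Real.pi_pos

theorem cheb_self (hm : 2 ≤ m) : cheb m m = 0 := by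
  have h0 : (m : ℝ) ≠ 0 := by exact_mod_cast (by omega : m ≠ 0)
  simp [cheb, mul_div_cancel₀ _ h0]

theorem cheb_self_sub_one (hm : 2 ≤ m) : cheb m (m - 1) = 1 := by
  have h0 : (m : ℝ) ≠ 0 := by exact_mod_cast (by omega : m ≠ 0)
  have : ((m - 1 : ℕ) : ℝ) * (Real.pi / m) = Real.pi - Real.pi / m := by
    rw [Nat.cast_sub (by omega)]
    field_simp
    push_cast; ring
  rw [cheb, this, Real.sin_pi_sub, div_self (sin_pos hm).ne']

theorem cheb_self_add_one (hm : 2 ≤ m) : cheb m (m + 1) = -1 := by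
  obtain ⟨k, rfl⟩ : ∃ k, m = k + 1 := ⟨m - 1, by omega⟩
  have := cheb_self_sub_one hm
  rw [Nat.add_sub_cancel] at this
  rw [cheb_add_two, cheb_self hm, this]
  ring

theorem lam_ge_one (hm : 3 ≤ m) : 1 ≤ lam m := by
  have h3 : (3 : ℝ) ≤ m := by exact_mod_cast hm
  have : Real.cos (Real.pi / 3) ≤ Real.cos (Real.pi / m) := by
    apply Real.cos_le_cos_of_nonneg_of_le_pi
    · positivity
    · linarith [Real.pi_pos]
    · exact div_le_div_of_nonneg_left Real.pi_pos.le (by norm_num) h3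
  rw [Real.cos_pi_div_three] at this
  unfold lam
  linarith

theorem up_mul_rot_pow (hm : 2 ≤ m) (k : ℕ) :
    ((up (lam m) : Matrix (Fin 2) (Fin 2) ℝ) * (rot : Matrix (Fin 2) (Fin 2) ℝ)) ^ (k + 1) =
    (-1 : ℝ) ^ (k + 1) • !![cheb m (k + 2), -cheb m (k + 1); cheb m (k + 1), -cheb m k] := by
  induction k with
  | zero =>
    ext i j
    fin_cases i <;> fin_cases j <;>
      simp [coe_up, coe_rot, cheb_add_two m 0, cheb_zero,
        cheb_one hm]
  | succ k ih =>
    rw [pow_succ, ih, cheb_add_two m (k + 1)]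
    have e := cheb_add_two m k
    ext i j
    fin_cases i <;> fin_cases j <;>
      simp [coe_up, coe_rot, pow_succ] <;> (try rw [e]) <;> ring

theorem up_mul_rot_pow_self (hm : 2 ≤ m) :
    ((up (lam m) * rot) ^ m = 1 ∨ (up (lam m) * rot) ^ m = -1) := by
  obtain ⟨k, rfl⟩ : ∃ k, m = k + 1 := ⟨m - 1, by omega⟩
  have h := up_mul_rot_pow hm k
  have hc : (((up (lam (k + 1)) * rot) ^ (k + 1) : SpecialLinearGroup (Fin 2) ℝ) :
      Matrix (Fin 2) (Fin 2) ℝ) =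
        (up (lam (k + 1)) * rot : Matrix (Fin 2) (Fin 2) ℝ) ^ (k + 1) := by
    simp
  rw [← hc] at h
  have h1 := cheb_self_sub_one hm
  rw [Nat.add_sub_cancel] at h1
  rw [h1, cheb_self hm, cheb_self_add_one hm] at h
  rcases neg_one_pow_eq_or ℝ (k + 1) with hs | hs <;> rw [hs] at h
  · right
    ext i j
    rw [h]
    fin_cases i <;> fin_cases j <;> simp
  · left
    ext i j
    rw [h]
    fin_cases i <;> fin_cases j <;> simp

theorem altProd_eq_of_commute {x : ℝ} {k : ℕ} (h : Commute rot ((up x * rot) ^ k)) :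
    altProd k (up x) (low x) = altProd k (low x) (up x) := by
  have h1 := (rot_mul_altProd x k).1
  have h2 := altProd_mul_rot_pow x k
  have h3 : altProd k (up x) (low x) = (up x * rot) ^ k * (rot ^ k)⁻¹ := by rw [← h2]; group
  have h4 : Commute rot (altProd k (up x) (low x)) := by
    rw [h3]
    exact h.mul_right ((Commute.refl rot).pow_right k).inv_right
  rw [h4.eq] at h1
  exact mul_right_cancel h1

theorem altProd_up_low (hm : 2 ≤ m) :
    altProd m (up (lam m)) (low (lam m)) = altProd m (low (lam m)) (up (lam m)) := by
  apply altProd_eq_of_commute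
  rcases up_mul_rot_pow_self hm with h | h <;> rw [h]
  · exact Commute.one_right _
  · exact (Commute.neg_one_right _)

theorem altProd_sq (hm : 2 ≤ m) :
    altProd m (up (lam m)) (low (lam m)) ^ 2 = 1 ∨
      altProd m (up (lam m)) (low (lam m)) ^ 2 = -1 := by
  have h2 := altProd_mul_rot_pow (lam m) m
  have h3 : altProd m (up (lam m)) (low (lam m)) = (up (lam m) * rot) ^ m * (rot ^ m)⁻¹ := by
    rw [← h2]; group
  have hr : rot ^ 2 = -1 := by
    ext i j
    fin_cases i <;> fin_cases j <;> simp [coe_rot, sq]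
  have hr' : (rot ^ m) ^ 2 = 1 ∨ (rot ^ m) ^ 2 = -1 := by
    rw [← pow_mul, mul_comm, pow_mul, hr]
    exact neg_one_pow_eq_or _ _
  have hc : Commute ((up (lam m) * rot) ^ m) ((rot ^ m)⁻¹) := by
    rcases up_mul_rot_pow_self hm with h | h <;> rw [h]
    · exact Commute.one_left _
    · exact Commute.neg_one_left _
  have hs : ((up (lam m) * rot) ^ m) ^ 2 = 1 := by
    rcases up_mul_rot_pow_self hm with h | h <;> rw [h] <;> simp
  rw [h3, hc.mul_pow, hs, one_mul, inv_pow]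
  rcases hr' with h | h <;> rw [h]
  · simp
  · right
    rw [inv_eq_iff_mul_eq_one]
    simp

end

theorem ratio_step {l r σ τ u₀ u₁ u₂ : ℝ} {n : ℤ} (hl : 0 ≤ l) (hσ : σ = 1 ∨ σ = -1)
    (hτ : τ = 1 ∨ τ = -1) (hn : 1 ≤ τ * n) (h₀ : 0 < u₀) (h₁ : 0 < u₁) (hu : u₂ = l * u₁ - u₀) :
    (u₁ ≤ σ * r * u₀ → u₂ ≤ τ * (l * n - 1 / r) * u₁) ∧
    (u₁ < σ * r * u₀ → u₂ < τ * (l * n - 1 / r) * u₁) := by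
  have hln : l ≤ l * (τ * n) := le_mul_of_one_le_right hl hn
  have key : ∀ {c : ℝ}, 0 < c → σ * r = c → -(1 / c) ≤ -(τ * (1 / r)) := by
    intro c hc hrc
    have : 1 / r = σ * (1 / c) := by
      rw [← hrc]
      rcases hσ with rfl | rfl
      · simp
      · simp
    rw [this]
    have hc' : 0 < 1 / c := by positivity
    rcases hσ with rfl | rfl <;> rcases hτ with rfl | rfl <;> linarith
  have hexp : τ * (l * n - 1 / r) * u₁ = l * (τ * n) * u₁ - (τ * (1 / r)) * u₁ := by ring
  constructor
  · intro h
    have hc : 0 < σ * r := by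
      by_contra hneg
      nlinarith
    have hk := key hc rfl
    have : 1 / (σ * r) * u₁ ≤ u₀ := by
      rw [one_div_mul_eq_div, div_le_iff₀ hc]; linarith
    rw [hexp, hu]
    nlinarith
  · intro h
    have hc : 0 < σ * r := by
      by_contra hneg
      nlinarith
    have hk := key hc rfl
    have : 1 / (σ * r) * u₁ < u₀ := by
      rw [one_div_mul_eq_div, div_lt_iff₀ hc]; linarith
    rw [hexp, hu]
    nlinarith

/-- The continuant associated to a sequence of exponents. -/
noncomputable def cont (l : ℝ) (n : ℕ → ℤ) : ℕ → ℝ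
  | 0 => 0
  | 1 => 1
  | t + 2 => l * n t * cont l n (t + 1) - cont l n t

theorem cont_ne_zero {m : ℕ} (hm : 3 ≤ m) {n : ℕ → ℤ} (hn : ∀ t, n t ≠ 0)
    (hs : n (m - 3) * n (m - 2) < 0) {t : ℕ} (h1 : 1 ≤ t) (ht : t ≤ 2 * m - 2) :
    cont (lam m) n t ≠ 0 := by
  have hm2 : 2 ≤ m := by omega
  set Y := cont (lam m) n with hY
  set σ : ℕ → ℝ := fun t => ((n t).sign : ℤ) with hσdef
  have hl : 1 ≤ lam m := lam_ge_one hm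
  have hσ : ∀ t, σ t = 1 ∨ σ t = -1 := by
    intro t
    rcases lt_or_gt_of_ne (hn t) with h | h
    · right; simp [hσdef, Int.sign_eq_neg_one_of_neg h]
    · left; simp [hσdef, Int.sign_eq_one_of_pos h]
  have hσn : ∀ t, 1 ≤ σ t * n t := by
    intro t
    have : 1 ≤ (n t).sign * n t := by
      rw [Int.sign_mul_self_eq_abs]; exact Int.one_le_abs (hn t)
    simp only [hσdef]
    exact_mod_cast this
  have hrec : ∀ t, Y (t + 1) ≠ 0 →
      Y (t + 2) / Y (t + 1) = lam m * n t - 1 / (Y (t + 1) / Y t) := by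
    intro t h
    have : Y (t + 2) = lam m * n t * Y (t + 1) - Y t := rfl
    rw [this, one_div_div, sub_div, mul_div_cancel_right₀ _ h]
  have hl' : 0 ≤ lam m := by linarith
  have phase1 : ∀ k, k + 3 ≤ m → Y (k + 1) ≠ 0 ∧
      cheb m (k + 2) ≤ σ k * (Y (k + 2) / Y (k + 1)) * cheb m (k + 1) := by
    intro k
    induction k with
    | zero =>
      intro _
      have h0 : Y 1 = 1 := rfl
      have h2 : Y 2 = lam m * n 0 := by
        change lam m * n 0 * 1 - 0 = _; ring
      refine ⟨by rw [h0]; exact one_ne_zero, ?_⟩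
      rw [h2, h0, cheb_one hm2, cheb_add_two, cheb_zero, cheb_one hm2]
      nlinarith [hσn 0]
    | succ k ih =>
      intro hk
      obtain ⟨h1, h2⟩ := ih (by omega)
      have p1 := cheb_pos hm2 (k := k + 1) (by omega) (by omega)
      have p2 := cheb_pos hm2 (k := k + 2) (by omega) (by omega)
      have hne : Y (k + 2) ≠ 0 := by
        intro h0
        rw [h0] at h2
        simp at h2
        linarith
      refine ⟨hne, ?_⟩
      rw [hrec (k + 1) hne]
      exact (ratio_step hl' (hσ k) (hσ (k + 1)) (hσn (k + 1)) p1 p2 (cheb_add_two m (k + 1))).1 h2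
  have phase2 : ∀ k, k + 2 ≤ m → Y (m - 2 + k + 1) ≠ 0 ∧
      cheb m (k + 2) < σ (m - 2 + k) * (Y (m - 2 + k + 2) / Y (m - 2 + k + 1)) *
        cheb m (k + 1) := by
    intro k
    induction k with
    | zero =>
      intro _
      obtain ⟨c, rfl⟩ : ∃ c, m = c + 3 := ⟨m - 3, by omega⟩
      obtain ⟨h1, h2⟩ := phase1 c le_rfl
      have e : c + 3 - 2 = c + 1 := by omega
      have e3 : c + 3 - 3 = c := by omega
      rw [e, e3] at hs
      rw [e]
      have p1 := cheb_pos hm2 (k := c + 1) (by omega) (by omega)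
      have p2 := cheb_pos hm2 (k := c + 2) (by omega) (by omega)
      have hne : Y (c + 2) ≠ 0 := by
        intro h0
        rw [h0] at h2
        simp at h2
        linarith
      refine ⟨hne, ?_⟩
      simp only [add_zero, zero_add]
      rw [cheb_one hm2, cheb_add_two, cheb_zero, cheb_one hm2, hrec (c + 1) hne]
      have hopp : σ (c + 1) = - σ c := by
        rcases lt_or_gt_of_ne (hn c) with h | h
        · have : 0 < n (c + 1) := by nlinarith
          simp [hσdef, Int.sign_eq_neg_one_of_neg h, Int.sign_eq_one_of_pos this]
        · have : n (c + 1) < 0 := by nlinarith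
          simp [hσdef, Int.sign_eq_neg_one_of_neg this, Int.sign_eq_one_of_pos h]
      have hpos : 0 < σ c * (Y (c + 2) / Y (c + 1)) := by
        by_contra hneg
        nlinarith
      have hpos' : 0 < σ c * (1 / (Y (c + 2) / Y (c + 1))) := by
        rcases hσ c with h | h <;> rw [h] at hpos ⊢
        · rw [one_mul] at hpos ⊢
          exact one_div_pos.2 hpos
        · have : 0 < -(Y (c + 2) / Y (c + 1)) := by linarith
          have := one_div_pos.2 this
          rw [one_div_neg_eq_neg_one_div] at this
          linarith
      have := le_mul_of_one_le_right hl' (hσn (c + 1))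
      rw [hopp] at this ⊢
      linear_combination this + hpos'
    | succ k ih =>
      intro hk
      obtain ⟨h1, h2⟩ := ih (by omega)
      have p1 := cheb_pos hm2 (k := k + 1) (by omega) (by omega)
      have p2 := cheb_pos hm2 (k := k + 2) (by omega) (by omega)
      have hne : Y (m - 2 + k + 2) ≠ 0 := by
        intro h0
        rw [h0] at h2
        simp at h2
        linarith
      refine ⟨hne, ?_⟩
      have := hrec (m - 2 + k + 1) hne
      have e : m - 2 + (k + 1) = m - 2 + k + 1 := by omega
      rw [e, this]
      exact (ratio_step hl' (hσ (m - 2 + k)) (hσ (m - 2 + k + 1)) (hσn (m - 2 + k + 1)) p1 p2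
        (cheb_add_two m (k + 1))).2 h2
  by_cases h : t + 2 ≤ m
  · obtain ⟨c, rfl⟩ : ∃ c, t = c + 1 := ⟨t - 1, by omega⟩
    exact (phase1 c (by omega)).1
  by_cases h' : t ≤ 2 * m - 3
  · obtain ⟨c, rfl⟩ : ∃ c, t = m - 2 + c + 1 := ⟨t - (m - 2) - 1, by omega⟩
    exact (phase2 c (by omega)).1
  · obtain rfl : t = m - 2 + (m - 2) + 2 := by omega
    have := (phase2 (m - 2) (by omega)).2
    rw [Nat.sub_add_cancel hm2, cheb_self hm2] at this
    intro h0
    rw [h0] at this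
    simp at this

end Dihedral

theorem map_altProd {G H F : Type*} [Monoid G] [Monoid H] [FunLike F G H] [MonoidHomClass F G H]
    (f : F) (n : ℕ) (x y : G) : f (altProd n x y) = altProd n (f x) (f y) := by
  induction n generalizing x y with
  | zero => simp [altProd]
  | succ n ih => simp [altProd, ih]

theorem altProd_self {G : Type*} [Monoid G] (n : ℕ) (x : G) : altProd n x x = x ^ n := by
  induction n with
  | zero => simp [altProd]
  | succ n ih => rw [altProd, ih, pow_succ']

namespace ArtinGroup

variable {V : Type*} {Γ : LabeledGraph V} {G : Type*} [Group G]

/-- The homomorphism out of an Artin group determined by images of the generators. -/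
def lift (φ : V → G) (h : ∀ a b, Γ.graph.Adj a b →
    altProd (Γ.label a b) (φ a) (φ b) = altProd (Γ.label a b) (φ b) (φ a)) :
    ArtinGroup Γ →* G :=
  PresentedGroup.toGroup (f := φ) (by
    rintro _ ⟨a, b, hab, rfl⟩
    rw [map_mul, map_inv, map_altProd, map_altProd, FreeGroup.lift_apply_of,
      FreeGroup.lift_apply_of, h a b hab, mul_inv_cancel])

@[simp]
theorem lift_artinGen (φ : V → G) (h) (v : V) : lift (Γ := Γ) φ h (artinGen Γ v) = φ v :=
  PresentedGroup.toGroup.of _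

/-- The exponent sum. -/
def length (Γ : LabeledGraph V) : ArtinGroup Γ →* Multiplicative ℤ :=
  lift (fun _ => Multiplicative.ofAdd 1) fun _ _ _ => rfl

@[simp]
theorem length_artinGen (v : V) : length Γ (artinGen Γ v) = Multiplicative.ofAdd 1 :=
  lift_artinGen _ _ v

end ArtinGroup

namespace LabeledGraph

variable {V : Type*} (Γ : LabeledGraph V)

/-- The label of an edge. -/
def edgeLabel : Sym2 V → ℕ := Sym2.lift ⟨Γ.label, Γ.label_symm⟩

@[simp]
theorem edgeLabel_mk (a b : V) : Γ.edgeLabel s(a, b) = Γ.label a b := rfl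

/-- The labeled graph on the same vertices whose only edge is `e`. -/
def edgeGraph (e : Sym2 V) : LabeledGraph V where
  graph :=
    { Adj := fun a b => Γ.graph.Adj a b ∧ s(a, b) = e
      symm := ⟨fun a b h => ⟨h.1.symm, by rw [Sym2.eq_swap]; exact h.2⟩⟩
      loopless := ⟨fun a h => Γ.graph.loopless.irrefl a h.1⟩ }
  label := Γ.label
  label_symm := Γ.label_symm
  two_le_label := fun _ _ h => Γ.two_le_label h.1

/-- The homomorphism out of the Artin group of the edge `s(a, b)` determined by the images of `a`
and `b`. -/
noncomputable def edgeLift {G : Type*} [Group G] {e : Sym2 V} {a b : V} (he : e = s(a, b)) (x y : G)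
    (h : altProd (Γ.edgeLabel e) x y = altProd (Γ.edgeLabel e) y x) :
    ArtinGroup (Γ.edgeGraph e) →* G :=
  open Classical in
  ArtinGroup.lift (fun v => if v = a then x else if v = b then y else 1) (by
    subst he
    rintro c d ⟨hcd, hs⟩
    have hne := hcd.ne
    rw [edgeLabel_mk] at h
    change altProd (Γ.label c d) _ _ = altProd (Γ.label c d) _ _
    rcases Sym2.eq_iff.1 hs with ⟨rfl, rfl⟩ | ⟨rfl, rfl⟩
    · simpa [hne.symm] using h
    · rw [Γ.label_symm] at h
      simpa [hne] using h.symm)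

section

variable {Γ} {G : Type*} [Group G] {e : Sym2 V} {a b : V} (he : e = s(a, b)) {x y : G}
  (h : altProd (Γ.edgeLabel e) x y = altProd (Γ.edgeLabel e) y x)

theorem edgeLift_left : Γ.edgeLift he x y h (artinGen _ a) = x := by
  simp [edgeLift]

theorem edgeLift_right (hab : a ≠ b) : Γ.edgeLift he x y h (artinGen _ b) = y := by
  simp [edgeLift, hab.symm]

end

end LabeledGraph

namespace Dihedral

open LabeledGraph

variable {V : Type*} {Γ : LabeledGraph V} {e : Sym2 V} {a b : V}

/-- The two-dimensional representation of the Artin group of an edge. -/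
noncomputable def rep (Γ : LabeledGraph V) (he : e = s(a, b)) (hab : Γ.graph.Adj a b) :
    ArtinGroup (Γ.edgeGraph e) →* Matrix.SpecialLinearGroup (Fin 2) ℝ :=
  Γ.edgeLift he (up (lam (Γ.edgeLabel e))) (low (lam (Γ.edgeLabel e)))
    (altProd_up_low (by rw [he]; exact Γ.two_le_label hab))

theorem rep_left (he : e = s(a, b)) (hab : Γ.graph.Adj a b) :
    rep Γ he hab (artinGen _ a) = up (lam (Γ.edgeLabel e)) :=
  edgeLift_left he _

theorem rep_right (he : e = s(a, b)) (hab : Γ.graph.Adj a b) :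
    rep Γ he hab (artinGen _ b) = low (lam (Γ.edgeLabel e)) :=
  edgeLift_right he _ hab.ne

theorem row_eq (l : ℝ) {n : ℕ → ℤ} {R : ℕ → Matrix.SpecialLinearGroup (Fin 2) ℝ}
    (h0 : R 0 = 1) (he : ∀ h, R (2 * h + 1) = R (2 * h) * up l ^ n (2 * h))
    (ho : ∀ h, R (2 * h + 2) = R (2 * h + 1) * low l ^ n (2 * h + 1)) (h : ℕ) :
    (R (2 * h) : Matrix (Fin 2) (Fin 2) ℝ) 0 0 = (-1) ^ h * cont l n (2 * h + 1) ∧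
    (R (2 * h) : Matrix (Fin 2) (Fin 2) ℝ) 0 1 = -(-1) ^ h * cont l n (2 * h) := by
  induction h with
  | zero => simp [h0, cont]
  | succ h ih =>
    have e1 : cont l n (2 * (h + 1)) = l * n (2 * h) * cont l n (2 * h + 1) -
      cont l n (2 * h) := rfl
    have e2 : cont l n (2 * (h + 1) + 1) =
        l * n (2 * h + 1) * cont l n (2 * (h + 1)) - cont l n (2 * h + 1) := rfl
    have e3 : 2 * (h + 1) = 2 * h + 2 := rfl
    rw [e2, e1, e3, ho, he, up_zpow, low_zpow]
    constructor <;>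
      simp [coe_up, coe_low, Matrix.mul_apply, Fin.sum_univ_two, ih.1, ih.2, pow_succ] <;> ring

theorem two_mul_label_le_of_sign (he : e = s(a, b)) (hab : Γ.graph.Adj a b)
    (hl : 3 ≤ Γ.edgeLabel e) {n : ℕ → ℤ} {Q : ℕ → ArtinGroup (Γ.edgeGraph e)} {h : ℕ} (hh : 0 < h)
    (hn : ∀ t, n t ≠ 0) (hs : n (Γ.edgeLabel e - 3) * n (Γ.edgeLabel e - 2) < 0)
    (hQe : ∀ h, Q (2 * h + 1) = Q (2 * h) * artinGen _ a ^ n (2 * h))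
    (hQo : ∀ h, Q (2 * h + 2) = Q (2 * h + 1) * artinGen _ b ^ n (2 * h + 1))
    (hQ : Q (2 * h) = Q 0) : Γ.edgeLabel e ≤ h := by
  by_contra hlt
  have := (row_eq (lam (Γ.edgeLabel e)) (n := n) (R := fun t => rep Γ he hab ((Q 0)⁻¹ * Q t))
    (by simp) (fun h => by simp [hQe, rep_left, mul_assoc])
    (fun h => by simp [hQo, rep_right, mul_assoc]) h).2
  rw [hQ] at this
  have h1 := cont_ne_zero hl hn hs (t := 2 * h) (by omega) (by omega)
  simp at this
  exact h1 this

theorem alternates {v : ℕ → V} (hv : ∀ t, v t = a ∨ v t = b) (hv' : ∀ t, v (t + 1) ≠ v t) (h : ℕ) :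
    v (2 * h) = v 0 ∧ v (2 * h + 1) = v 1 := by
  have h2 : ∀ t, v (t + 2) = v t := by
    intro t
    have h0 := hv' t
    have h1 := hv' (t + 1)
    rw [show t + 1 + 1 = t + 2 from rfl] at h1
    rcases hv t with e0 | e0 <;> rcases hv (t + 1) with e1 | e1 <;>
      rcases hv (t + 2) with e2 | e2 <;> rw [e0, e1] at h0 <;> rw [e1, e2] at h1 <;> simp_all
  induction h with
  | zero => simp
  | succ h ih =>
    exact ⟨by rw [mul_add]; exact (h2 _).trans ih.1,
      by rw [mul_add, add_right_comm]; exact (h2 _).trans ih.2⟩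

/-- A closed path in the Artin group of an edge of label `m` has at least `2 * m` syllables. -/
theorem two_mul_label_le (he : e = s(a, b)) (hab : Γ.graph.Adj a b) {v : ℕ → V} {n : ℕ → ℤ}
    {Q : ℕ → ArtinGroup (Γ.edgeGraph e)} {T : ℕ} (hT : 0 < T) (hv : ∀ t, v t ∈ e)
    (hv' : ∀ t, v (t + 1) ≠ v t) (hn : ∀ t, n t ≠ 0) (hvT : Function.Periodic v T)
    (hnT : Function.Periodic n T) (hQT : Function.Periodic Q T)
    (hQ : ∀ t, Q (t + 1) = Q t * artinGen _ (v t) ^ n t) : 2 * Γ.edgeLabel e ≤ T := by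
  have hm2 : 2 ≤ Γ.edgeLabel e := by rw [he]; exact Γ.two_le_label hab
  have hmem : ∀ t, v t = a ∨ v t = b := by
    intro t
    have := hv t
    rwa [he, Sym2.mem_iff] at this
  obtain ⟨h, rfl⟩ : ∃ h, T = 2 * h := by
    rcases Nat.even_or_odd' T with ⟨h, hh | hh⟩
    · exact ⟨h, hh⟩
    · exfalso
      have h1 := (alternates hmem hv' h).2
      have h2 := hvT 0
      rw [zero_add, hh, h1] at h2
      exact hv' 0 h2
  have pair : ∀ c, e = s(v c, v (c + 1)) ∧ Γ.graph.Adj (v c) (v (c + 1)) := by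
    intro c
    have := hv' c
    rcases hmem c with h0 | h0 <;> rcases hmem (c + 1) with h1 | h1 <;> rw [h0, h1] at this ⊢
    · exact absurd rfl this
    · exact ⟨he, hab⟩
    · exact ⟨he.trans Sym2.eq_swap, hab.symm⟩
    · exact absurd rfl this
  rcases hm2.eq_or_lt with hm | hm
  · rw [← hm]
    by_contra hlt
    obtain rfl : h = 1 := by omega
    obtain ⟨he', -⟩ := pair 0
    have e2 := hQT 0
    have := hQ 1
    rw [show 1 + 1 = 0 + 2 * 1 from rfl, e2, show 1 = 0 + 1 from rfl, hQ 0, mul_assoc,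
      left_eq_mul] at this
    let φ : ArtinGroup (Γ.edgeGraph e) →* Multiplicative ℤ :=
      Γ.edgeLift he' (Multiplicative.ofAdd 1) 1 (by rw [← hm]; simp [altProd])
    have h3 := congrArg φ this
    rw [map_mul, map_zpow, map_zpow, map_one, edgeLift_left, edgeLift_right _ _ (hv' 0).symm,
      one_zpow, mul_one, ← ofAdd_zsmul, ofAdd_eq_one, smul_eq_mul, mul_one] at h3
    exact hn 0 h3
  · obtain ⟨t₀, ht₀⟩ : ∃ t, n t * n (t + 1) < 0 := by
      by_contra! hpos
      have hpos' : ∀ t, 0 < n t * n 0 := by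
        intro t
        induction t with
        | zero => exact mul_self_pos.2 (hn 0)
        | succ t ih =>
          have h1 := lt_of_le_of_ne (hpos t) (mul_ne_zero (hn t) (hn (t + 1))).symm
          rcases lt_or_gt_of_ne (hn t) with h2 | h2
          · exact mul_pos_of_neg_of_neg (neg_of_mul_pos_right h1 h2.le)
              (neg_of_mul_pos_right ih h2.le)
          · exact mul_pos (pos_of_mul_pos_right h1 h2.le) (pos_of_mul_pos_right ih h2.le)
      have hsum : ∀ t, ArtinGroup.length _ (Q t) = ArtinGroup.length _ (Q 0) *
          Multiplicative.ofAdd (∑ i ∈ Finset.range t, n i) := by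
        intro t
        induction t with
        | zero => simp
        | succ t ih =>
          rw [hQ, map_mul, ih, map_zpow, ArtinGroup.length_artinGen, ← ofAdd_zsmul, mul_assoc,
            ← ofAdd_add, Finset.sum_range_succ, smul_eq_mul, mul_one]
      have h1 := hsum (2 * h)
      have h2 := hQT 0
      rw [zero_add] at h2
      rw [h2, left_eq_mul, ofAdd_eq_one] at h1
      have h3 : 0 < (∑ i ∈ Finset.range (2 * h), n i) * n 0 := by
        rw [Finset.sum_mul]
        exact Finset.sum_pos (fun i _ => hpos' i) (Finset.nonempty_range_iff.2 hT.ne')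
      rw [h1, zero_mul] at h3
      exact lt_irrefl _ h3
    set m := Γ.edgeLabel e with hmdef
    have hTm : m ≤ m * (2 * h) := Nat.le_mul_of_pos_right _ hT
    have hnp := hnT.nat_mul m
    simp only [Nat.cast_id] at hnp
    set c := t₀ + m * (2 * h) - (m - 3) with hc
    obtain ⟨he', hab'⟩ := pair c
    have halt := alternates (v := fun t => v (c + t)) (fun t => hmem _) (fun t => hv' _)
    have key := two_mul_label_le_of_sign (h := h) he' hab' hm (n := fun t => n (c + t))
      (Q := fun t => Q (c + t)) (by omega) (fun t => hn _) (by
        have e1 : c + (Γ.edgeLabel e - 3) = t₀ + m * (2 * h) := by omega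
        have e2 : c + (Γ.edgeLabel e - 2) = t₀ + 1 + m * (2 * h) := by omega
        rw [e1, e2, hnp, hnp]
        exact ht₀)
      (fun k => by
        have h1 := (halt k).1
        simp only [add_zero] at h1
        rw [← h1]
        exact hQ _)
      (fun k => by
        have h1 := (halt k).2
        rw [← h1]
        exact hQ _)
      (hQT c)
    omega

theorem eq_zero_of_gen_zpow (he : e = s(a, b)) (hab : Γ.graph.Adj a b)
    (hl : 3 ≤ Γ.edgeLabel e) {v : V} (hv : v ∈ e) {p : ArtinGroup (Γ.edgeGraph e)} {n j : ℤ}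
    (h : p⁻¹ * artinGen _ v ^ n * p =
      (altProd (Γ.edgeLabel e) (artinGen _ a) (artinGen _ b) ^ 2) ^ j) :
    n = 0 := by
  have hm : 2 ≤ Γ.edgeLabel e := by omega
  have hlam := lam_ge_one hl
  have h1 := congrArg (rep Γ he hab) h
  rw [map_zpow, map_pow, map_altProd, rep_left, rep_right] at h1
  have h2 : ∃ δ : Matrix.SpecialLinearGroup (Fin 2) ℝ, (δ = 1 ∨ δ = -1) ∧
      rep Γ he hab (p⁻¹ * artinGen _ v ^ n * p) = δ := by
    refine ⟨_, ?_, h1⟩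
    rcases altProd_sq hm with h | h <;> rw [h]
    · simp
    · rcases Int.even_or_odd j with hj | hj
      · left; exact hj.neg_one_zpow
      · right; exact hj.neg_one_zpow
  obtain ⟨δ, hδ, h3⟩ := h2
  have h4 : rep Γ he hab (artinGen _ v) ^ n = δ := by
    have : rep Γ he hab (artinGen _ v ^ n) =
        rep Γ he hab p * δ * (rep Γ he hab p)⁻¹ := by
      rw [← h3]; simp [mul_assoc]
    rw [map_zpow] at this
    rw [this]
    rcases hδ with rfl | rfl <;> simp
  have h5 : ∀ i j, i ≠ j → (δ : Matrix (Fin 2) (Fin 2) ℝ) i j = 0 := by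
    intro i j hij
    rcases hδ with rfl | rfl <;> simp [hij]
  have h6 : (n : ℝ) * lam (Γ.edgeLabel e) = 0 := by
    rw [he, Sym2.mem_iff] at hv
    rcases hv with rfl | rfl
    · rw [rep_left, up_zpow] at h4
      rw [← h4] at h5
      simpa [coe_up] using h5 0 1 (by simp)
    · rw [rep_right, low_zpow] at h4
      rw [← h4] at h5
      simpa [coe_low] using h5 1 0 (by simp)
  rcases mul_eq_zero.1 h6 with h | h
  · exact_mod_cast h
  · linarith

end Dihedral

namespace Hypermap

open Equiv
open Equiv.Perm hiding Disjoint

variable {S : Type*} [Fintype S]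

theorem sum_inv_card_cycleFinset {O : Finset S} {p : Perm S} (hO : Inv O p) :
    ∑ s ∈ O, (1 : ℚ) / (cycleFinset p s).card = cyc O p := by
  classical
  rw [cyc_def, Finset.card_eq_sum_ones, Nat.cast_sum,
    ← Finset.sum_fiberwise_of_maps_to (fun s hs => Finset.mem_image_of_mem (cycleFinset p) hs)]
  refine Finset.sum_congr rfl fun c hc => ?_
  obtain ⟨s, hs, rfl⟩ := Finset.mem_image.1 hc
  have hfib : O.filter (fun t => cycleFinset p t = cycleFinset p s) = cycleFinset p s := by
    ext t
    rw [Finset.mem_filter, cycleFinset_eq_iff, mem_cycleFinset]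
    exact ⟨fun h => h.2.symm, fun h => ⟨hO.mem h hs, h.symm⟩⟩
  have hpos : ((cycleFinset p s).card : ℚ) ≠ 0 := by
    rw [Nat.cast_ne_zero]
    exact (Finset.card_pos.2 ⟨s, mem_cycleFinset.2 (.refl _ _)⟩).ne'
  rw [Finset.sum_congr rfl (g := fun _ => (1 : ℚ) / (cycleFinset p s).card), hfib,
    Finset.sum_const, nsmul_eq_mul]
  · field_simp
    simp
  · intro t ht
    rw [(Finset.mem_filter.1 ht).2]

theorem exists_period (p : Perm S) (s : S) :
    ∃ T, 0 < T ∧ (p ^ T) s = s ∧ T ≤ (cycleFinset p s).card := by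
  have hmem : s ∈ Function.periodicPts p := p.injective.mem_periodicPts s
  refine ⟨Function.minimalPeriod p s, Function.minimalPeriod_pos_of_mem_periodicPts hmem, ?_, ?_⟩
  · rw [← Perm.iterate_eq_pow]
    exact Function.isPeriodicPt_minimalPeriod p s
  · rw [← Finset.card_range (Function.minimalPeriod p s)]
    refine Finset.card_le_card_of_injOn (fun t => p^[t] s) (fun t _ => ?_) ?_
    · rw [Finset.mem_coe, mem_cycleFinset]
      exact ⟨t, by simp [Perm.iterate_eq_pow]⟩
    · rw [Finset.coe_range]
      exact Function.iterate_injOn_Iio_minimalPeriod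

theorem two_le_card_cycleFinset {p : Perm S} {s : S} (h : p s ≠ s) :
    2 ≤ (cycleFinset p s).card := by
  classical
  rw [← Finset.card_pair h]
  refine Finset.card_le_card fun t ht => ?_
  rw [mem_cycleFinset]
  simp only [Finset.mem_insert, Finset.mem_singleton] at ht
  rcases ht with rfl | rfl
  exacts [sameCycle_apply_right.2 (.refl _ _), .refl _ _]

theorem three_le_card_cycleFinset {p : Perm S} {s : S} (h1 : p s ≠ s) (h2 : p (p s) ≠ s) :
    3 ≤ (cycleFinset p s).card := by
  classical
  have : ({s, p s, p (p s)} : Finset S).card = 3 := by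
    rw [Finset.card_eq_three]
    exact ⟨s, p s, p (p s), h1.symm, h2.symm, fun h => h1 (p.injective h).symm, rfl⟩
  rw [← this]
  refine Finset.card_le_card fun t ht => ?_
  rw [mem_cycleFinset]
  simp only [Finset.mem_insert, Finset.mem_singleton] at ht
  rcases ht with rfl | rfl | rfl <;> simp [SameCycle.refl]

theorem four_le_card_cycleFinset {p : Perm S} {s : S} (h1 : p s ≠ s) (h2 : p (p s) ≠ s)
    (h3 : p (p (p s)) ≠ s) : 4 ≤ (cycleFinset p s).card := by
  classical
  have : ({s, p s, p (p s), p (p (p s))} : Finset S).card = 4 := by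
    rw [Finset.card_eq_succ]
    refine ⟨s, {p s, p (p s), p (p (p s))}, ?_, rfl, ?_⟩
    · simp [h1.symm, h2.symm, h3.symm]
    · rw [Finset.card_eq_three]
      refine ⟨_, _, _, fun h => h1 (p.injective h).symm, fun h => h2 (p.injective h).symm,
        fun h => h1 (p.injective (p.injective h)).symm, rfl⟩
  rw [← this]
  refine Finset.card_le_card fun t ht => ?_
  rw [mem_cycleFinset]
  simp only [Finset.mem_insert, Finset.mem_singleton] at ht
  rcases ht with rfl | rfl | rfl | rfl <;> simp [SameCycle.refl]

theorem sum_comp_perm {O : Finset S} {q : Perm S} (hO : Inv O q) (t : S → ℚ) :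
    ∑ s ∈ O, t (q s) = ∑ s ∈ O, t s :=
  Finset.sum_equiv q (fun _ => hO.apply_mem_iff.symm) fun _ _ => rfl

/-- The corner estimate. -/
theorem sum_corner_le {O : Finset S} {q : Perm S} (hO : Inv O q) {w : S → ℚ}
    (hw : ∀ s ∈ O, w s ≤ 1 / 2) (h1 : ∀ s ∈ O, q s ≠ s) (h2 : ∀ s ∈ O, q (q s) ≠ s)
    (h3 : ∀ s ∈ O, q (q (q s)) = s → w s + w (q s) + w (q (q s)) ≤ 1) :
    ∑ s ∈ O, (2 / (cycleFinset q s).card - (1 - w s)) ≤ 0 := by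
  set t : S → ℚ := fun s => 2 / (cycleFinset q s).card - (1 - w s) with ht
  have hper : ∀ s, cycleFinset q (q s) = cycleFinset q s := fun s =>
    cycleFinset_eq_iff.2 (sameCycle_apply_left.2 (.refl _ _))
  have hle : ∀ s ∈ O, t s + t (q s) + t (q (q s)) ≤ 0 := by
    intro s hs
    simp only [ht, hper]
    have b1 := hw s hs
    have b2 := hw _ (hO s hs)
    have b3 := hw _ (hO _ (hO s hs))
    by_cases h : q (q (q s)) = s
    · have h3' : (3 : ℚ) ≤ (cycleFinset q s).card := by
        exact_mod_cast three_le_card_cycleFinset (h1 s hs) (h2 s hs)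
      have : (2 : ℚ) / (cycleFinset q s).card ≤ 2 / 3 := by gcongr
      linarith [h3 s hs h]
    · have h4' : (4 : ℚ) ≤ (cycleFinset q s).card := by
        exact_mod_cast four_le_card_cycleFinset (h1 s hs) (h2 s hs) h
      have : (2 : ℚ) / (cycleFinset q s).card ≤ 2 / 4 := by gcongr
      linarith
  have hsum := Finset.sum_nonpos hle
  rw [Finset.sum_add_distrib, Finset.sum_add_distrib, sum_comp_perm hO (fun s => t (q s)),
    sum_comp_perm hO t] at hsum
  linarith

variable [DecidableEq S]

/-- A planar hypermap cannot have at most two exceptional vertices if all its other vertices and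
all its corners are nonpositively curved. -/
theorem Planar.false_of_curvature {O : Finset S} {f : Bool → Perm S}
    (hP : Planar O (f false) (f true)) {w : Bool → S → ℚ} {N : Bool → S → Prop}
    {cl : Bool → S → Bool} (hw : ∀ i, ∀ s ∈ O, 0 < w i s)
    (hN : ∀ i s t, N i s → (f i).SameCycle s t → N i t)
    (hu : ∀ i j, ∀ s ∈ O, ∀ t ∈ O, N i s → N j t → cl i s = cl j t →
      i = j ∧ (f i).SameCycle s t)
    (hv : ∀ i, ∀ s ∈ O, ¬ N i s → 2 / (cycleFinset (f i) s).card ≤ w i s)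
    (hc : ∑ s ∈ O, (2 / (cycleFinset ((f false)⁻¹ * f true) s).card -
      (2 - w false s - w true s)) ≤ 0) : False := by
  classical
  have hinv : ∀ i, Inv O (f i) := fun i => by
    cases i
    exacts [hP.inv_left, hP.inv_right]
  set M : Bool → Finset S := fun i => O.filter (N i) with hM
  have hMinv : ∀ i, Inv (M i) (f i) := by
    intro i s hs
    rw [hM, Finset.mem_filter] at hs ⊢
    exact ⟨hinv i s hs.1, hN i _ _ hs.2 (sameCycle_apply_right.2 (.refl _ _))⟩
  have two : ∀ (O : Finset S) (p : Perm S), Inv O p →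
      ∑ s ∈ O, (2 : ℚ) / (cycleFinset p s).card = 2 * cyc O p := by
    intro O p h
    rw [← sum_inv_card_cycleFinset h, Finset.mul_sum]
    exact Finset.sum_congr rfl fun _ _ => by ring
  have hvert : ∀ i, 2 * (cyc O (f i) : ℚ) - ∑ s ∈ O, w i s ≤
      2 * cyc (M i) (f i) - ∑ s ∈ M i, w i s := by
    intro i
    rw [← two _ _ (hinv i), ← two _ _ (hMinv i), ← Finset.sum_sub_distrib,
      ← Finset.sum_sub_distrib]
    rw [← Finset.sum_filter_add_sum_filter_not O (N i), add_le_iff_nonpos_right]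
    refine Finset.sum_nonpos fun s hs => ?_
    rw [Finset.mem_filter] at hs
    linarith [hv i s hs.1 hs.2]
  have hcount : ∀ i, cyc (M i) (f i) ≤ ((M i).image (cl i)).card := by
    intro i
    rw [cyc_def, ← Finset.card_image_of_injOn (s := (M i).image (cycleFinset (f i)))
      (f := fun c => if h : ∃ s ∈ M i, cycleFinset (f i) s = c then cl i h.choose else false)]
    · refine Finset.card_le_card fun b hb => ?_
      obtain ⟨c, hc, rfl⟩ := Finset.mem_image.1 hb
      have h := Finset.mem_image.1 hc
      rw [dif_pos h]
      exact Finset.mem_image_of_mem _ h.choose_spec.1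
    · intro c hc c' hc' hcc
      have h := Finset.mem_image.1 hc
      have h' := Finset.mem_image.1 hc'
      simp only [dif_pos h, dif_pos h'] at hcc
      have m := Finset.mem_filter.1 h.choose_spec.1
      have m' := Finset.mem_filter.1 h'.choose_spec.1
      rw [← h.choose_spec.2, ← h'.choose_spec.2, cycleFinset_eq_iff]
      exact (hu i i _ m.1 _ m'.1 m.2 m'.2 hcc).2
  have hdisj : Disjoint ((M false).image (cl false)) ((M true).image (cl true)) := by
    rw [Finset.disjoint_left]
    intro b hb hb'
    obtain ⟨s, hs, rfl⟩ := Finset.mem_image.1 hb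
    obtain ⟨t, ht, hst⟩ := Finset.mem_image.1 hb'
    have m := Finset.mem_filter.1 hs
    have m' := Finset.mem_filter.1 ht
    exact Bool.false_ne_true (hu _ _ s m.1 t m'.1 m.2 m'.2 hst.symm).1
  have htot : cyc (M false) (f false) + cyc (M true) (f true) ≤ 2 := by
    have := (Finset.card_le_univ (((M false).image (cl false)) ∪ ((M true).image (cl true))))
    rw [Finset.card_union_of_disjoint hdisj, Fintype.card_bool] at this
    linarith [hcount false, hcount true]
  have hcnt := hP.count
  rw [Finset.sum_sub_distrib, two _ _ ((hinv false).inv.mul (hinv true)), Finset.sum_sub_distrib,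
    Finset.sum_sub_distrib, Finset.sum_const, nsmul_eq_mul] at hc
  have hf := hvert false
  have ht := hvert true
  have hcntq : (cyc O (f false) : ℚ) + cyc O (f true) + cyc O ((f false)⁻¹ * f true) =
      O.card + 2 := by exact_mod_cast hcnt
  have htotq : (cyc (M false) (f false) : ℚ) + cyc (M true) (f true) ≤ 2 := by exact_mod_cast htot
  have hpos : ∀ i, 0 ≤ ∑ s ∈ M i, w i s := fun i =>
    Finset.sum_nonneg fun s hs => (hw i s (Finset.mem_filter.1 hs).1).le
  have hpos' : ∀ i, (M i).Nonempty → 0 < ∑ s ∈ M i, w i s := fun i h =>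
    Finset.sum_pos (fun s hs => hw i s (Finset.mem_filter.1 hs).1) h
  have hemp : ∀ i, ¬ (M i).Nonempty → cyc (M i) (f i) = 0 := fun i h => by
    rw [Finset.not_nonempty_iff_eq_empty.1 h, cyc_def]; simp
  have p0 := hpos false
  have p1 := hpos true
  by_cases h0 : (M false).Nonempty
  · linarith [hpos' _ h0]
  by_cases h1 : (M true).Nonempty
  · linarith [hpos' _ h1]
  rw [hemp _ h0] at hf
  rw [hemp _ h1] at ht
  push_cast at hf ht
  linarith

end Hypermap

namespace ArtinSystem

open Hypermap LabeledGraph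

universe u

variable {V : Type u} (Γ : LabeledGraph V)

/-- Cosets of the cyclic subgroup generated by `z`. -/
def Pos (z : ArtinGroup Γ) := ArtinGroup Γ ⧸ Subgroup.zpowers z

/-- The coset of `g`. -/
def Pos.mk (z g : ArtinGroup Γ) : Pos Γ z := QuotientGroup.mk g

noncomputable instance (z : ArtinGroup Γ) : MulAction (FreeGroup V) (Pos Γ z) :=
  MulAction.compHom (ArtinGroup Γ ⧸ Subgroup.zpowers z) (PresentedGroup.mk Γ.artinRels)

variable {Γ} in
theorem Pos.mk_eq_iff {z g h : ArtinGroup Γ} :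
    Pos.mk Γ z g = Pos.mk Γ z h ↔ ∃ j : ℤ, z ^ j = g⁻¹ * h :=
  QuotientGroup.eq.trans Subgroup.mem_zpowers_iff

variable {Γ} in
theorem Pos.smul_mk (z g : ArtinGroup Γ) (b : FreeGroup V) :
    b • Pos.mk Γ z g = Pos.mk Γ z (PresentedGroup.mk Γ.artinRels b * g) := rfl

/-- The kinds of vertices: the outer vertex and the edges of `Γ` for the colour `false`, the
vertices of `Γ` for the colour `true`. -/
def Kind (V : Type u) : Bool → Type u
  | false => Option (Sym2 V)
  | true => V

/-- The group in which the vertices of a given kind are evaluated. -/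
def VertexGroup : ∀ i, Kind V i → Type u
  | false, none => FreeGroup V
  | false, some e => ArtinGroup (Γ.edgeGraph e)
  | true, _ => FreeGroup V

instance : ∀ i k, Group (VertexGroup Γ i k)
  | false, none => inferInstanceAs (Group (FreeGroup V))
  | false, some e => inferInstanceAs (Group (ArtinGroup (Γ.edgeGraph e)))
  | true, _ => inferInstanceAs (Group (FreeGroup V))

/-- The evaluation homomorphisms. -/
def vertexHom : ∀ i k, FreeGroup V →* VertexGroup Γ i k
  | false, none => MonoidHom.id (FreeGroup V)
  | false, some e => PresentedGroup.mk (Γ.edgeGraph e).artinRels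
  | true, _ => MonoidHom.id (FreeGroup V)

/-- The edge, if any, of a pair of kinds. -/
def edgeOf (k : ∀ i, Kind V i) : Option (Sym2 V) := k false

/-- The vertex of a pair of kinds. -/
def vertexOf (k : ∀ i, Kind V i) : V := k true

/-- A side carries a power of the generator of its vertex, which lies on its edge. -/
def Adm (k : ∀ i, Kind V i) (b : FreeGroup V) : Prop :=
  (∃ n : ℤ, b = FreeGroup.of (vertexOf k) ^ n) ∧
    (b ≠ 1 → ∀ e, edgeOf k = some e → e ∈ Γ.graph.edgeSet ∧ vertexOf k ∈ e)

/-- The standard subgroup of an edge. -/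
def edgeSub (e : Sym2 V) : Subgroup (ArtinGroup Γ) := standardSubgroup Γ {v | v ∈ e}

theorem artinGen_mem_edgeSub {e : Sym2 V} {v : V} (h : v ∈ e) : artinGen Γ v ∈ edgeSub Γ e :=
  Subgroup.subset_closure ⟨v, h, rfl⟩

/-- The class of a vertex: whether it has kind `e₁` and lies in the orbit of the base coset. -/
def IsHome (e₁ : Sym2 V) (z : ArtinGroup Γ) : ∀ i, Kind V i → Pos Γ z → Prop
  | false, k, x => k = some e₁ ∧ ∃ p ∈ edgeSub Γ e₁, x = Pos.mk Γ z p
  | true, _, _ => False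

open Classical in
/-- The local system of an Artin group. -/
noncomputable def system (e₁ : Sym2 V) (z : ArtinGroup Γ) :
    LocalSystem (FreeGroup V) (Pos Γ z) where
  K := Kind V
  L := VertexGroup Γ
  group := inferInstance
  lam := vertexHom Γ
  Adm := Adm Γ
  adm_one := fun k => ⟨⟨0, (zpow_zero _).symm⟩, fun h => absurd rfl h⟩
  adm_mul := by
    rintro k b c ⟨⟨m, hm⟩, hb⟩ ⟨⟨n, hn⟩, hc⟩
    refine ⟨⟨m + n, by rw [hm, hn, zpow_add]⟩, fun h => ?_⟩
    by_cases hb1 : b = 1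
    · exact hc (by rintro rfl; simp [hb1] at h)
    · exact hb hb1
  mrg := fun i k => match i, k with
    | false, k => (k : Option (Sym2 V)) ≠ none
    | true, _ => True
  cls := fun i k x => decide (IsHome Γ e₁ z i k x)
  cls_smul := by
    rintro i k b x ⟨⟨n, hn⟩, hb⟩
    by_cases hb1 : b = 1
    · rw [hb1, inv_one, one_smul]
    rw [decide_eq_decide]
    cases i with
    | true => exact Iff.rfl
    | false =>
      refine and_congr_right fun hk => ?_
      have hmem : PresentedGroup.mk Γ.artinRels b ∈ edgeSub Γ e₁ := by
        rw [hn, map_zpow]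
        exact zpow_mem (artinGen_mem_edgeSub Γ (hb hb1 e₁ hk).2) n
      constructor
      · rintro ⟨p, hp, h⟩
        refine ⟨_, mul_mem hmem hp, ?_⟩
        rw [← Pos.smul_mk, ← h, smul_inv_smul]
      · rintro ⟨p, hp, rfl⟩
        refine ⟨_, mul_mem (inv_mem hmem) hp, ?_⟩
        rw [Pos.smul_mk, map_inv]

end ArtinSystem

theorem Hypermap.Triv.exists_walk {S L : Type*} [Fintype S] [Group L] {g : Equiv.Perm S} {b : S → L}
    {s : S} (h : Triv g b s) : ∃ T, 0 < T ∧ T ≤ (cycleFinset g s).card ∧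
      (∀ t, (g ^ (t + T)) s = (g ^ t) s) ∧
      ∃ Q : ℕ → L, Function.Periodic Q T ∧ ∀ t, Q (t + 1) = Q t * b ((g ^ t) s) := by
  obtain ⟨Q, hQ⟩ := h
  obtain ⟨T, h1, h2, h3⟩ := exists_period g s
  have hp : ∀ t, (g ^ (t + T)) s = (g ^ t) s := fun t => by
    rw [pow_add, Equiv.Perm.mul_apply, h2]
  refine ⟨T, h1, h3, hp, fun t => Q ((g ^ t) s), fun t => congrArg Q (hp t), fun t => ?_⟩
  change Q ((g ^ (t + 1)) s) = _
  rw [← hQ _ ⟨t, by simp⟩, pow_succ', Equiv.Perm.mul_apply]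

namespace FreeGroup

variable {V : Type*}

/-- A nonempty alternating product of powers of generators is nontrivial in a free group. -/
theorem ne_of_alternating {v : ℕ → V} {n : ℕ → ℤ} {Q : ℕ → FreeGroup V} {T : ℕ} (hT : 0 < T)
    (hv : ∀ t, v (t + 1) ≠ v t) (hn : ∀ t, n t ≠ 0)
    (hQ : ∀ t, Q (t + 1) = Q t * of (v t) ^ n t) : Q T ≠ Q 0 := by
  classical
  intro h
  let φ : FreeGroup V →* Monoid.CoprodI fun _ : V => Multiplicative ℤ :=
    lift fun v => Monoid.CoprodI.of (i := v) (Multiplicative.ofAdd 1)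
  let w : Monoid.CoprodI.Word fun _ : V => Multiplicative ℤ :=
    { toList := (List.range T).map fun t => ⟨v t, Multiplicative.ofAdd (n t)⟩
      ne_one := by
        intro l hl
        obtain ⟨t, -, rfl⟩ := List.mem_map.1 hl
        exact fun h => hn t (ofAdd_eq_one.1 h)
      chain_ne := by
        rw [List.isChain_iff_getElem]
        intro i hi
        simpa using (hv i).symm }
  have hφ : ∀ t, φ (Q t) = φ (Q 0) * ((List.range t).map fun t =>
      (Monoid.CoprodI.of (i := v t) (Multiplicative.ofAdd (n t)) :
        Monoid.CoprodI fun _ : V => Multiplicative ℤ)).prod := by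
    intro t
    induction t with
    | zero => simp
    | succ t ih =>
      rw [hQ, _root_.map_mul, ih, List.range_succ, List.map_append, List.prod_append, mul_assoc,
        _root_.map_zpow, lift_apply_of, ← _root_.map_zpow, ← ofAdd_zsmul]
      simp
  have h1 : w.prod = 1 := by
    have := hφ T
    rw [h, left_eq_mul] at this
    rw [← this]
    simp [Monoid.CoprodI.Word.prod, w]
    rfl
  have h2 : w = Monoid.CoprodI.Word.empty :=
    Monoid.CoprodI.Word.equiv.symm.injective (by
      change w.prod = Monoid.CoprodI.Word.prod _
      rw [h1, Monoid.CoprodI.Word.prod_empty])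
  have h3 := congrArg (fun w => w.toList.length) h2
  simp [w, Monoid.CoprodI.Word.empty] at h3
  omega

end FreeGroup

namespace ArtinSystem

open Hypermap LabeledGraph

universe u

variable {V : Type u} {Γ : LabeledGraph V} {S : Type*} {g : Equiv.Perm S}
  {b : S → FreeGroup V} {s : S}

theorem triv_none_iff {k : Kind V false} (hk : k = (none : Option (Sym2 V))) :
    Triv g (fun x => vertexHom Γ false k (b x)) s ↔ Triv g b s := by
  subst hk; rfl

theorem triv_some_iff {k : Kind V false} {e : Sym2 V} (hk : k = some e) :
    Triv g (fun x => vertexHom Γ false k (b x)) s ↔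
      Triv g (fun x => PresentedGroup.mk (Γ.edgeGraph e).artinRels (b x)) s := by
  subst hk; rfl

theorem vertexHom_ne_one {b : FreeGroup V} {v : V} {n : ℤ} (hb : b = FreeGroup.of v ^ n)
    (hn : b ≠ 1) : ∀ i k, vertexHom Γ i k b ≠ 1
  | false, none => hn
  | true, _ => hn
  | false, some e => by
    intro h
    rw [hb] at h hn
    have h1 : artinGen (Γ.edgeGraph e) v ^ n = 1 := h
    have h2 := congrArg (ArtinGroup.length _) h1
    rw [map_zpow, map_one, ArtinGroup.length_artinGen, ← ofAdd_zsmul, ofAdd_eq_one, smul_eq_mul,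
      mul_one] at h2
    simp [h2] at hn

variable [Fintype S] [DecidableEq S] {e₁ : Sym2 V} {z : ArtinGroup Γ}

/-- No power of a generator of `e` is conjugate by `A_e` into the subgroup generated by `z`. -/
def Anisotropic (Γ : LabeledGraph V) (e : Sym2 V) (z : ArtinGroup Γ) : Prop :=
  ∀ p ∈ edgeSub Γ e, ∀ v ∈ e, ∀ n j : ℤ, p⁻¹ * artinGen Γ v ^ n * p = z ^ j → n = 0

section Irreducible

variable {D : Deco (system Γ e₁ z) S} {O : Finset S}

theorem exists_exponents (D : Deco (system Γ e₁ z) S) (hI : D.Irreducible O) :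
    ∃ n : S → ℤ, (∀ s, D.β s = FreeGroup.of (vertexOf (D.κ s)) ^ n s) ∧ ∀ s ∈ O, n s ≠ 0 := by
  choose n hn using fun s => (D.adm s).1
  refine ⟨n, hn, fun s hs h => hI.ne_one s hs ?_⟩
  rw [hn, h, zpow_zero]

theorem edgeOf_f (s : S) : edgeOf (D.κ (D.f false s)) = edgeOf (D.κ s) := D.κ_f false s

theorem vertexOf_f (s : S) : vertexOf (D.κ (D.f true s)) = vertexOf (D.κ s) := D.κ_f true s

theorem nt_of_fixed (hI : D.Irreducible O) {i : Bool} (hs : s ∈ O) (h : D.f i s = s) :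
    D.NT i s := by
  rintro ⟨Q, hQ⟩
  obtain ⟨n, hn, -⟩ := exists_exponents D hI
  have h1 := hQ s (.refl _ _)
  rw [h, left_eq_mul] at h1
  exact vertexHom_ne_one (hn s) (hI.ne_one s hs) i (D.κ s i) h1

theorem cl_of_fixed (hz : Anisotropic Γ e₁ z) (hI : D.Irreducible O) {i : Bool} (hs : s ∈ O)
    (h : D.f i s = s) : D.cl i s = false := by
  classical
  cases i with
  | true => exact decide_eq_false id
  | false =>
    refine decide_eq_false ?_
    rintro ⟨hk, p, hp, hP⟩
    obtain ⟨n, hn, hn'⟩ := exists_exponents D hI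
    have h1 := D.P_f false s
    rw [h, eq_inv_smul_iff, hP, Pos.smul_mk, Eq.comm, Pos.mk_eq_iff] at h1
    obtain ⟨j, hj⟩ := h1
    rw [hn, map_zpow, ← mul_assoc] at hj
    exact hn' s hs (hz p hp _ ((D.adm s).2 (hI.ne_one s hs) _ hk).2 _ _ hj.symm)

theorem fixed_unique (hz : Anisotropic Γ e₁ z) (hG : D.Good O) (hI : D.Irreducible O) {i j : Bool}
    {s t : S} (hs : s ∈ O) (ht : t ∈ O) (hi : D.f i s = s) (hj : D.f j t = t) : i = j ∧ s = t := by
  obtain ⟨h1, h2⟩ := hG.unique i j s hs t ht (nt_of_fixed hI hs hi) (nt_of_fixed hI ht hj)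
    (by rw [cl_of_fixed hz hI hs hi, cl_of_fixed hz hI ht hj])
  refine ⟨h1, ?_⟩
  have : t ∈ ({s} : Set S) := mem_of_sameCycle (by rintro _ rfl; exact hi) h2 rfl
  exact this.symm

theorem vertexOf_f_false_ne (hI : D.Irreducible O) (hs : s ∈ O) (h : D.f false s ≠ s) :
    vertexOf (D.κ (D.f false s)) ≠ vertexOf (D.κ s) :=
  hI.κ_ne false s hs h trivial

/-- A walk around a trivial vertex of colour `false`. -/
theorem exists_walk (hinv : Inv O (D.f false)) (hI : D.Irreducible O) (hs : s ∈ O)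
    (hN : ¬ D.NT false s) {n : S → ℤ} (hn : ∀ s ∈ O, n s ≠ 0) :
    ∀ t, ((D.f false) ^ t) s ∈ O ∧ n (((D.f false) ^ t) s) ≠ 0 ∧
      vertexOf (D.κ (((D.f false) ^ (t + 1)) s)) ≠ vertexOf (D.κ (((D.f false) ^ t) s)) := by
  intro t
  have hsc : (D.f false).SameCycle s (((D.f false) ^ t) s) := ⟨t, by simp⟩
  have hO := hinv.mem hsc hs
  refine ⟨hO, hn _ hO, ?_⟩
  rw [pow_succ', Equiv.Perm.mul_apply]
  exact vertexOf_f_false_ne hI hO fun hfix => hN ((nt_of_fixed hI hO hfix).sameCycle hsc.symm)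

theorem edgeOf_ne_none (hinv : Inv O (D.f false)) (hG : D.Good O) (hI : D.Irreducible O)
    (hs : s ∈ O) : edgeOf (D.κ s) ≠ none := by
  intro hk
  have hN : ¬ D.NT false s := fun h => hG.mrg false s hs h hk
  obtain ⟨n, hn, hn'⟩ := exists_exponents D hI
  have hw := exists_walk hinv hI hs hN hn'
  have hT : Triv (D.f false) D.β s := (triv_none_iff (Γ := Γ) hk).1 (not_not.1 hN)
  obtain ⟨T, hT, -, -, Q, hQT, hQ⟩ := hT.exists_walk
  refine FreeGroup.ne_of_alternating (Q := Q) (v := fun t => vertexOf (D.κ (((D.f false) ^ t) s)))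
    (n := fun t => n (((D.f false) ^ t) s)) hT (fun t => (hw t).2.2) (fun t => (hw t).2.1)
    (fun t => ?_) (by simpa using hQT 0)
  rw [hQ, hn]

theorem two_mul_label_le (hinv : Inv O (D.f false)) (hI : D.Irreducible O)
    (hs : s ∈ O) (hN : ¬ D.NT false s) {e : Sym2 V} (he : edgeOf (D.κ s) = some e) :
    2 * Γ.edgeLabel e ≤ (cycleFinset (D.f false) s).card := by
  obtain ⟨n, hn, hn'⟩ := exists_exponents D hI
  have hw := exists_walk hinv hI hs hN hn'
  obtain ⟨T, hT, hTc, hTp, Q, hQT, hQ⟩ :=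
    ((triv_some_iff (Γ := Γ) he).1 (not_not.1 hN)).exists_walk
  refine le_trans ?_ hTc
  have hadm : ∀ t, e ∈ Γ.graph.edgeSet ∧ vertexOf (D.κ (((D.f false) ^ t) s)) ∈ e := fun t =>
    (D.adm _).2 (hI.ne_one _ (hw t).1) e ((D.κ_sameCycle ⟨t, by simp⟩ : _).trans he)
  induction e using Sym2.ind with
  | _ a b =>
  refine Dihedral.two_mul_label_le (a := a) (b := b) rfl (hadm 0).1 (Q := Q)
    (v := fun t => vertexOf (D.κ (((D.f false) ^ t) s))) (n := fun t => n (((D.f false) ^ t) s))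
    hT (fun t => (hadm t).2) (fun t => (hw t).2.2) (fun t => (hw t).2.1)
    (fun t => congrArg (fun x => vertexOf (D.κ x)) (hTp t)) (fun t => congrArg n (hTp t)) hQT
    (fun t => ?_)
  rw [hQ, hn, map_zpow]
  rfl

end Irreducible

end ArtinSystem

namespace ArtinSystem

open Hypermap LabeledGraph

universe u

variable {V : Type u} {Γ : LabeledGraph V} {S : Type*} [Fintype S] [DecidableEq S] {e₁ : Sym2 V}
  {z : ArtinGroup Γ} {D : Deco (system Γ e₁ z) S} {O : Finset S} {s : S}

theorem f_corner (D : Deco (system Γ e₁ z) S) (s : S) :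
    D.f false (((D.f false)⁻¹ * D.f true) s) = D.f true s := by
  simp

theorem edgeOf_corner (D : Deco (system Γ e₁ z) S) (s : S) :
    edgeOf (D.κ (((D.f false)⁻¹ * D.f true) s)) = edgeOf (D.κ (D.f true s)) := by
  rw [← edgeOf_f (((D.f false)⁻¹ * D.f true) s), f_corner]

theorem vertexOf_corner_ne (hI : D.Irreducible O) (hs : ((D.f false)⁻¹ * D.f true) s ∈ O)
    (h : D.f false (((D.f false)⁻¹ * D.f true) s) ≠ ((D.f false)⁻¹ * D.f true) s) :
    vertexOf (D.κ (((D.f false)⁻¹ * D.f true) s)) ≠ vertexOf (D.κ s) := by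
  have := vertexOf_f_false_ne hI hs h
  rwa [f_corner, vertexOf_f, ne_comm] at this

theorem edgeOf_corner_ne (hinv : Inv O (D.f false)) (hG : D.Good O) (hI : D.Irreducible O)
    (hs : s ∈ O) (h : D.f true s ≠ s) :
    edgeOf (D.κ (((D.f false)⁻¹ * D.f true) s)) ≠ edgeOf (D.κ s) := by
  rw [edgeOf_corner]
  exact hI.κ_ne true s hs h (edgeOf_ne_none hinv hG hI hs)

theorem exists_edge_corner (hP : Planar O (D.f false) (D.f true)) (hG : D.Good O)
    (hI : D.Irreducible O) (hs : s ∈ O) :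
    ∃ e ∈ Γ.graph.edgeSet, edgeOf (D.κ (((D.f false)⁻¹ * D.f true) s)) = some e ∧
      vertexOf (D.κ s) ∈ e ∧ vertexOf (D.κ (((D.f false)⁻¹ * D.f true) s)) ∈ e := by
  have hq : ((D.f false)⁻¹ * D.f true) s ∈ O := hP.inv_left.inv.mul hP.inv_right s hs
  obtain ⟨e, he⟩ := Option.ne_none_iff_exists'.1 (edgeOf_ne_none hP.inv_left hG hI hq)
  have h1 := (D.adm _).2 (hI.ne_one _ hq) e he
  have h2 := (D.adm _).2 (hI.ne_one _ (hP.inv_right s hs)) e ((edgeOf_corner D s).symm.trans he)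
  exact ⟨e, h1.1, he, (vertexOf_f (D := D) s) ▸ h2.2, h1.2⟩

/-- The label of an edge, with value `2` if there is none. -/
noncomputable def labelOf (Γ : LabeledGraph V) : Option (Sym2 V) → ℕ
  | none => 2
  | some e => Γ.edgeLabel e

theorem labelOf_mk (Γ : LabeledGraph V) (a b : V) : labelOf Γ (some s(a, b)) = Γ.label a b := rfl

/-- An irreducible good planar decoration contradicts two-dimensionality. -/
theorem false_of_irreducible (h2d : Γ.TwoDimensional) (hz : Anisotropic Γ e₁ z)
    (hP : Planar O (D.f false) (D.f true)) (hG : D.Good O) (hI : D.Irreducible O) : False := by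
  set q := (D.f false)⁻¹ * D.f true with hq
  have hqO : Inv O q := hP.inv_left.inv.mul hP.inv_right
  have hedge : ∀ s ∈ O, ∃ e ∈ Γ.graph.edgeSet, edgeOf (D.κ (q s)) = some e ∧
      vertexOf (D.κ s) ∈ e ∧ vertexOf (D.κ (q s)) ∈ e := fun s => exists_edge_corner hP hG hI
  have hpair : ∀ s ∈ O, vertexOf (D.κ (q s)) ≠ vertexOf (D.κ s) →
      edgeOf (D.κ (q s)) = some s(vertexOf (D.κ s), vertexOf (D.κ (q s))) ∧
        Γ.graph.Adj (vertexOf (D.κ s)) (vertexOf (D.κ (q s))) := by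
    intro s hs h
    obtain ⟨e, he, h1, h2, h3⟩ := hedge s hs
    have := (Sym2.mem_and_mem_iff h.symm).1 ⟨h2, h3⟩
    rw [this] at he h1
    exact ⟨h1, he⟩
  have hV : ∀ s ∈ O, vertexOf (D.κ (q s)) = vertexOf (D.κ s) → D.f false (q s) = q s :=
    fun s hs h => not_not.1 fun h' => vertexOf_corner_ne hI (hqO s hs) h' h
  have hE : ∀ s ∈ O, edgeOf (D.κ (q s)) = edgeOf (D.κ s) → D.f true s = s :=
    fun s hs h => not_not.1 fun h' => edgeOf_corner_ne hP.inv_left hG hI hs h' h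
  have hfix : ∀ {i j s t}, s ∈ O → t ∈ O → D.f i s = s → D.f j t = t → i = j ∧ s = t :=
    fun hs ht => fixed_unique hz hG hI hs ht
  have h1 : ∀ s ∈ O, q s ≠ s := fun s hs h => by
    have a1 := hE s hs (by rw [h])
    have a2 := hV s hs (by rw [h])
    exact Bool.noConfusion (hfix (hqO s hs) hs a2 a1).1
  have h2 : ∀ s ∈ O, q (q s) ≠ s := fun s hs h => by
    have ht := hqO s hs
    by_cases hv : vertexOf (D.κ (q s)) = vertexOf (D.κ s)
    · have a1 := hV s hs hv
      have a2 := hV _ ht (by rw [h, hv])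
      rw [h] at a2
      exact h1 s hs (hfix ht hs a1 a2).2
    · have b1 := (hpair s hs hv).1
      have b2 := (hpair _ ht (by rw [h]; exact Ne.symm hv)).1
      rw [h, Sym2.eq_swap] at b2
      have a1 := hE s hs (by rw [b1, b2])
      have a2 := hE _ ht (by rw [h, b1, b2])
      exact h1 s hs (hfix ht hs a2 a1).2
  have h3 : ∀ s ∈ O, q (q (q s)) = s → vertexOf (D.κ (q s)) ≠ vertexOf (D.κ s) := by
    intro s hs h hv
    have ht := hqO s hs
    have hu := hqO _ ht
    have a1 := hV s hs hv
    have hv' : vertexOf (D.κ (q (q s))) ≠ vertexOf (D.κ (q s)) := fun hv' =>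
      h1 _ ht (hfix hu ht (hV _ ht hv') a1).2
    have b1 := (hpair _ ht hv').1
    have b2 := (hpair _ hu (by rw [h, ← hv]; exact hv'.symm)).1
    rw [h, ← hv, Sym2.eq_swap] at b2
    have a2 := hE _ hu (by rw [h, b1, b2])
    exact Bool.noConfusion (hfix ht hu a1 a2).1
  set w : S → ℚ := fun s => 1 / labelOf Γ (edgeOf (D.κ s)) with hw
  have hlab : ∀ s ∈ O, 2 ≤ labelOf Γ (edgeOf (D.κ s)) := by
    intro s hs
    cases he : edgeOf (D.κ s) with
    | none => exact le_rfl
    | some e =>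
      have := ((D.adm s).2 (hI.ne_one s hs) e he).1
      induction e using Sym2.ind with
      | _ a b => exact Γ.two_le_label this
  have hcorner := sum_corner_le hqO (w := w) (fun s hs => by
    have : (2 : ℚ) ≤ labelOf Γ (edgeOf (D.κ s)) := by exact_mod_cast hlab s hs
    exact one_div_le_one_div_of_le two_pos this) h1 h2 (fun s hs h => by
      have ht := hqO s hs
      have hu := hqO _ ht
      have d1 := hpair s hs (h3 s hs h)
      have d2 := hpair _ ht (h3 _ ht (by rw [h]))
      have d3 := hpair _ hu (h3 _ hu (by rw [h]))
      rw [h] at d3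
      have := h2d _ _ _ d1.2 d2.2 d3.2.symm
      simp only [hw, d1.1, d2.1, d3.1, labelOf_mk]
      rw [Γ.label_symm (vertexOf (D.κ (q (q s))))]
      linarith)
  refine hP.false_of_curvature (w := fun i s => if i then 1 else w s) (N := D.NT) (cl := D.cl)
    (fun i s hs => ?_) (fun i s t h h' => h.sameCycle h') hG.unique (fun i s hs hN => ?_) ?_
  · cases i with
    | true => exact one_pos
    | false =>
      have : (0 : ℚ) < labelOf Γ (edgeOf (D.κ s)) := by exact_mod_cast two_pos.trans_le (hlab s hs)
      exact one_div_pos.2 this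
  · cases i with
    | true =>
      have h : 2 ≤ (cycleFinset (D.f true) s).card :=
        two_le_card_cycleFinset fun h => hN (nt_of_fixed hI hs h)
      have : (2 : ℚ) ≤ (cycleFinset (D.f true) s).card := by exact_mod_cast h
      exact (div_le_one (by linarith)).2 this
    | false =>
      obtain ⟨e, he⟩ := Option.ne_none_iff_exists'.1 (edgeOf_ne_none hP.inv_left hG hI hs)
      have h := two_mul_label_le hP.inv_left hI hs hN he
      have h' := hlab s hs
      have hl : labelOf Γ (edgeOf (D.κ s)) = Γ.edgeLabel e := by rw [he]; rfl
      have b1 : (2 : ℚ) * Γ.edgeLabel e ≤ (cycleFinset (D.f false) s).card := by exact_mod_cast h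
      have b2 : (2 : ℚ) ≤ Γ.edgeLabel e := by rw [hl] at h'; exact_mod_cast h'
      simp only [hw, hl, Bool.false_eq_true, if_false]
      rw [div_le_div_iff₀ (by linarith) (by linarith)]
      linarith
  · refine le_of_eq_of_le (Finset.sum_congr rfl fun s _ => ?_) hcorner
    simp only [Bool.false_eq_true, if_false, if_true]
    ring

end ArtinSystem

namespace Hypermap

open Equiv
open Equiv.Perm hiding Disjoint

variable {S S' : Type*} [Fintype S] [Fintype S']

section Transport

variable {p : Perm S} {P : Perm S'} {e : S → S'} {s : S}

theorem sameCycle_map_iff (h : ∀ x, p.SameCycle s x → P (e x) = e (p x)) {y : S'} :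
    P.SameCycle (e s) y ↔ ∃ x, p.SameCycle s x ∧ e x = y := by
  constructor
  · refine fun hy => mem_of_sameCycle (A := {y | ∃ x, p.SameCycle s x ∧ e x = y}) ?_ hy
      ⟨s, .refl _ _, rfl⟩
    rintro _ ⟨x, hx, rfl⟩
    exact ⟨p x, sameCycle_apply_right.2 hx, (h x hx).symm⟩
  · rintro ⟨x, hx, rfl⟩
    refine (mem_of_sameCycle (A := {x | p.SameCycle s x ∧ P.SameCycle (e s) (e x)}) ?_ hx
      ⟨.refl _ _, .refl _ _⟩).2
    rintro x ⟨h1, h2⟩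
    exact ⟨sameCycle_apply_right.2 h1, by rw [← h x h1, sameCycle_apply_right]; exact h2⟩

theorem triv_map_iff {L : Type*} [Group L] {b : S' → L} (he : e.Injective)
    (h : ∀ x, p.SameCycle s x → P (e x) = e (p x)) :
    Triv P b (e s) ↔ Triv p (fun x => b (e x)) s := by
  constructor
  · rintro ⟨Q, hQ⟩
    refine ⟨fun x => Q (e x), fun x hx => ?_⟩
    change Q (e (p x)) = _
    rw [← h x hx]
    exact hQ _ ((sameCycle_map_iff h).2 ⟨x, hx, rfl⟩)
  · rintro ⟨Q, hQ⟩
    refine ⟨Function.extend e Q 1, fun y hy => ?_⟩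
    obtain ⟨x, hx, rfl⟩ := (sameCycle_map_iff h).1 hy
    rw [h x hx, he.extend_apply, he.extend_apply, hQ x hx]

theorem cyc_map {e : S ↪ S'} (h : ∀ x, P (e x) = e (p x)) (O : Finset S) :
    cyc (O.map e) P = cyc O p := by
  classical
  rw [cyc_def, cyc_def, ← Finset.card_image_of_injective (O.image (cycleFinset p))
    (Finset.map_injective e), Finset.image_image, Finset.map_eq_image, Finset.image_image]
  congr 2
  ext s y
  simp only [Function.comp_apply, Finset.mem_map, mem_cycleFinset]
  exact sameCycle_map_iff (e := e) fun x _ => h x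

end Transport

theorem cyc_sumCongr (p : Perm S) (p' : Perm S') :
    cyc Finset.univ (Perm.sumCongr p p') = cyc Finset.univ p + cyc Finset.univ p' := by
  classical
  have h : (Finset.univ : Finset (S ⊕ S')) =
      Finset.univ.map Function.Embedding.inl ∪ Finset.univ.map Function.Embedding.inr := by
    ext x; cases x <;> simp
  rw [h, cyc_union, cyc_map (p := p), cyc_map (p := p')]
  · exact fun _ => rfl
  · exact fun _ => rfl
  · intro x hx
    obtain ⟨y, -, rfl⟩ := Finset.mem_map.1 hx
    simp
  · rw [Finset.disjoint_left]
    rintro x hx hx'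
    obtain ⟨y, -, rfl⟩ := Finset.mem_map.1 hx
    simp at hx'

variable [DecidableEq S] [DecidableEq S']

/-- Two permutations joined into one by merging the cycle of `x` with that of `x'`. -/
def joinPerm (p : Perm S) (p' : Perm S') (x : S) (x' : S') : Perm (S ⊕ S') :=
  Perm.sumCongr p p' * swap (Sum.inl (p⁻¹ x)) (Sum.inr (p'⁻¹ x'))

section Join

variable {p : Perm S} {p' : Perm S'} {x : S} {x' : S'}

theorem joinPerm_inl {y : S} (h : p y ≠ x) : joinPerm p p' x x' (Sum.inl y) = Sum.inl (p y) := by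
  rw [joinPerm, Perm.mul_apply, swap_apply_of_ne_of_ne]
  · rfl
  · rw [Ne, Sum.inl.injEq, Perm.eq_inv_iff_eq]; exact h
  · simp

theorem joinPerm_inr {y : S'} (h : p' y ≠ x') :
    joinPerm p p' x x' (Sum.inr y) = Sum.inr (p' y) := by
  rw [joinPerm, Perm.mul_apply, swap_apply_of_ne_of_ne]
  · rfl
  · simp
  · rw [Ne, Sum.inr.injEq, Perm.eq_inv_iff_eq]; exact h

theorem joinPerm_inl_of_eq {y : S} (h : p y = x) : joinPerm p p' x x' (Sum.inl y) = Sum.inr x' := by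
  rw [joinPerm, Perm.mul_apply, Perm.eq_inv_iff_eq.2 h, swap_apply_left]
  simp

theorem joinPerm_inr_of_eq {y : S'} (h : p' y = x') :
    joinPerm p p' x x' (Sum.inr y) = Sum.inl x := by
  rw [joinPerm, Perm.mul_apply, Perm.eq_inv_iff_eq.2 h, swap_apply_right]
  simp

theorem not_sameCycle_sumCongr (y : S) (y' : S') :
    ¬ (Perm.sumCongr p p').SameCycle (Sum.inl y) (Sum.inr y') := by
  intro h
  obtain ⟨x, -, hx⟩ := (sameCycle_map_iff (p := p) (e := Sum.inl) fun _ _ => rfl).1 h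
  exact Sum.inl_ne_inr hx

theorem Planar.join {f g : Perm S} {f' g' : Perm S'} (h : Planar Finset.univ f g)
    (h' : Planar Finset.univ f' g') (x : S) (x' : S') :
    Planar Finset.univ (joinPerm f f' x x') (Perm.sumCongr g g') where
  inv_left := fun _ _ => Finset.mem_univ _
  inv_right := fun _ _ => Finset.mem_univ _
  conn := by
    refine ⟨⟨Sum.inl x, Finset.mem_univ _⟩, fun A _ hA h1 h2 => ?_⟩
    have hl : ∀ y, Sum.inl y ∈ A → Sum.inr x' ∈ A := by
      intro y hy
      by_contra hx
      have hA1 := h.conn.2 (Finset.univ.filter fun y => Sum.inl y ∈ A) (Finset.subset_univ _)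
        ⟨y, by simpa using hy⟩ (fun y hy => ?_) (fun y hy => ?_)
      · have : f⁻¹ x ∈ Finset.univ.filter fun y => Sum.inl y ∈ A :=
          (Finset.ext_iff.1 hA1 _).2 (Finset.mem_univ _)
        exact hx (joinPerm_inl_of_eq (p' := f') (x' := x') (show f (f⁻¹ x) = x by simp) ▸
          h1 _ (Finset.mem_filter.1 this).2)
      · have hy := (Finset.mem_filter.1 hy).2
        refine Finset.mem_filter.2 ⟨Finset.mem_univ _, ?_⟩
        by_cases hyx : f y = x
        · exact (hx (joinPerm_inl_of_eq (p' := f') (x' := x') hyx ▸ h1 _ hy)).elim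
        · exact joinPerm_inl (p' := f') (x' := x') hyx ▸ h1 _ hy
      · exact Finset.mem_filter.2 ⟨Finset.mem_univ _, h2 _ (Finset.mem_filter.1 hy).2⟩
    have hr : ∀ y, Sum.inr y ∈ A → Sum.inl x ∈ A := by
      intro y hy
      by_contra hx
      have hA1 := h'.conn.2 (Finset.univ.filter fun y => Sum.inr y ∈ A) (Finset.subset_univ _)
        ⟨y, by simpa using hy⟩ (fun y hy => ?_) (fun y hy => ?_)
      · have : f'⁻¹ x' ∈ Finset.univ.filter fun y => Sum.inr y ∈ A :=
          (Finset.ext_iff.1 hA1 _).2 (Finset.mem_univ _)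
        exact hx (joinPerm_inr_of_eq (p := f) (x := x) (show f' (f'⁻¹ x') = x' by simp) ▸
          h1 _ (Finset.mem_filter.1 this).2)
      · have hy := (Finset.mem_filter.1 hy).2
        refine Finset.mem_filter.2 ⟨Finset.mem_univ _, ?_⟩
        by_cases hyx : f' y = x'
        · exact (hx (joinPerm_inr_of_eq (p := f) (x := x) hyx ▸ h1 _ hy)).elim
        · exact joinPerm_inr (p := f) (x := x) hyx ▸ h1 _ hy
      · exact Finset.mem_filter.2 ⟨Finset.mem_univ _, h2 _ (Finset.mem_filter.1 hy).2⟩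
    have hx : Sum.inl x ∈ A ∧ Sum.inr x' ∈ A := by
      obtain ⟨y | y, hy⟩ := hA
      · exact ⟨hr _ (hl _ hy), hl _ hy⟩
      · exact ⟨hr _ hy, hl _ (hr _ hy)⟩
    have ha : Sum.inl (f⁻¹ x) ∈ A := h1.apply_mem_iff.1
      (by rw [joinPerm_inl_of_eq (by simp)]; exact hx.2)
    have hb : Sum.inr (f'⁻¹ x') ∈ A := h1.apply_mem_iff.1
      (by rw [joinPerm_inr_of_eq (by simp)]; exact hx.1)
    have h3 : Inv A (Perm.sumCongr f f') := Inv.of_mul_swap (iff_of_true ha hb) h1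
    have hA1 := h.conn.2 (Finset.univ.filter fun y => Sum.inl y ∈ A) (Finset.subset_univ _)
      ⟨x, by simpa using hx.1⟩
      (fun y hy => Finset.mem_filter.2 ⟨Finset.mem_univ _, h3 _ (Finset.mem_filter.1 hy).2⟩)
      (fun y hy => Finset.mem_filter.2 ⟨Finset.mem_univ _, h2 _ (Finset.mem_filter.1 hy).2⟩)
    have hA2 := h'.conn.2 (Finset.univ.filter fun y => Sum.inr y ∈ A) (Finset.subset_univ _)
      ⟨x', by simpa using hx.2⟩
      (fun y hy => Finset.mem_filter.2 ⟨Finset.mem_univ _, h3 _ (Finset.mem_filter.1 hy).2⟩)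
      (fun y hy => Finset.mem_filter.2 ⟨Finset.mem_univ _, h2 _ (Finset.mem_filter.1 hy).2⟩)
    refine Finset.eq_univ_of_forall ?_
    rintro (y | y)
    exacts [(Finset.mem_filter.1 ((Finset.ext_iff.1 hA1 y).2 (Finset.mem_univ _))).2,
      (Finset.mem_filter.1 ((Finset.ext_iff.1 hA2 y).2 (Finset.mem_univ _))).2]
  count := by
    have e1 := cyc_mul_swap_of_not (q := Perm.sumCongr f f') (Finset.mem_univ (Sum.inl (f⁻¹ x)))
      (Finset.mem_univ (Sum.inr (f'⁻¹ x'))) (not_sameCycle_sumCongr _ _)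
    have e2 := cyc_mul_swap_of_not (q := Perm.sumCongr (g⁻¹ * f) (g'⁻¹ * f'))
      (Finset.mem_univ (Sum.inl (f⁻¹ x))) (Finset.mem_univ (Sum.inr (f'⁻¹ x')))
      (not_sameCycle_sumCongr _ _)
    have e3 : ((joinPerm f f' x x')⁻¹ * Perm.sumCongr g g')⁻¹ =
      Perm.sumCongr (g⁻¹ * f) (g'⁻¹ * f') *
        swap (Sum.inl (f⁻¹ x)) (Sum.inr (f'⁻¹ x')) := by
      rw [joinPerm, mul_inv_rev, inv_inv, ← mul_assoc, Perm.sumCongr_inv, Perm.sumCongr_mul]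
    have e4 : cyc Finset.univ (g⁻¹ * f) = cyc Finset.univ (f⁻¹ * g) := by
      rw [← cyc_inv, mul_inv_rev, inv_inv]
    have e5 : cyc Finset.univ (g'⁻¹ * f') = cyc Finset.univ (f'⁻¹ * g') := by
      rw [← cyc_inv, mul_inv_rev, inv_inv]
    rw [cyc_sumCongr] at e1 e2
    rw [← cyc_inv _ (_ * _), e3, cyc_sumCongr, Finset.card_univ, Fintype.card_sum,
      ← Finset.card_univ, ← Finset.card_univ]
    have c1 := h.count
    have c2 := h'.count
    rw [e4, e5] at e2
    rw [joinPerm]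
    omega

end Join

end Hypermap

namespace ArtinSystem

open Equiv Hypermap LabeledGraph

universe u

variable {V : Type u} {Γ : LabeledGraph V} {e₁ : Sym2 V} {z : ArtinGroup Γ}

section Fill

variable {S S' : Type*}

/-- The vertices other than the outer one. -/
def Inner (D : Deco (system Γ e₁ z) S) (i : Bool) (s : S) : Prop :=
  i = true ∨ edgeOf (D.κ s) ≠ none

variable [Fintype S] [Fintype S']

theorem Inner.sameCycle {D : Deco (system Γ e₁ z) S} {i : Bool} {s t : S} (h : Inner D i s)
    (hst : (D.f i).SameCycle s t) : Inner D i t := by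
  cases i with
  | true => exact .inl rfl
  | false =>
    refine .inr ?_
    have h1 : edgeOf (D.κ t) = edgeOf (D.κ s) := D.κ_sameCycle hst
    rw [h1]
    simpa [Inner] using h

variable [DecidableEq S] [DecidableEq S']

/-- A planar decoration with one outer vertex, which reads `g` from the side `s₀` at position
`p`, and whose inner vertices of nontrivial holonomy have pairwise different classes, `T` being
the set of these classes. -/
structure IsFill (D : Deco (system Γ e₁ z) S) (s₀ : S) (g : FreeGroup V) (p : Pos Γ z)
    (T : Set Bool) : Prop where
  planar : Planar Finset.univ (D.f false) (D.f true)
  base : edgeOf (D.κ s₀) = none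
  outer : ∀ s, edgeOf (D.κ s) = none → (D.f false).SameCycle s₀ s
  pos : D.P s₀ = p
  word : ∃ Q : S → FreeGroup V, Q s₀ = 1 ∧
    (∀ x, edgeOf (D.κ x) = none → D.f false x ≠ s₀ → Q (D.f false x) = Q x * D.β x) ∧
    ∀ x, D.f false x = s₀ → Q x * D.β x = g
  unique : ∀ i j s t, Inner D i s → Inner D j t → D.NT i s → D.NT j t → D.cl i s = D.cl j t →
    i = j ∧ (D.f i).SameCycle s t
  mem_iff : ∀ c, c ∈ T ↔ ∃ i s, Inner D i s ∧ D.NT i s ∧ D.cl i s = c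

theorem IsFill.good {D : Deco (system Γ e₁ z) S} {s₀ : S} {p : Pos Γ z} {T : Set Bool}
    (h : IsFill D s₀ 1 p T) (hT : T.Nonempty) : D.Good Finset.univ := by
  have hinner : ∀ i s, D.NT i s → Inner D i s := by
    intro i s hs
    by_contra hi
    obtain ⟨hi, hk⟩ := not_or.1 hi
    rw [Bool.not_eq_true] at hi
    rw [not_not] at hk
    subst hi
    refine hs ((triv_none_iff (Γ := Γ) hk).2 ?_)
    obtain ⟨Q, h1, h2, h3⟩ := h.word
    refine ⟨Q, fun x hx => ?_⟩
    have hx : edgeOf (D.κ x) = none := Eq.trans (D.κ_sameCycle hx) hk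
    by_cases h0 : D.f false x = s₀
    · rw [h0, h1, h3 x h0]
    · exact h2 x hx h0
  refine ⟨fun i j s _ t _ hs ht => h.unique i j s t (hinner i s hs) (hinner j t ht) hs ht, ?_,
    fun i s _ hs => ?_⟩
  · obtain ⟨c, hc⟩ := hT
    obtain ⟨i, s, -, hs, -⟩ := (h.mem_iff c).1 hc
    exact ⟨i, s, Finset.mem_univ _, hs⟩
  · cases i with
    | true => exact trivial
    | false => exact (hinner false s hs).resolve_left Bool.false_ne_true

theorem IsFill.rebase {D : Deco (system Γ e₁ z) S} {s₀ : S} {g : FreeGroup V} {p : Pos Γ z}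
    {T : Set Bool} (h : IsFill D s₀ g p T) {a : S} (ha : D.f false a = s₀) :
    IsFill D a (D.β a * g * (D.β a)⁻¹) (D.β a • p) T where
  planar := h.planar
  base := by
    have := edgeOf_f (D := D) a
    rw [ha] at this
    exact this.symm.trans h.base
  outer := fun s hs => by
    have := h.outer s hs
    rwa [← ha, Perm.sameCycle_apply_left] at this
  pos := by
    have := D.P_f false a
    rw [ha, h.pos] at this
    rw [this, smul_inv_smul]
  word := by
    obtain ⟨Q, h1, h2, h3⟩ := h.word
    refine ⟨fun x => if x = a then 1 else D.β a * Q x, if_pos rfl, fun x hx hfx => ?_,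
      fun x hx => ?_⟩
    · simp only [if_neg hfx]
      by_cases hxa : x = a
      · rw [if_pos hxa, hxa, ha, h1, mul_one, one_mul]
      · rw [if_neg hxa, h2 x hx (fun h => hxa ((D.f false).injective (h.trans ha.symm))), mul_assoc]
    · have hg := h3 a ha
      by_cases hxa : x = a
      · subst hxa
        have : Q x = 1 := by rw [hx] at ha; rw [ha, h1]
        rw [this, one_mul] at hg
        simp [hg]
      · have hne : D.f false x ≠ s₀ := fun h => hxa ((D.f false).injective (h.trans ha.symm))
        have hk : edgeOf (D.κ x) = none := by
          rw [← edgeOf_f (D := D) x, hx, ← edgeOf_f (D := D) a, ha, h.base]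
        simp only [if_neg hxa]
        rw [mul_assoc, ← h2 x hk hne, hx, ← hg]
        group
  unique := h.unique
  mem_iff := h.mem_iff

/-- Two decorations joined along their outer vertices. -/
def joinDeco (D : Deco (system Γ e₁ z) S) (D' : Deco (system Γ e₁ z) S') (x : S) (x' : S')
    (hx : edgeOf (D.κ x) = none) (hx' : edgeOf (D'.κ x') = none) (hp : D.P x = D'.P x') :
    Deco (system Γ e₁ z) (S ⊕ S') where
  f i := match i with
    | false => joinPerm (D.f false) (D'.f false) x x'
    | true => Perm.sumCongr (D.f true) (D'.f true)
  κ := Sum.elim D.κ D'.κ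
  β := Sum.elim D.β D'.β
  P := Sum.elim D.P D'.P
  κ_f := by
    rintro (_ | _) (y | y)
    · by_cases h : D.f false y = x
      · simp only [joinPerm_inl_of_eq h]
        refine Eq.trans hx' (Eq.trans hx.symm ?_)
        rw [← h]
        exact D.κ_f false y
      · simp only [joinPerm_inl h]
        exact D.κ_f false y
    · by_cases h : D'.f false y = x'
      · simp only [joinPerm_inr_of_eq h]
        refine Eq.trans hx (Eq.trans hx'.symm ?_)
        rw [← h]
        exact D'.κ_f false y
      · simp only [joinPerm_inr h]
        exact D'.κ_f false y
    · exact D.κ_f true y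
    · exact D'.κ_f true y
  adm := by
    rintro (y | y)
    · exact D.adm y
    · exact D'.adm y
  P_f := by
    rintro (_ | _) (y | y)
    · by_cases h : D.f false y = x
      · simp only [joinPerm_inl_of_eq h]
        refine Eq.trans hp.symm ?_
        rw [← h]
        exact D.P_f false y
      · simp only [joinPerm_inl h]
        exact D.P_f false y
    · by_cases h : D'.f false y = x'
      · simp only [joinPerm_inr_of_eq h]
        refine Eq.trans hp ?_
        rw [← h]
        exact D'.P_f false y
      · simp only [joinPerm_inr h]
        exact D'.P_f false y
    · exact D.P_f true y
    · exact D'.P_f true y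

section Join

variable {D : Deco (system Γ e₁ z) S} {D' : Deco (system Γ e₁ z) S'} {x : S} {x' : S'}
  {hx : edgeOf (D.κ x) = none} {hx' : edgeOf (D'.κ x') = none} {hp : D.P x = D'.P x'} {i : Bool}

theorem joinDeco_f_inl {y : S} (h : Inner D i y) :
    (joinDeco D D' x x' hx hx' hp).f i (Sum.inl y) = Sum.inl (D.f i y) := by
  cases i with
  | true => rfl
  | false =>
    refine joinPerm_inl fun hy => ?_
    have := edgeOf_f (D := D) y
    rw [hy, hx] at this
    simp [Inner, ← this] at h

theorem joinDeco_f_inr {y : S'} (h : Inner D' i y) :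
    (joinDeco D D' x x' hx hx' hp).f i (Sum.inr y) = Sum.inr (D'.f i y) := by
  cases i with
  | true => rfl
  | false =>
    refine joinPerm_inr fun hy => ?_
    have := edgeOf_f (D := D') y
    rw [hy, hx'] at this
    simp [Inner, ← this] at h

theorem joinDeco_nt_inl {y : S} (h : Inner D i y) :
    (joinDeco D D' x x' hx hx' hp).NT i (Sum.inl y) ↔ D.NT i y :=
  not_congr (triv_map_iff (e := Sum.inl) Sum.inl_injective
    fun _ hu => joinDeco_f_inl (h.sameCycle hu))

theorem joinDeco_nt_inr {y : S'} (h : Inner D' i y) :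
    (joinDeco D D' x x' hx hx' hp).NT i (Sum.inr y) ↔ D'.NT i y :=
  not_congr (triv_map_iff (e := Sum.inr) Sum.inr_injective
    fun _ hu => joinDeco_f_inr (h.sameCycle hu))

theorem joinDeco_sameCycle_inl {y t : S} (h : Inner D i y) (ht : (D.f i).SameCycle y t) :
    ((joinDeco D D' x x' hx hx' hp).f i).SameCycle (Sum.inl y) (Sum.inl t) :=
  (sameCycle_map_iff (e := Sum.inl) fun _ hu => joinDeco_f_inl (h.sameCycle hu)).2 ⟨t, ht, rfl⟩

theorem joinDeco_sameCycle_inr {y t : S'} (h : Inner D' i y) (ht : (D'.f i).SameCycle y t) :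
    ((joinDeco D D' x x' hx hx' hp).f i).SameCycle (Sum.inr y) (Sum.inr t) :=
  (sameCycle_map_iff (e := Sum.inr) fun _ hu => joinDeco_f_inr (h.sameCycle hu)).2 ⟨t, ht, rfl⟩

end Join

theorem IsFill.join {D : Deco (system Γ e₁ z) S} {D' : Deco (system Γ e₁ z) S'} {x : S} {x' : S'}
    {g g' : FreeGroup V} {p : Pos Γ z} {T T' : Set Bool} (h : IsFill D x g p T)
    (h' : IsFill D' x' g' p T') (hT : Disjoint T T') :
    IsFill (joinDeco D D' x x' h.base h'.base (h.pos.trans h'.pos.symm)) (Sum.inl x) (g * g') p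
      (T ∪ T') where
  planar := h.planar.join h'.planar x x'
  base := h.base
  outer := by
    have hl : ∀ y, (D.f false).SameCycle x y →
        (joinPerm (D.f false) (D'.f false) x x').SameCycle (Sum.inl x) (Sum.inl y) := fun y hy => by
      refine mem_of_sameCycle (A := {y | (joinPerm (D.f false) (D'.f false) x x').SameCycle
        (Sum.inl x) (Sum.inl y)}) (fun u hu => ?_) hy (.refl _ _)
      by_cases hux : D.f false u = x
      · rw [hux]; exact .refl _ _
      · have := Perm.sameCycle_apply_right.2 hu
        rwa [joinPerm_inl hux] at this
    have hx' : (joinPerm (D.f false) (D'.f false) x x').SameCycle (Sum.inl x) (Sum.inr x') := by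
      have := Perm.sameCycle_apply_right.2 (hl _ (sameCycle_inv_apply (D.f false) x))
      rwa [joinPerm_inl_of_eq (by simp)] at this
    rintro (y | y) hy
    · exact hl y (h.outer y hy)
    · refine mem_of_sameCycle (A := {y | (joinPerm (D.f false) (D'.f false) x x').SameCycle
        (Sum.inl x) (Sum.inr y)}) (fun u hu => ?_) (h'.outer y hy) hx'
      by_cases hux : D'.f false u = x'
      · rw [hux]; exact hx'
      · have := Perm.sameCycle_apply_right.2 hu
        rwa [joinPerm_inr hux] at this
  pos := h.pos
  word := by
    obtain ⟨Q, h1, h2, h3⟩ := h.word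
    obtain ⟨Q', h1', h2', h3'⟩ := h'.word
    refine ⟨Sum.elim Q fun y => g * Q' y, h1, ?_, ?_⟩
    · rintro (y | y) hk hy
      · by_cases hyx : D.f false y = x
        · refine (congrArg _ (joinPerm_inl_of_eq hyx)).trans ?_
          simp only [Sum.elim_inr, Sum.elim_inl, joinDeco, h1', h3 y hyx, mul_one]
        · refine (congrArg _ (joinPerm_inl hyx)).trans ?_
          exact h2 y hk hyx
      · by_cases hyx : D'.f false y = x'
        · exact (hy (joinPerm_inr_of_eq hyx)).elim
        · refine (congrArg _ (joinPerm_inr hyx)).trans ?_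
          simp only [Sum.elim_inr, joinDeco, h2' y hk hyx, mul_assoc]
    · rintro (y | y) hy
      · by_cases hyx : D.f false y = x
        · exact absurd ((joinPerm_inl_of_eq hyx).symm.trans hy) Sum.inr_ne_inl
        · exact absurd (Sum.inl_injective ((joinPerm_inl hyx).symm.trans hy)) hyx
      · by_cases hyx : D'.f false y = x'
        · simp only [Sum.elim_inr, joinDeco, mul_assoc, h3' y hyx]
        · exact absurd ((joinPerm_inr hyx).symm.trans hy) Sum.inr_ne_inl
  unique := by
    have hdis : ∀ {i j s t}, Inner D i s → Inner D' j t → D.NT i s → D'.NT j t →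
        D.cl i s ≠ D'.cl j t := fun {i j s t} hi hj hs ht hc =>
      Set.disjoint_left.1 hT ((h.mem_iff _).2 ⟨i, s, hi, hs, rfl⟩)
        ((h'.mem_iff _).2 ⟨j, t, hj, ht, hc.symm⟩)
    rintro i j (s | s) (t | t) hi hj hs ht hc
    · have hs := (joinDeco_nt_inl (D := D) hi).1 hs
      have ht := (joinDeco_nt_inl (D := D) hj).1 ht
      have := h.unique i j s t hi hj hs ht hc
      exact ⟨this.1, joinDeco_sameCycle_inl hi this.2⟩
    · exact (hdis hi hj ((joinDeco_nt_inl (D := D) hi).1 hs) ((joinDeco_nt_inr (D' := D') hj).1 ht)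
        hc).elim
    · exact (hdis hj hi ((joinDeco_nt_inl (D := D) hj).1 ht) ((joinDeco_nt_inr (D' := D') hi).1 hs)
        hc.symm).elim
    · have hs := (joinDeco_nt_inr (D' := D') hi).1 hs
      have ht := (joinDeco_nt_inr (D' := D') hj).1 ht
      have := h'.unique i j s t hi hj hs ht hc
      exact ⟨this.1, joinDeco_sameCycle_inr hi this.2⟩
  mem_iff := by
    intro c
    rw [Set.mem_union, h.mem_iff, h'.mem_iff]
    constructor
    · rintro (⟨i, s, hi, hs, hc⟩ | ⟨i, s, hi, hs, hc⟩)
      · exact ⟨i, Sum.inl s, hi, (joinDeco_nt_inl hi).2 hs, hc⟩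
      · exact ⟨i, Sum.inr s, hi, (joinDeco_nt_inr hi).2 hs, hc⟩
    · rintro ⟨i, s | s, hi, hs, hc⟩
      · exact .inl ⟨i, s, hi, (joinDeco_nt_inl (D := D) hi).1 hs, hc⟩
      · exact .inr ⟨i, s, hi, (joinDeco_nt_inr (D' := D') hi).1 hs, hc⟩

end Fill

end ArtinSystem

namespace ArtinSystem

open Equiv Hypermap LabeledGraph

universe u

variable {V : Type u} {Γ : LabeledGraph V} {e₁ : Sym2 V} {z : ArtinGroup Γ}

theorem triv_boolNot_iff {L : Type*} [Group L] {b : Bool → L} :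
    Triv (swap false true) b false ↔ b false * b true = 1 := by
  constructor
  · rintro ⟨Q, hQ⟩
    have h1 := hQ false (.refl _ _)
    have h2 := hQ true ⟨1, by simp⟩
    rw [swap_apply_left] at h1
    rw [swap_apply_right, h1, mul_assoc, left_eq_mul] at h2
    exact h2
  · intro h
    refine ⟨fun x => if x then b false else 1, ?_⟩
    rintro (_ | _) - <;> simp [h]

section VertexPiece

/-- Two sides around a vertex of colour `true`, carrying powers of the generator `v`. -/
noncomputable def vertexPiece (v : V) (m n : ℤ) (p : Pos Γ z)
    (h : (FreeGroup.of v ^ m * FreeGroup.of v ^ n)⁻¹ • p = p) : Deco (system Γ e₁ z) Bool where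
  f _ := swap false true
  κ _ i := match i with
    | false => (none : Option (Sym2 V))
    | true => v
  β s := FreeGroup.of v ^ (if s then n else m)
  P s := if s then (FreeGroup.of v ^ m)⁻¹ • p else p
  κ_f _ _ := rfl
  adm _ := ⟨⟨_, rfl⟩, fun _ _ he => (Option.some_ne_none _ he.symm).elim⟩
  P_f i s := by
    cases s
    · simp
    · rw [mul_inv_rev, mul_smul] at h
      simp [h]

variable {v : V} {m n : ℤ} {p : Pos Γ z}
  {h : (FreeGroup.of v ^ m * FreeGroup.of v ^ n)⁻¹ • p = p}

theorem sameCycle_swap_bool (s t : Bool) : (swap false true).SameCycle s t := by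
  cases s <;> cases t
  exacts [.refl _ _, ⟨1, by simp⟩, ⟨1, by simp⟩, .refl _ _]

theorem vertexPiece_nt (i s : Bool)
    (hs : Inner (vertexPiece (e₁ := e₁) v m n p h) i s) :
    i = true ∧ ((vertexPiece (e₁ := e₁) v m n p h).NT i s ↔ m + n ≠ 0) := by
  cases i with
  | false => simp [Inner, vertexPiece, edgeOf] at hs
  | true =>
    refine ⟨rfl, not_congr ?_⟩
    have h1 : Triv (swap false true) (fun s => FreeGroup.of v ^ (if s then n else m)) s ↔
        m + n = 0 := by
      have h2 : Triv (swap false true) (fun s => FreeGroup.of v ^ (if s then n else m)) s ↔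
          Triv (swap false true) (fun s => FreeGroup.of v ^ (if s then n else m)) false :=
        ⟨fun h => h.sameCycle (sameCycle_swap_bool _ _),
          fun h => h.sameCycle (sameCycle_swap_bool _ _)⟩
      rw [h2, triv_boolNot_iff]
      simp only [Bool.false_eq_true, if_false, if_true, ← zpow_add]
      refine ⟨fun h => ?_, fun h => by rw [h, zpow_zero]⟩
      have h3 := congrArg (FreeGroup.lift fun _ => Multiplicative.ofAdd (1 : ℤ)) h
      rw [map_zpow, MonoidHom.map_one, FreeGroup.lift_apply_of, ← ofAdd_zsmul, ofAdd_eq_one] at h3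
      simpa using h3
    exact h1

theorem isFill_vertexPiece : IsFill (vertexPiece (e₁ := e₁) v m n p h) false
    (FreeGroup.of v ^ m * FreeGroup.of v ^ n) p {c | m + n ≠ 0 ∧ c = false} where
  planar :=
    { inv_left := fun _ _ => Finset.mem_univ _
      inv_right := fun _ _ => Finset.mem_univ _
      conn := by
        refine ⟨Finset.univ_nonempty, fun A _ ⟨s, hs⟩ hA _ => ?_⟩
        exact Finset.eq_univ_of_forall fun t => hA.mem (sameCycle_swap_bool s t) hs
      count := by
        have h1 : cyc Finset.univ (swap false true) = 1 :=
          cyc_eq_one Finset.univ_nonempty fun s _ t _ => sameCycle_swap_bool s t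
        have h2 : cyc (Finset.univ : Finset Bool) ((swap false true)⁻¹ * swap false true) = 2 := by
          rw [cyc_of_forall_apply_eq fun s _ => by simp]
          rfl
        change cyc Finset.univ (swap false true) + cyc Finset.univ (swap false true) +
          cyc Finset.univ ((swap false true)⁻¹ * swap false true) = _
        rw [h1, h2]
        rfl }
  base := rfl
  outer _ _ := sameCycle_swap_bool _ _
  pos := rfl
  word := by
    refine ⟨fun s => if s then FreeGroup.of v ^ m else 1, rfl, ?_, ?_⟩
    · rintro (_ | _) - hs
      · simp [vertexPiece]
      · simp [vertexPiece] at hs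
    · rintro (_ | _) hs
      · simp [vertexPiece] at hs
      · simp [vertexPiece]
  unique i j s t hi hj _ _ _ := by
    refine ⟨?_, sameCycle_swap_bool _ _⟩
    rw [(vertexPiece_nt i s hi).1, (vertexPiece_nt j t hj).1]
  mem_iff c := by
    classical
    constructor
    · rintro ⟨hmn, rfl⟩
      exact ⟨true, false, .inl rfl, (vertexPiece_nt true false (.inl rfl)).2.2 hmn,
        decide_eq_false id⟩
    · rintro ⟨i, s, hi, hs, rfl⟩
      obtain ⟨rfl, h1⟩ := vertexPiece_nt i s hi
      exact ⟨h1.1 hs, decide_eq_false id⟩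

end VertexPiece

end ArtinSystem

namespace ArtinSystem

open Equiv Hypermap LabeledGraph

universe u

variable {V : Type u} {Γ : LabeledGraph V} {e₁ : Sym2 V} {z : ArtinGroup Γ}

/-- The product of the first `t` syllables of a sequence. -/
def syllProd (w : ℕ → V × ℤ) (t : ℕ) : FreeGroup V :=
  ((List.range t).map fun i => FreeGroup.of (w i).1 ^ (w i).2).prod

theorem syllProd_zero (w : ℕ → V × ℤ) : syllProd w 0 = 1 := rfl

theorem syllProd_succ (w : ℕ → V × ℤ) (t : ℕ) :
    syllProd w (t + 1) = syllProd w t * FreeGroup.of (w t).1 ^ (w t).2 :=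
  List.prod_range_succ _ _

theorem exists_syllProd {e : Sym2 V} {g : FreeGroup V}
    (hg : g ∈ Subgroup.closure (FreeGroup.of '' {v | v ∈ e})) :
    ∃ (w : ℕ → V × ℤ) (l : ℕ), l ≠ 0 ∧ (∀ t, (w t).1 ∈ e) ∧ syllProd w l = g := by
  have hmul : ∀ {g : FreeGroup V} {v : V} (n : ℤ), v ∈ e →
      (∃ (w : ℕ → V × ℤ) (l : ℕ), l ≠ 0 ∧ (∀ t, (w t).1 ∈ e) ∧ syllProd w l = g) →
      ∃ (w : ℕ → V × ℤ) (l : ℕ), l ≠ 0 ∧ (∀ t, (w t).1 ∈ e) ∧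
        syllProd w l = g * FreeGroup.of v ^ n := by
    rintro g v n hv ⟨w, l, hl, hw, rfl⟩
    refine ⟨fun t => if t < l then w t else (v, n), l + 1, l.succ_ne_zero, fun t => ?_, ?_⟩
    · dsimp only
      split_ifs
      exacts [hw t, hv]
    · rw [syllProd_succ, if_neg (lt_irrefl _)]
      congr 1
      refine congrArg List.prod (List.map_congr_left fun t ht => ?_)
      simp only [if_pos (List.mem_range.1 ht)]
  refine Subgroup.closure_induction_right (p := fun g _ => ∃ (w : ℕ → V × ℤ) (l : ℕ), l ≠ 0 ∧
    (∀ t, (w t).1 ∈ e) ∧ syllProd w l = g) ?_ ?_ ?_ hg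
  · induction e using Sym2.ind with
    | _ a b =>
    exact ⟨fun _ => (a, 0), 1, one_ne_zero, fun _ => Sym2.mem_mk_left a b, by simp [syllProd]⟩
  · rintro x _ _ ⟨v, hv, rfl⟩ h
    simpa using hmul 1 hv h
  · rintro x _ _ ⟨v, hv, rfl⟩ h
    simpa using hmul (-1) hv h

section FacePiece

variable {l : ℕ} [NeZero l]

theorem val_add_one_of_ne_zero {i : ZMod l} (h : i + 1 ≠ 0) : (i + 1).val = i.val + 1 := by
  have hi : i.val + 1 ≠ l := fun hi => h (by
    rw [← ZMod.natCast_zmod_val i, ← Nat.cast_one (R := ZMod l), ← Nat.cast_add, hi,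
      ZMod.natCast_self])
  have h1 := ZMod.val_cast_of_lt (lt_of_le_of_ne i.val_lt hi)
  rwa [Nat.succ_eq_add_one, Nat.cast_add, ZMod.natCast_zmod_val, Nat.cast_one] at h1

theorem val_add_one_of_eq_zero {i : ZMod l} (h : i + 1 = 0) : i.val + 1 = l := by
  have h1 : ((i.val + 1 : ℕ) : ZMod l) = 0 := by
    rw [Nat.cast_add, ZMod.natCast_zmod_val, Nat.cast_one, h]
  exact (Nat.le_of_dvd (Nat.succ_pos _) ((ZMod.natCast_eq_zero_iff _ _).1 h1)).antisymm'
    i.val_lt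

/-- The rotation of the two boundary circles of an annulus. -/
def annulusRot (l : ℕ) : Perm (ZMod l × Bool) where
  toFun s := if s.2 then (s.1 - 1, true) else (s.1 + 1, false)
  invFun s := if s.2 then (s.1 + 1, true) else (s.1 - 1, false)
  left_inv := by rintro ⟨i, _ | _⟩ <;> simp
  right_inv := by rintro ⟨i, _ | _⟩ <;> simp

/-- The exchange of the two boundary circles of an annulus. -/
def annulusFlip (l : ℕ) : Perm (ZMod l × Bool) where
  toFun s := (s.1, !s.2)
  invFun s := (s.1, !s.2)
  left_inv := by rintro ⟨i, _ | _⟩ <;> rfl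
  right_inv := by rintro ⟨i, _ | _⟩ <;> rfl

theorem annulusRot_false (i : ZMod l) : annulusRot l (i, false) = (i + 1, false) := rfl

theorem annulusRot_true (i : ZMod l) : annulusRot l (i, true) = (i - 1, true) := rfl

theorem annulusFlip_apply (i : ZMod l) (b : Bool) : annulusFlip l (i, b) = (i, !b) := rfl

theorem sameCycle_annulusRot (i j : ZMod l) (b : Bool) :
    (annulusRot l).SameCycle (i, b) (j, b) := by
  have h : ∀ (n : ℕ) (i : ZMod l), (annulusRot l).SameCycle (i, b) (i + n, b) := by
    intro n
    induction n with
    | zero => intro i; simpa using Perm.SameCycle.refl _ _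
    | succ n ih =>
      intro i
      have h1 : (annulusRot l).SameCycle (i + n, b) (i + (n + 1 : ℕ), b) := by
        cases b with
        | false =>
          refine ⟨1, ?_⟩
          rw [zpow_one, annulusRot_false, Nat.cast_add, Nat.cast_one, add_assoc]
        | true =>
          refine Perm.SameCycle.symm ⟨1, ?_⟩
          rw [zpow_one, annulusRot_true, Nat.cast_add, Nat.cast_one, ← add_assoc,
            add_sub_cancel_right]
      exact (ih i).trans h1
  have := h (j - i).val i
  rwa [ZMod.natCast_zmod_val, add_sub_cancel] at this

theorem snd_eq_of_sameCycle_annulusRot {s t : ZMod l × Bool} (h : (annulusRot l).SameCycle s t) :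
    t.2 = s.2 := by
  refine mem_of_sameCycle (A := {t : ZMod l × Bool | t.2 = s.2}) ?_ h (show s.2 = s.2 from rfl)
  rintro ⟨i, _ | _⟩ h <;> exact h

theorem cyc_of_involution {S : Type*} [Fintype S] [DecidableEq S] {q : Perm S}
    (h1 : ∀ s, q s ≠ s) (h2 : ∀ s, q (q s) = s) :
    2 * cyc Finset.univ q = Fintype.card S := by
  have h3 : ∀ s, (cycleFinset q s).card = 2 := fun s => by
    have : cycleFinset q s = {s, q s} := by
      ext t
      rw [mem_cycleFinset, Finset.mem_insert, Finset.mem_singleton]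
      constructor
      · intro h
        refine mem_of_sameCycle (A := {t | t = s ∨ t = q s}) ?_ h (.inl rfl)
        rintro _ (rfl | rfl)
        exacts [.inr rfl, .inl (h2 s)]
      · rintro (rfl | rfl)
        exacts [.refl _ _, ⟨1, rfl⟩]
    rw [this, Finset.card_pair (h1 s).symm]
  have h := sum_inv_card_cycleFinset (O := Finset.univ) (p := q) fun _ _ => Finset.mem_univ _
  simp only [h3, Finset.sum_const, Finset.card_univ, nsmul_eq_mul] at h
  have : (2 * cyc Finset.univ q : ℚ) = Fintype.card S := by rw [← h]; push_cast; ring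
  exact_mod_cast this

theorem planar_annulus : Planar Finset.univ (annulusRot l) (annulusFlip l) where
  inv_left := fun _ _ => Finset.mem_univ _
  inv_right := fun _ _ => Finset.mem_univ _
  conn := by
    refine ⟨Finset.univ_nonempty, fun A _ ⟨⟨i, b⟩, hs⟩ h1 h2 => ?_⟩
    refine Finset.eq_univ_of_forall ?_
    rintro ⟨j, c⟩
    have h3 := h1.mem (sameCycle_annulusRot i j b) hs
    by_cases hbc : c = b
    · rwa [hbc]
    · have h4 := h2 _ h3
      rwa [annulusFlip_apply, Bool.eq_not.2 (Ne.symm hbc), Bool.not_not] at h4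
  count := by
    have h1 : cyc (Finset.univ : Finset (ZMod l × Bool)) (annulusRot l) = 2 := by
      have hu : (Finset.univ : Finset (ZMod l × Bool)) =
          Finset.univ.filter (fun s => s.2 = false) ∪ Finset.univ.filter (fun s => s.2 = true) := by
        ext ⟨i, _ | _⟩ <;> simp
      have hc : ∀ b, cyc (Finset.univ.filter fun s : ZMod l × Bool => s.2 = b)
          (annulusRot l) = 1 := by
        intro b
        refine cyc_eq_one ⟨(0, b), by simp⟩ ?_
        rintro ⟨i, c⟩ hi ⟨j, d⟩ hj
        obtain rfl : c = b := by simpa using hi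
        obtain rfl : d = c := by simpa using hj
        exact sameCycle_annulusRot i j d
      rw [hu, cyc_union, hc, hc]
      · intro s hs
        rw [Finset.mem_filter] at hs ⊢
        refine ⟨Finset.mem_univ _, Eq.trans ?_ hs.2⟩
        exact snd_eq_of_sameCycle_annulusRot ⟨1, rfl⟩
      · rw [Finset.disjoint_left]
        intro s hs hs'
        rw [Finset.mem_filter] at hs hs'
        exact Bool.false_ne_true (hs.2.symm.trans hs'.2)
    have h2 : 2 * cyc (Finset.univ : Finset (ZMod l × Bool)) (annulusFlip l) = l * 2 := by
      rw [cyc_of_involution]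
      · simp
      · rintro ⟨i, b⟩ h
        exact Bool.not_ne_self b (congrArg Prod.snd h)
      · rintro ⟨i, _ | _⟩ <;> rfl
    have h3 : 2 * cyc (Finset.univ : Finset (ZMod l × Bool)) ((annulusRot l)⁻¹ * annulusFlip l) =
        l * 2 := by
      have hf : ∀ i : ZMod l, ((annulusRot l)⁻¹ * annulusFlip l) (i, false) = (i + 1, true) :=
        fun i => rfl
      have ht : ∀ i : ZMod l, ((annulusRot l)⁻¹ * annulusFlip l) (i, true) = (i - 1, false) :=
        fun i => rfl
      rw [cyc_of_involution]
      · simp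
      · rintro ⟨i, _ | _⟩ h
        · exact Bool.noConfusion (congrArg Prod.snd ((hf i).symm.trans h))
        · exact Bool.noConfusion (congrArg Prod.snd ((ht i).symm.trans h))
      · rintro ⟨i, _ | _⟩
        · rw [hf, ht, add_sub_cancel_right]
        · rw [ht, hf, sub_add_cancel]
    rw [h1, Finset.card_univ, Fintype.card_prod, ZMod.card, Fintype.card_bool]
    omega

end FacePiece

end ArtinSystem

namespace ArtinSystem

open Equiv Hypermap LabeledGraph

universe u

variable {V : Type u} {Γ : LabeledGraph V} {e₁ : Sym2 V} {z : ArtinGroup Γ}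

section FacePiece

variable {l : ℕ} [NeZero l] {e : Sym2 V} {w : ℕ → V × ℤ} {p : Pos Γ z}

theorem val_sub_one_of_ne_zero {i : ZMod l} (h : i ≠ 0) : (i - 1).val + 1 = i.val := by
  rw [← val_add_one_of_ne_zero, sub_add_cancel]
  rwa [sub_add_cancel]

theorem val_sub_one_of_eq_zero {i : ZMod l} (h : i = 0) : (i - 1).val + 1 = l :=
  val_add_one_of_eq_zero (by rw [sub_add_cancel, h])

theorem syllProd_inv_smul_val_add_one (h : (syllProd w l)⁻¹ • p = p) (i : ZMod l) :
    (syllProd w (i + 1).val)⁻¹ • p = (syllProd w (i.val + 1))⁻¹ • p := by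
  by_cases hi : i + 1 = 0
  · rw [val_add_one_of_eq_zero hi, hi, h, ZMod.val_zero, syllProd_zero, inv_one, one_smul]
  · rw [val_add_one_of_ne_zero hi]

/-- An annulus whose outer vertex reads a word in the generators of an edge and whose inner
vertex has the kind of that edge. -/
noncomputable def facePiece (he : e ∈ Γ.graph.edgeSet) (hw : ∀ t, (w t).1 ∈ e)
    (h : (syllProd w l)⁻¹ • p = p) : Deco (system Γ e₁ z) (ZMod l × Bool) where
  f i := if i then annulusFlip l else annulusRot l
  κ s i := match i with
    | false => (if s.2 then some e else none : Option (Sym2 V))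
    | true => (w s.1.val).1
  β s := FreeGroup.of (w s.1.val).1 ^ (if s.2 then -(w s.1.val).2 else (w s.1.val).2)
  P s := (syllProd w (if s.2 then s.1.val + 1 else s.1.val))⁻¹ • p
  κ_f := by
    rintro (_ | _) ⟨i, _ | _⟩ <;> rfl
  adm s := by
    refine ⟨⟨_, rfl⟩, fun _ e' he' => ?_⟩
    obtain ⟨i, _ | _⟩ := s
    · exact (Option.some_ne_none _ he'.symm).elim
    · obtain rfl : e = e' := Option.some_injective _ he'
      exact ⟨he, hw _⟩
  P_f := by
    rintro (_ | _) ⟨i, _ | _⟩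
    · change (syllProd w (i + 1).val)⁻¹ • p =
        (FreeGroup.of (w i.val).1 ^ (w i.val).2)⁻¹ • (syllProd w i.val)⁻¹ • p
      rw [syllProd_inv_smul_val_add_one h, syllProd_succ, mul_inv_rev, mul_smul]
    · change (syllProd w ((i - 1).val + 1))⁻¹ • p =
        (FreeGroup.of (w i.val).1 ^ (-(w i.val).2))⁻¹ • (syllProd w (i.val + 1))⁻¹ • p
      rw [← syllProd_inv_smul_val_add_one h, sub_add_cancel, syllProd_succ, mul_inv_rev, mul_smul,
        zpow_neg, inv_inv, smul_inv_smul]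
    · change (syllProd w (i.val + 1))⁻¹ • p =
        (FreeGroup.of (w i.val).1 ^ (w i.val).2)⁻¹ • (syllProd w i.val)⁻¹ • p
      rw [syllProd_succ, mul_inv_rev, mul_smul]
    · change (syllProd w i.val)⁻¹ • p =
        (FreeGroup.of (w i.val).1 ^ (-(w i.val).2))⁻¹ • (syllProd w (i.val + 1))⁻¹ • p
      rw [syllProd_succ, mul_inv_rev, mul_smul, zpow_neg, inv_inv, smul_inv_smul]

variable {he : e ∈ Γ.graph.edgeSet} {hw : ∀ t, (w t).1 ∈ e} {h : (syllProd w l)⁻¹ • p = p}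

theorem facePiece_not_nt_true (s : ZMod l × Bool) :
    ¬ (facePiece (e₁ := e₁) he hw h).NT true s := by
  refine not_not_intro ?_
  obtain ⟨i, b⟩ := s
  have h1 : Triv (annulusFlip l) (fun s : ZMod l × Bool => FreeGroup.of (w s.1.val).1 ^
      (if s.2 then -(w s.1.val).2 else (w s.1.val).2)) (i, b) := by
    refine ⟨fun s => if s.2 then FreeGroup.of (w s.1.val).1 ^ (w s.1.val).2 else 1, ?_⟩
    rintro ⟨j, _ | _⟩ - <;> simp [annulusFlip_apply]
  exact h1

theorem facePiece_nt_false (i : ZMod l) :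
    (facePiece (e₁ := e₁) he hw h).NT false (i, true) ↔
      PresentedGroup.mk (Γ.edgeGraph e).artinRels (syllProd w l) ≠ 1 := by
  refine not_congr ((triv_some_iff (e := e) rfl).trans ?_)
  set φ := PresentedGroup.mk (Γ.edgeGraph e).artinRels
  have h1 : ∀ t, φ (syllProd w t) =
      φ (syllProd w (t + 1)) * φ (FreeGroup.of (w t).1 ^ (-(w t).2)) := fun t => by
    rw [← map_mul, syllProd_succ, zpow_neg, mul_inv_cancel_right]
  change Triv (annulusRot l) (fun s : ZMod l × Bool => φ (FreeGroup.of (w s.1.val).1 ^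
      (if s.2 then -(w s.1.val).2 else (w s.1.val).2))) (i, true) ↔ _
  constructor
  · intro ht
    have h2 := (ht.sameCycle (sameCycle_annulusRot i 0 true)).defect
      (Q := fun s => φ (syllProd w (s.1.val + 1))) ?_
    · rw [annulusRot_true] at h2
      simp only [if_true] at h2
      rw [val_sub_one_of_eq_zero rfl, ← h1, ZMod.val_zero, syllProd_zero, MonoidHom.map_one] at h2
      exact h2
    · rintro ⟨j, b⟩ hj hne
      obtain rfl : b = true := snd_eq_of_sameCycle_annulusRot hj
      have hj0 : j ≠ 0 := fun h => hne (by rw [h])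
      rw [annulusRot_true]
      simp only [if_true]
      rw [val_sub_one_of_ne_zero hj0, ← h1]
  · intro ht
    refine ⟨fun s => φ (syllProd w (s.1.val + 1)), ?_⟩
    rintro ⟨j, b⟩ hj
    obtain rfl : b = true := snd_eq_of_sameCycle_annulusRot hj
    rw [annulusRot_true]
    simp only [if_true]
    rw [← h1]
    by_cases hj0 : j = 0
    · rw [val_sub_one_of_eq_zero hj0, ht, hj0, ZMod.val_zero, syllProd_zero, MonoidHom.map_one]
    · rw [val_sub_one_of_ne_zero hj0]

theorem facePiece_cl (i : ZMod l) : (facePiece (e₁ := e₁) he hw h).cl false (i, true) =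
    (system Γ e₁ z).cls false (some e : Option (Sym2 V)) p := by
  rw [(facePiece (e₁ := e₁) he hw h).cl_sameCycle (i := false)
    (sameCycle_annulusRot (0 - 1) i true)]
  change (system Γ e₁ z).cls false (some e : Option (Sym2 V))
    ((syllProd w ((0 - 1 : ZMod l).val + 1))⁻¹ • p) = _
  rw [val_sub_one_of_eq_zero rfl, h]

theorem facePiece_inner {i : Bool} {s : ZMod l × Bool}
    (hi : Inner (facePiece (e₁ := e₁) he hw h) i s) (hs : (facePiece (e₁ := e₁) he hw h).NT i s) :
    i = false ∧ s.2 = true := by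
  cases i with
  | true => exact (facePiece_not_nt_true s hs).elim
  | false =>
    obtain ⟨i, _ | _⟩ := s
    · exact (hi.resolve_left Bool.false_ne_true rfl).elim
    · exact ⟨rfl, rfl⟩

theorem isFill_facePiece : IsFill (facePiece (e₁ := e₁) he hw h) (0, false) (syllProd w l) p
    {c | PresentedGroup.mk (Γ.edgeGraph e).artinRels (syllProd w l) ≠ 1 ∧
      c = (system Γ e₁ z).cls false (some e : Option (Sym2 V)) p} where
  planar := planar_annulus
  base := rfl
  outer := by
    rintro ⟨i, _ | _⟩ hs
    · exact sameCycle_annulusRot 0 i false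
    · exact (Option.some_ne_none _ hs).elim
  pos := by
    change (syllProd w (0 : ZMod l).val)⁻¹ • p = p
    rw [ZMod.val_zero, syllProd_zero, inv_one, one_smul]
  word := by
    refine ⟨fun s => syllProd w s.1.val, by simp only [ZMod.val_zero, syllProd_zero], ?_, ?_⟩
    · rintro ⟨i, _ | _⟩ hs hi
      · change syllProd w (i + 1).val = _
        rw [val_add_one_of_ne_zero fun h0 => hi (congrArg (fun j => (j, false)) h0), syllProd_succ]
        rfl
      · exact (Option.some_ne_none _ hs).elim
    · rintro ⟨i, _ | _⟩ hi
      · have h0 : i + 1 = 0 := congrArg Prod.fst hi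
        change syllProd w i.val * FreeGroup.of (w i.val).1 ^ (w i.val).2 = _
        rw [← syllProd_succ, val_add_one_of_eq_zero h0]
      · exact Bool.noConfusion (congrArg Prod.snd hi)
  unique := by
    rintro i j ⟨s, b⟩ ⟨t, c⟩ hi hj hs ht -
    obtain ⟨rfl, rfl : b = true⟩ := facePiece_inner hi hs
    obtain ⟨rfl, rfl : c = true⟩ := facePiece_inner hj ht
    exact ⟨rfl, sameCycle_annulusRot s t true⟩
  mem_iff c := by
    constructor
    · rintro ⟨h1, rfl⟩
      exact ⟨false, (0, true), .inr (Option.some_ne_none e), (facePiece_nt_false 0).2 h1,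
        facePiece_cl 0⟩
    · rintro ⟨i, ⟨s, b⟩, hi, hs, rfl⟩
      obtain ⟨rfl, rfl : b = true⟩ := facePiece_inner hi hs
      exact ⟨(facePiece_nt_false s).1 hs, facePiece_cl s⟩

end FacePiece

end ArtinSystem

namespace ArtinSystem

open Equiv Hypermap LabeledGraph

universe u

variable {V : Type u} {Γ : LabeledGraph V} {e₁ : Sym2 V} {z : ArtinGroup Γ}

/-- Some planar decoration with one outer vertex reads `g` at position `p`, and `T` is the set of
classes of its inner vertices of nontrivial holonomy, which are pairwise different. -/
def Fill (e₁ : Sym2 V) (g : FreeGroup V) (p : Pos Γ z) (T : Set Bool) : Prop :=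
  ∃ (S : Type) (_ : Fintype S) (_ : DecidableEq S) (D : Deco (system Γ e₁ z) S) (s₀ : S),
    IsFill D s₀ g p T

namespace Fill

variable {g g' : FreeGroup V} {p : Pos Γ z} {T T' : Set Bool}

theorem mul (h : Fill e₁ g p T) (h' : Fill e₁ g' p T') (hT : Disjoint T T') :
    Fill e₁ (g * g') p (T ∪ T') := by
  obtain ⟨S, _, _, D, s, h⟩ := h
  obtain ⟨S', _, _, D', s', h'⟩ := h'
  exact ⟨_, inferInstance, inferInstance, _, _, h.join h' hT⟩

theorem vertex (v : V) (n : ℤ) (h : (FreeGroup.of v ^ n)⁻¹ • p = p) :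
    Fill e₁ (FreeGroup.of v ^ n) p {c | n ≠ 0 ∧ c = false} := by
  have h1 := isFill_vertexPiece (e₁ := e₁) (v := v) (m := n) (n := 0) (p := p)
    (h := by rwa [zpow_zero, mul_one])
  have h2 : Fill e₁ (FreeGroup.of v ^ n * FreeGroup.of v ^ (0 : ℤ)) p
      {c | n + 0 ≠ 0 ∧ c = false} := ⟨_, inferInstance, inferInstance, _, _, h1⟩
  rwa [zpow_zero, mul_one, add_zero] at h2

theorem face {e : Sym2 V} (he : e ∈ Γ.graph.edgeSet)
    (hg : g ∈ Subgroup.closure (FreeGroup.of '' {v | v ∈ e})) (h : g⁻¹ • p = p) :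
    Fill e₁ g p {c | PresentedGroup.mk (Γ.edgeGraph e).artinRels g ≠ 1 ∧
      c = (system Γ e₁ z).cls false (some e : Option (Sym2 V)) p} := by
  obtain ⟨w, l, hl, hw, rfl⟩ := exists_syllProd hg
  have : NeZero l := ⟨hl⟩
  exact ⟨_, inferInstance, inferInstance, _, _, isFill_facePiece (he := he) (hw := hw) (h := h)⟩

theorem conj_of_zpow (h : Fill e₁ g p T) (v : V) (n : ℤ) :
    Fill e₁ (FreeGroup.of v ^ n * g * (FreeGroup.of v ^ n)⁻¹) (FreeGroup.of v ^ n • p) T := by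
  obtain ⟨S, _, _, D, s, h⟩ := h
  have h1 := isFill_vertexPiece (e₁ := e₁) (v := v) (m := -n) (n := n) (p := p)
    (h := by rw [← zpow_add, neg_add_cancel, zpow_zero, inv_one, one_smul])
  have h2 := (h.join h1 (Set.disjoint_left.2 fun c _ hc => hc.1 (neg_add_cancel n))).rebase
    (a := Sum.inr true) (joinPerm_inr_of_eq (swap_apply_right false true))
  have h3 : Fill e₁ (FreeGroup.of v ^ n * (g * (FreeGroup.of v ^ (-n) * FreeGroup.of v ^ n)) *
      (FreeGroup.of v ^ n)⁻¹) (FreeGroup.of v ^ n • p) (T ∪ {c | -n + n ≠ 0 ∧ c = false}) :=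
    ⟨_, inferInstance, inferInstance, _, _, h2⟩
  have hT : T ∪ {c | -n + n ≠ 0 ∧ c = false} = T := by simp
  rwa [hT, ← zpow_add, neg_add_cancel, zpow_zero, mul_one] at h3

theorem conj (h : Fill e₁ g p T) (x : FreeGroup V) : Fill e₁ (x * g * x⁻¹) (x • p) T := by
  induction x using FreeGroup.induction_on generalizing g p with
  | C1 => simpa using h
  | of v => simpa using h.conj_of_zpow v 1
  | inv_of v => simpa using h.conj_of_zpow v (-1)
  | mul x y hx hy =>
    have := hx (hy h)
    rwa [smul_smul, show x * (y * g * y⁻¹) * x⁻¹ = x * y * g * (x * y)⁻¹ by group] at this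

end Fill

theorem smul_eq_of_mk_eq_one {g : FreeGroup V} (hg : PresentedGroup.mk Γ.artinRels g = 1)
    (p : Pos Γ z) : g • p = p := by
  obtain ⟨x, rfl⟩ : ∃ x, Pos.mk Γ z x = p := QuotientGroup.mk_surjective p
  rw [Pos.smul_mk, hg, one_mul]

theorem altProd_mem {G : Type*} [Group G] {H : Subgroup G} (n : ℕ) {x y : G} (hx : x ∈ H)
    (hy : y ∈ H) : altProd n x y ∈ H := by
  induction n generalizing x y with
  | zero => exact one_mem H
  | succ n ih => exact mul_mem hx (ih hy hx)

theorem mem_closure_of_mem_artinRels {r : FreeGroup V} (hr : r ∈ Γ.artinRels) :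
    ∃ e ∈ Γ.graph.edgeSet, r ∈ Subgroup.closure (FreeGroup.of '' {v | v ∈ e}) ∧
      PresentedGroup.mk (Γ.edgeGraph e).artinRels r = 1 := by
  obtain ⟨a, b, hab, rfl⟩ := hr
  have ha : FreeGroup.of a ∈ Subgroup.closure (FreeGroup.of '' {v | v ∈ s(a, b)}) :=
    Subgroup.subset_closure ⟨a, Sym2.mem_mk_left a b, rfl⟩
  have hb : FreeGroup.of b ∈ Subgroup.closure (FreeGroup.of '' {v | v ∈ s(a, b)}) :=
    Subgroup.subset_closure ⟨b, Sym2.mem_mk_right a b, rfl⟩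
  exact ⟨s(a, b), hab, mul_mem (altProd_mem _ ha hb) (inv_mem (altProd_mem _ hb ha)),
    PresentedGroup.one_of_mem ⟨a, b, ⟨hab, rfl⟩, rfl⟩⟩

/-- The elements with trivial image in the Artin group are filled without classes. -/
theorem fill_of_mk_eq_one {g : FreeGroup V} (hg : PresentedGroup.mk Γ.artinRels g = 1)
    (p : Pos Γ z) : Fill e₁ g p ∅ := by
  have hmul : ∀ {g g' : FreeGroup V} {p : Pos Γ z}, Fill e₁ g p ∅ → Fill e₁ g' p ∅ →
      Fill e₁ (g * g') p ∅ := fun h h' => by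
    simpa using h.mul h' (Set.disjoint_empty _)
  obtain ⟨v⟩ : Nonempty V := e₁.ind fun v _ => ⟨v⟩
  let N : Subgroup (FreeGroup V) :=
    { carrier := {n | ∀ p : Pos Γ z, Fill e₁ n p ∅ ∧ Fill e₁ n⁻¹ p ∅}
      mul_mem' := fun {a b} ha hb p => by
        refine ⟨hmul (ha p).1 (hb p).1, ?_⟩
        rw [mul_inv_rev]
        exact hmul (hb p).2 (ha p).2
      one_mem' := fun p => by
        have : Fill e₁ 1 p ∅ := by simpa using Fill.vertex (e₁ := e₁) (p := p) v 0 (by simp)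
        rw [inv_one]
        exact ⟨this, this⟩
      inv_mem' := fun {a} ha p => by
        rw [inv_inv]
        exact (ha p).symm }
  have hN : N.Normal := ⟨fun n hn x p => by
    have h1 := (hn (x⁻¹ • p)).1.conj x
    have h2 := (hn (x⁻¹ • p)).2.conj x
    rw [smul_inv_smul] at h1 h2
    refine ⟨h1, ?_⟩
    rwa [show (x * n * x⁻¹)⁻¹ = x * n⁻¹ * x⁻¹ by group]⟩
  have hle : Subgroup.normalClosure Γ.artinRels ≤ N := by
    refine Subgroup.normalClosure_le_normal fun r hr p => ?_
    obtain ⟨e, he, hc, h1⟩ := mem_closure_of_mem_artinRels hr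
    have hr1 : PresentedGroup.mk Γ.artinRels r = 1 := PresentedGroup.one_of_mem hr
    constructor
    · simpa [h1] using Fill.face (e₁ := e₁) he hc
        (smul_eq_of_mk_eq_one (by rw [map_inv, hr1, inv_one]) p)
    · simpa [h1] using Fill.face (e₁ := e₁) he (inv_mem hc)
        (smul_eq_of_mk_eq_one (by rw [map_inv, map_inv, hr1, inv_one, inv_one]) p)
  exact (hle ((QuotientGroup.eq_one_iff g).1 hg) p).1

theorem Fill.false (h2d : Γ.TwoDimensional) (hz : Anisotropic Γ e₁ z) {g : FreeGroup V}
    {p : Pos Γ z} {T : Set Bool} (h : Fill e₁ g p T)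
    (hg : PresentedGroup.mk Γ.artinRels g = 1) (hT : T.Nonempty) : False := by
  have h1 := h.mul (fill_of_mk_eq_one (g := g⁻¹) (by rw [map_inv, hg, inv_one]) p)
    (Set.disjoint_empty _)
  rw [mul_inv_cancel, Set.union_empty] at h1
  obtain ⟨S, _, _, D, s, h1⟩ := h1
  obtain ⟨D', O', hP, hG, hI⟩ := D.exists_irreducible h1.planar (h1.good hT)
  exact false_of_irreducible h2d hz hP hG hI

end ArtinSystem

theorem finite_wordLength_lt {G : Type*} [Group G] {S : Set G} (hS : S.Finite)
    (hcl : Subgroup.closure S = ⊤) (r : ℝ) : {g : G | (wordLength S g : ℝ) < r}.Finite := by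
  have hT : Finite ↥(S ∪ S⁻¹) := (hS.union hS.inv).to_subtype
  refine ((List.finite_length_lt ↥(S ∪ S⁻¹) ⌈r⌉₊).image
    fun l => (l.map Subtype.val).prod).subset fun g hg => ?_
  have hne :
      {n | ∃ l : List G, l.length = n ∧ (∀ x ∈ l, x ∈ S ∨ x⁻¹ ∈ S) ∧ l.prod = g}.Nonempty := by
    have h1 : g ∈ (Subgroup.closure S).toSubmonoid := hcl ▸ Subgroup.mem_top g
    rw [Subgroup.closure_toSubmonoid] at h1
    obtain ⟨l, hl, hg⟩ := Submonoid.exists_list_of_mem_closure h1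
    exact ⟨_, l, rfl, hl, hg⟩
  obtain ⟨l, hl, hlS, hprod⟩ := Nat.sInf_mem hne
  lift l to List ↥(S ∪ S⁻¹) using hlS
  refine ⟨l, ?_, hprod⟩
  rw [List.length_map] at hl
  have h1 : (l.length : ℝ) < r := by rw [hl]; exact hg
  exact_mod_cast h1.trans_le (Nat.le_ceil r)

theorem finite_artinDist_ball {V : Type*} [Finite V] (Γ : LabeledGraph V) (r : ℝ) :
    {g : ArtinGroup Γ | (wordLength (Set.range (artinGen Γ)) g : ℝ) < r}.Finite :=
  finite_wordLength_lt (Set.finite_range _) (PresentedGroup.closure_range_of _) r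

/-- Coarsely parallel cosets of cyclic subgroups have commensurable stabilizers. -/
theorem CoarseParallel.exists_zpow_eq {V : Type*} [Finite V] {Γ : LabeledGraph V}
    {g k x y : ArtinGroup Γ} (h : CoarseParallel (artinDist Γ)
      (leftCosetSet g (Subgroup.zpowers x)) (leftCosetSet k (Subgroup.zpowers y))) :
    ∃ n m : ℤ, n ≠ 0 ∧ x ^ n = g⁻¹ * k * y ^ m * (g⁻¹ * k)⁻¹ := by
  obtain ⟨r, h, -⟩ := h
  have h1 : ∀ n : ℤ, ∃ m : ℤ, (wordLength (Set.range (artinGen Γ))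
      ((g * x ^ n)⁻¹ * (k * y ^ m)) : ℝ) < r := by
    intro n
    obtain ⟨_, ⟨_, ⟨m, rfl⟩, rfl⟩, hm⟩ := h (g * x ^ n) ⟨x ^ n, ⟨n, rfl⟩, rfl⟩
    exact ⟨m, hm⟩
  choose m hm using h1
  obtain ⟨i, -, j, -, hij, he⟩ := Set.infinite_univ.exists_ne_map_eq_of_mapsTo
    (fun n _ => hm n) (finite_artinDist_ball Γ r)
  refine ⟨j - i, m j - m i, sub_ne_zero.2 hij.symm, ?_⟩
  have h2 : (x ^ i)⁻¹ * (g⁻¹ * k) * y ^ m i = (x ^ j)⁻¹ * (g⁻¹ * k) * y ^ m j := by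
    simpa [mul_assoc] using he
  calc x ^ (j - i) = x ^ j * ((x ^ i)⁻¹ * (g⁻¹ * k) * y ^ m i) * (y ^ m i)⁻¹ * (g⁻¹ * k)⁻¹ := by
        group
    _ = _ := by rw [h2]; group

namespace ArtinSystem

open LabeledGraph

universe u

variable {V : Type u} {Γ : LabeledGraph V}

/-- The square of the Garside element of an edge, as an element of the free group. -/
def deltaSqWord (Γ : LabeledGraph V) (a b : V) : FreeGroup V :=
  altProd (Γ.label a b) (FreeGroup.of a) (FreeGroup.of b) ^ 2

theorem deltaSqWord_mem (Γ : LabeledGraph V) (a b : V) :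
    deltaSqWord Γ a b ∈ Subgroup.closure (FreeGroup.of '' {v | v ∈ s(a, b)}) :=
  pow_mem (altProd_mem _ (Subgroup.subset_closure (Set.mem_image_of_mem _ (Sym2.mem_mk_left a b)))
    (Subgroup.subset_closure (Set.mem_image_of_mem _ (Sym2.mem_mk_right a b)))) 2

theorem mk_deltaSqWord (Γ : LabeledGraph V) (a b : V) :
    PresentedGroup.mk Γ.artinRels (deltaSqWord Γ a b) = artinDelta Γ a b ^ 2 := by
  rw [deltaSqWord, map_pow, map_altProd]
  rfl

theorem length_artinDelta (Γ : LabeledGraph V) (a b : V) :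
    ArtinGroup.length Γ (artinDelta Γ a b) = Multiplicative.ofAdd (Γ.label a b : ℤ) := by
  rw [artinDelta, map_altProd, ArtinGroup.length_artinGen, ArtinGroup.length_artinGen, altProd_self,
    ← ofAdd_nsmul, nsmul_one]

theorem mk_deltaSqWord_zpow_ne_one (Γ : LabeledGraph V) (e : Sym2 V) {a b : V}
    (hl : Γ.label a b ≠ 0) {n : ℤ} (hn : n ≠ 0) :
    PresentedGroup.mk (Γ.edgeGraph e).artinRels (deltaSqWord Γ a b ^ n) ≠ 1 := by
  intro h
  rw [map_zpow] at h
  have h1 := congrArg (ArtinGroup.length (Γ.edgeGraph e)) h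
  have h2 : PresentedGroup.mk (Γ.edgeGraph e).artinRels (deltaSqWord Γ a b) =
      artinDelta (Γ.edgeGraph e) a b ^ 2 := mk_deltaSqWord (Γ.edgeGraph e) a b
  rw [h2, map_zpow, map_pow, length_artinDelta, MonoidHom.map_one, ← ofAdd_nsmul, ← ofAdd_zsmul,
    ofAdd_eq_one] at h1
  have h3 : (Γ.label a b : ℤ) ≠ 0 := by exact_mod_cast hl
  have h4 : n * (2 * (Γ.label a b : ℤ)) = 0 := by
    rw [smul_eq_mul, nsmul_eq_mul] at h1
    exact h1
  exact mul_ne_zero hn (mul_ne_zero two_ne_zero h3) h4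

theorem exists_lift_of_mem_edgeSub {e : Sym2 V} {p : ArtinGroup Γ} (hp : p ∈ edgeSub Γ e) :
    ∃ q ∈ Subgroup.closure (FreeGroup.of '' {v | v ∈ e}),
      PresentedGroup.mk Γ.artinRels q = p := by
  have h1 : edgeSub Γ e = (Subgroup.closure (FreeGroup.of '' {v | v ∈ e})).map
      (PresentedGroup.mk Γ.artinRels) := by
    rw [MonoidHom.map_closure, Set.image_image]
    rfl
  rw [h1] at hp
  exact hp

theorem mk_mem_edgeSub {e : Sym2 V} {q : FreeGroup V}
    (hq : q ∈ Subgroup.closure (FreeGroup.of '' {v | v ∈ e})) :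
    PresentedGroup.mk Γ.artinRels q ∈ edgeSub Γ e := by
  have h1 : edgeSub Γ e = (Subgroup.closure (FreeGroup.of '' {v | v ∈ e})).map
      (PresentedGroup.mk Γ.artinRels) := by
    rw [MonoidHom.map_closure, Set.image_image]
    rfl
  rw [h1]
  exact Subgroup.mem_map_of_mem _ hq

theorem anisotropic_one (Γ : LabeledGraph V) (e : Sym2 V) : Anisotropic Γ e 1 := by
  intro p _ v _ n j h
  have h1 := congrArg (ArtinGroup.length Γ) h
  rw [one_zpow, map_mul, map_mul, map_inv, map_zpow, ArtinGroup.length_artinGen, MonoidHom.map_one,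
    mul_right_comm, inv_mul_cancel, one_mul, ← ofAdd_zsmul, ofAdd_eq_one] at h1
  simpa using h1

/-- The Artin group of an edge embeds. -/
theorem mk_edgeGraph_eq_one (h2d : Γ.TwoDimensional) {e : Sym2 V} (he : e ∈ Γ.graph.edgeSet)
    {g : FreeGroup V} (hg : g ∈ Subgroup.closure (FreeGroup.of '' {v | v ∈ e}))
    (h : PresentedGroup.mk Γ.artinRels g = 1) :
    PresentedGroup.mk (Γ.edgeGraph e).artinRels g = 1 := by
  by_contra hne
  exact (Fill.face he hg (smul_eq_of_mk_eq_one (by rw [map_inv, h, inv_one])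
    (Pos.mk Γ 1 1))).false h2d (anisotropic_one Γ e) h ⟨_, hne, rfl⟩

theorem anisotropic_artinDelta (h2d : Γ.TwoDimensional) {a b : V} (hab : Γ.graph.Adj a b)
    (hl : 3 ≤ Γ.label a b) (m : ℤ) : Anisotropic Γ s(a, b) ((artinDelta Γ a b ^ 2) ^ m) := by
  intro p hp v hv n j h
  obtain ⟨q, hq, rfl⟩ := exists_lift_of_mem_edgeSub hp
  have h1 : PresentedGroup.mk (Γ.edgeGraph s(a, b)).artinRels
      (q⁻¹ * FreeGroup.of v ^ n * q * (deltaSqWord Γ a b ^ (m * j))⁻¹) = 1 := by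
    refine mk_edgeGraph_eq_one h2d hab ?_ ?_
    · exact mul_mem (mul_mem (mul_mem (inv_mem hq)
        (zpow_mem (Subgroup.subset_closure (Set.mem_image_of_mem _ hv)) n)) hq)
        (inv_mem (zpow_mem (deltaSqWord_mem Γ a b) _))
    · rw [map_mul, map_inv, map_zpow, mk_deltaSqWord, mul_inv_eq_one, zpow_mul, ← h, map_mul,
        map_mul, map_inv, map_zpow]
      rfl
  rw [map_mul, map_inv, mul_inv_eq_one, map_mul, map_mul, map_inv, map_zpow, map_zpow] at h1
  refine Dihedral.eq_zero_of_gen_zpow (p := PresentedGroup.mk _ q) (j := m * j) rfl hab hl hv ?_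
  refine h1.trans ?_
  rw [deltaSqWord, map_pow, map_altProd]
  rfl

/-- An edge of label at least `3`, a nonzero power `z` of the square of its Garside element, and a
conjugate of `z` filled without the class of `z`. -/
theorem false_of_conj (h2d : Γ.TwoDimensional) {a b : V} (hab : Γ.graph.Adj a b)
    (hl : 3 ≤ Γ.label a b) {n : ℤ} (hn : n ≠ 0) {h : ArtinGroup Γ} {w : FreeGroup V} {T : Set Bool}
    (hw : PresentedGroup.mk Γ.artinRels w = h⁻¹ * (artinDelta Γ a b ^ 2) ^ n * h)
    (hT : true ∉ T)
    (hfill : w • Pos.mk Γ ((artinDelta Γ a b ^ 2) ^ n) h⁻¹ = Pos.mk Γ _ h⁻¹ →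
      Fill s(a, b) w⁻¹ (Pos.mk Γ ((artinDelta Γ a b ^ 2) ^ n) h⁻¹) T) : False := by
  classical
  set z := (artinDelta Γ a b ^ 2) ^ n with hz
  have hdelta : PresentedGroup.mk Γ.artinRels (deltaSqWord Γ a b ^ n) = z := by
    rw [map_zpow, mk_deltaSqWord]
  obtain ⟨k, hk⟩ := PresentedGroup.mk_surjective Γ.artinRels h
  have h1 := Fill.face (e₁ := s(a, b)) (p := Pos.mk Γ z 1) hab
    (zpow_mem (deltaSqWord_mem Γ a b) n) (by
      rw [Pos.smul_mk, map_inv, hdelta, Pos.mk_eq_iff]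
      exact ⟨1, by group⟩)
  have h2 := (hfill (by
    rw [Pos.smul_mk, hw, Pos.mk_eq_iff]
    exact ⟨-1, by group⟩)).conj k
  rw [Pos.smul_mk, hk, mul_inv_cancel] at h2
  have hcls : (system Γ s(a, b) z).cls false (some s(a, b) : Option (Sym2 V))
      (Pos.mk Γ z 1) = true :=
    decide_eq_true ⟨rfl, 1, one_mem _, rfl⟩
  rw [hcls] at h1
  refine (h1.mul h2 ?_).false h2d (anisotropic_artinDelta h2d hab hl n) ?_
    ⟨true, .inl ⟨mk_deltaSqWord_zpow_ne_one Γ _ (by omega) hn, rfl⟩⟩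
  · rw [Set.disjoint_left]
    rintro _ ⟨-, rfl⟩
    exact hT
  · rw [map_mul, hdelta, map_mul, map_mul, map_inv, map_inv, hk, hw]
    group

theorem eq_and_mem_edgeSub_of_conj (h2d : Γ.TwoDimensional) {a b : V} (hab : Γ.graph.Adj a b)
    (hl : 3 ≤ Γ.label a b) {n : ℤ} (hn : n ≠ 0) {h : ArtinGroup Γ} {e : Sym2 V}
    (he : e ∈ Γ.graph.edgeSet) {w : FreeGroup V}
    (hwe : w ∈ Subgroup.closure (FreeGroup.of '' {v | v ∈ e}))
    (hw : PresentedGroup.mk Γ.artinRels w = h⁻¹ * (artinDelta Γ a b ^ 2) ^ n * h) :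
    e = s(a, b) ∧ h ∈ edgeSub Γ s(a, b) := by
  classical
  by_contra hne
  refine false_of_conj h2d hab hl hn hw ?_ fun h1 =>
    Fill.face he (inv_mem hwe) (by rwa [inv_inv])
  rintro ⟨-, h1⟩
  obtain ⟨h2, p, hp, hP⟩ := of_decide_eq_true h1.symm
  refine hne ⟨Option.some_injective _ h2, ?_⟩
  obtain ⟨j, hj⟩ := Pos.mk_eq_iff.1 hP
  rw [inv_inv] at hj
  have h3 : (artinDelta Γ a b ^ 2) ^ n ∈ edgeSub Γ s(a, b) := by
    rw [← mk_deltaSqWord, ← map_zpow]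
    exact mk_mem_edgeSub (zpow_mem (deltaSqWord_mem Γ a b) n)
  rw [eq_mul_inv_of_mul_eq hj.symm]
  exact mul_mem (zpow_mem h3 j) (inv_mem hp)

theorem edgeSub_mk (Γ : LabeledGraph V) (a b : V) : edgeSub Γ s(a, b) = edgeSubgroup Γ a b := by
  rw [edgeSub, standardSubgroup, edgeSubgroup, ← Set.image_pair]
  congr 2
  ext v
  exact Sym2.mem_iff

end ArtinSystem

theorem leftCosetSet_eq {G : Type*} [Group G] {g k : G} {H : Subgroup G} (h : g⁻¹ * k ∈ H) :
    leftCosetSet g H = leftCosetSet k H :=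
  (leftCoset_eq_iff H).2 h

/-- In a `2`-dimensional Artin group, parallel diamond lines lie in
the same block: if `g₁⟨Δ_{e₁}⟩` and `g₂⟨Δ_{e₂}⟩` (labels `≥ 3`) are at finite
Hausdorff distance then `g₁ A_{e₁} = g₂ A_{e₂}`; moreover no coset `g⟨a⟩` of a vertex
cyclic subgroup is at finite Hausdorff distance from `g₁⟨Δ_{e₁}⟩`. -/
theorem parallel_diamond_lines_same_block {V : Type*} [Finite V]
    (Γ : LabeledGraph V) (h2d : Γ.TwoDimensional)
    (a₁ b₁ a₂ b₂ : V) (h₁ : Γ.graph.Adj a₁ b₁) (h₂ : Γ.graph.Adj a₂ b₂)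
    (hl₁ : 3 ≤ Γ.label a₁ b₁) (hl₂ : 3 ≤ Γ.label a₂ b₂)
    (g₁ g₂ : ArtinGroup Γ) :
    (CoarseParallel (artinDist Γ)
        (leftCosetSet g₁ (Subgroup.zpowers (artinDelta Γ a₁ b₁)))
        (leftCosetSet g₂ (Subgroup.zpowers (artinDelta Γ a₂ b₂))) →
      leftCosetSet g₁ (edgeSubgroup Γ a₁ b₁) = leftCosetSet g₂ (edgeSubgroup Γ a₂ b₂)) ∧
    ∀ (a : V) (g : ArtinGroup Γ),
      ¬ CoarseParallel (artinDist Γ)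
          (leftCosetSet g (Subgroup.zpowers (artinGen Γ a)))
          (leftCosetSet g₁ (Subgroup.zpowers (artinDelta Γ a₁ b₁))) := by
  constructor
  · intro h
    obtain ⟨n, m, hn, hnm⟩ := h.exists_zpow_eq
    have hsq : ((artinDelta Γ a₁ b₁) ^ 2) ^ n =
        g₁⁻¹ * g₂ * (artinDelta Γ a₂ b₂ ^ 2) ^ m * (g₁⁻¹ * g₂)⁻¹ := by
      rw [← zpow_natCast, ← zpow_mul, mul_comm, zpow_mul, hnm, ← zpow_natCast (artinDelta Γ a₂ b₂),
        ← zpow_mul, mul_comm ((2 : ℕ) : ℤ), zpow_mul, conj_zpow]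
    obtain ⟨he, hmem⟩ := ArtinSystem.eq_and_mem_edgeSub_of_conj h2d h₁ hl₁ hn (h := g₁⁻¹ * g₂)
      (e := s(a₂, b₂)) h₂ (zpow_mem (ArtinSystem.deltaSqWord_mem Γ a₂ b₂) m)
      (by rw [map_zpow, ArtinSystem.mk_deltaSqWord, hsq]; group)
    rw [← ArtinSystem.edgeSub_mk, ← ArtinSystem.edgeSub_mk, he]
    exact leftCosetSet_eq hmem
  · intro a g h
    obtain ⟨n, m, hn, hnm⟩ := h.exists_zpow_eq
    have hm : m ≠ 0 := by
      rintro rfl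
      rw [zpow_zero, mul_one, mul_inv_cancel] at hnm
      have h1 := congrArg (ArtinGroup.length Γ) hnm
      rw [map_zpow, ArtinGroup.length_artinGen, MonoidHom.map_one, ← ofAdd_zsmul,
        ofAdd_eq_one] at h1
      exact hn (by simpa using h1)
    have hsq : artinGen Γ a ^ (n * 2) =
        g⁻¹ * g₁ * (artinDelta Γ a₁ b₁ ^ 2) ^ m * (g⁻¹ * g₁)⁻¹ := by
      rw [zpow_mul, hnm, ← zpow_natCast (artinDelta Γ a₁ b₁), ← zpow_mul, mul_comm ((2 : ℕ) : ℤ),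
        zpow_mul, conj_zpow]
      rfl
    refine ArtinSystem.false_of_conj h2d h₁ hl₁ hm (h := (g⁻¹ * g₁)⁻¹)
      (w := FreeGroup.of a ^ (n * 2)) (T := {c | -(n * 2) ≠ 0 ∧ c = false}) ?_
      (fun hT => Bool.noConfusion hT.2) fun h1 => ?_
    · rw [map_zpow, inv_inv, ← hsq]
      rfl
    · rw [← zpow_neg]
      exact ArtinSystem.Fill.vertex a _ (by rwa [zpow_neg, inv_inv])
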